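/- arXiv:1112.2118 — 2 statements merged into one kernel-verified Lean document; each statement's English description precedes it below -/
import Mathlib

section
/- Assume s ≥ 15 (where Q(s) = kγ). Then: (1) for every λ̄ = (λ₀,λ₁,λ₂) with all λᵢ > 0 and λ₀+λ₁+λ₂ = 1 there exist ā = (a₀,a₁,a₂) with aᵢ > 0 and c̄ = (c₀,c₁,c₂) with cᵢ > 0 such that Ψ(ω̄, λ̄, ā, c̄) ≤ 3^{1−γ} for every ω̄ = (ω₀,ω₁,ω₂) with ωᵢ ≥ 0 and ω₀+ω₁+ω₂ = 1; (2) for every ε > 0 there exists δ > 0 such that for every such λ̄ with max(|λ₁ − 1/3|, |λ₂ − 1/3|) ≥ ε, the vectors ā, c̄ > 0 can be chosen so that Ψ(ω̄, λ̄, ā, c̄) ≤ 3^{1−γ} − δ for every such ω̄. -/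
/-- `q(x) = exp(x) - x - 1`. -/
noncomputable def q (x : ℝ) : ℝ := Real.exp x - x - 1

/-- `Q(x) = x·(exp(x) − 1)/(exp(x) − x − 1)`. -/
noncomputable def Qf (x : ℝ) : ℝ := x * (Real.exp x - 1) / (Real.exp x - x - 1)

/-- `r(y₀,y₁,y₂) = Σ (k choose k₀,k₁,k₂)·y₀^{k₀}·y₁^{k₁}·y₂^{k₂}`, summed over all
`k₀+k₁+k₂ = k` with `k₁ ≡ k₂ (mod 3)`. -/
noncomputable def r (k : ℕ) (y₀ y₁ y₂ : ℝ) : ℝ :=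
  ∑ t ∈ (Finset.Nat.antidiagonalTuple 3 k).filter (fun t => t 1 % 3 = t 2 % 3),
    (Nat.multinomial Finset.univ t : ℝ) * y₀ ^ t 0 * y₁ ^ t 1 * y₂ ^ t 2

/-- `Ψ(ω̄,λ̄,x̄,ȳ)`; real powers are `rpow`, so the convention `0^0 = 1` holds. -/
noncomputable def Psi (k : ℕ) (γ s : ℝ) (ω lam x y : Fin 3 → ℝ) : ℝ :=
  (∏ i, (q (x i) / (ω i * q s)) ^ (ω i)) *
  ((∏ i, (lam i * s / (x i * y i)) ^ (lam i)) ^ ((k:ℝ) * γ)) *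
  (r k (y 0) (y 1) (y 2)) ^ γ


/-- squared modulus of `y₀ + ζ y₁ + ζ² y₂` -/
noncomputable def RR (c0 c1 c2 : ℝ) : ℝ := c0^2 + c1^2 + c2^2 - c0*c1 - c0*c2 - c1*c2

lemma q_pos {x : ℝ} (hx : 0 < x) : 0 < q x := by
  unfold q
  have := Real.add_one_lt_exp hx.ne'
  linarith

lemma hoeff {X : ℝ} (hX : 0 ≤ X) :
    Real.log ((1 + 2 * Real.exp (-X)) / 3) ≤ -(2/3) * X + X^2/8 := by
  have hD : ∀ x : ℝ, HasDerivAt (fun x : ℝ => x/4 - 2/3 + 2 / (Real.exp x + 2))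
      (1/4 - 2 * Real.exp x / (Real.exp x + 2)^2) x := by
    intro x
    have hp : Real.exp x + 2 ≠ 0 := by positivity
    have h1 := ((hasDerivAt_id x).div_const 4).sub_const (2/3)
    have h2 := (hasDerivAt_const x (2:ℝ)).div ((Real.hasDerivAt_exp x).add_const 2) hp
    refine (h1.add h2).congr_deriv ?_
    field_simp
    ring
  have mono1 : Monotone (fun x : ℝ => x/4 - 2/3 + 2 / (Real.exp x + 2)) := by
    apply monotone_of_deriv_nonneg (fun x => (hD x).differentiableAt)
    intro x
    rw [(hD x).deriv]
    have hp : 0 < Real.exp x + 2 := by positivity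
    rw [sub_nonneg, div_le_div_iff₀ (by positivity) (by norm_num)]
    nlinarith [sq_nonneg (Real.exp x - 2)]
  have hE : ∀ x : ℝ, HasDerivAt (fun x : ℝ => x^2/8 - (2/3) * x - Real.log ((1 + 2 * Real.exp (-x)) / 3))
      (x/4 - 2/3 + 2 / (Real.exp x + 2)) x := by
    intro x
    have hp : (1 + 2 * Real.exp (-x)) / 3 ≠ 0 := by positivity
    have h0 : HasDerivAt (fun x : ℝ => Real.exp (-x)) (Real.exp (-x) * (-1)) x :=
      (hasDerivAt_neg x).exp
    have h1 : HasDerivAt (fun x : ℝ => Real.log ((1 + 2 * Real.exp (-x)) / 3)) _ x :=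
      (((h0.const_mul 2).const_add 1).div_const 3).log hp
    have h2 : HasDerivAt (fun x : ℝ => x^2/8 - (2/3)*x) _ x :=
      ((hasDerivAt_pow 2 x).div_const 8).sub ((hasDerivAt_id x).const_mul (2/3))
    refine (h2.sub h1).congr_deriv ?_
    rw [Real.exp_neg]
    have := Real.exp_pos x
    field_simp
    ring
  have mono2 : MonotoneOn (fun x : ℝ => x^2/8 - (2/3) * x - Real.log ((1 + 2 * Real.exp (-x)) / 3))
      (Set.Ici 0) := by
    apply monotoneOn_of_deriv_nonneg (convex_Ici 0)
    · exact fun x _ => (hE x).continuousAt.continuousWithinAt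
    · exact fun x _ => (hE x).differentiableAt.differentiableWithinAt
    · intro x hx
      rw [interior_Ici] at hx
      rw [(hE x).deriv]
      have := mono1 (le_of_lt hx)
      norm_num at this ⊢
      linarith
  have := mono2 (Set.mem_Ici.2 le_rfl) (Set.mem_Ici.2 hX) hX
  norm_num at this
  linarith

/-- tangent bound for log-concavity of q -/
lemma P1 {s a : ℝ} (hs : 3 ≤ s) (ha : 1 ≤ a) (ha2 : a ≤ s + 1) :
    q a / q s ≤ Real.exp (Qf s / s * (a - s)) := by
  have hs0 : 0 < s := by linarith
  have hq := q_pos hs0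
  have hQ : Qf s / s = 1 + s / q s := by
    have : Real.exp s - s - 1 ≠ 0 := hq.ne'
    unfold Qf q
    field_simp
    ring
  rw [hQ, div_le_iff₀ hq]
  obtain ⟨u, rfl⟩ : ∃ u, a = s + u := ⟨a - s, by ring⟩
  have e1 : (1 + s / q s) * (s + u - s) = u + s/q s * u := by ring
  rw [e1, Real.exp_add]
  have h1 : 1 + s / q s * u ≤ Real.exp (s / q s * u) := by
    have := Real.add_one_le_exp (s / q s * u); linarith
  have h2 : Real.exp u * (q s + s * u) ≤ Real.exp u * Real.exp (s / q s * u) * q s := by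
    rw [mul_assoc]
    apply mul_le_mul_of_nonneg_left _ (Real.exp_pos u).le
    calc q s + s * u = (1 + s / q s * u) * q s := by field_simp
      _ ≤ _ := by gcongr
  refine le_trans ?_ h2
  have key : s + 1 - s * u ≤ (s + 1 + u) * Real.exp (-u) := by
    have hA : 1 - u + u^2/4 ≤ Real.exp (-u) ∧ (u ≤ 0 → 1 - u + u^2/2 ≤ Real.exp (-u)) := by
      constructor
      · have h := Real.add_one_le_exp (-u/2)
        have h' : Real.exp (-u) = Real.exp (-u/2) * Real.exp (-u/2) := by
          rw [← Real.exp_add]; ring_nf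
        rw [h']
        nlinarith
      · intro hu
        have := Real.quadratic_le_exp_of_nonneg (x := -u) (by linarith)
        nlinarith
    rcases le_total u 0 with hu | hu
    · have := hA.2 hu
      nlinarith [mul_le_mul_of_nonneg_left this (by linarith : 0 ≤ s + 1 + u), mul_nonneg (sq_nonneg u) (by linarith : 0 ≤ s + u - 1)]
    · have := hA.1
      nlinarith [mul_le_mul_of_nonneg_left this (by linarith : 0 ≤ s + 1 + u), mul_nonneg (sq_nonneg u) (by linarith : 0 ≤ s + u - 3)]
  have h3 : Real.exp u * (s + 1 - s * u) ≤ s + 1 + u := by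
    calc _ ≤ Real.exp u * ((s + 1 + u) * Real.exp (-u)) := by gcongr
      _ = (s+1+u) * (Real.exp u * Real.exp (-u)) := by ring
      _ = s + 1 + u := by rw [← Real.exp_add]; simp
  unfold q
  rw [Real.exp_add]
  nlinarith

lemma P2 {s b : ℝ} (hs : 15 ≤ s) (hb : 0 < b) (hb2 : b ≤ 1/2) :
    q (s * b) / q s ≤ b^2/4 := by
  have hq := q_pos (by linarith : 0 < s)
  rw [div_le_iff₀ hq]
  have h1 : q (s*b) ≤ (s*b)^2 * Real.exp (s*b) := by
    have hz : 0 < s * b := by positivity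
    have h := Real.add_one_le_exp (-(s*b))
    have h' : Real.exp (s*b) * Real.exp (-(s*b)) = 1 := by rw [← Real.exp_add]; simp
    have h3 := mul_le_mul_of_nonneg_left h (Real.exp_pos (s*b)).le
    rw [h'] at h3
    unfold q
    nlinarith
  have h2 : Real.exp (s*b) ≤ Real.exp (s/2) := by
    apply Real.exp_le_exp.2; nlinarith
  have h75 : 1700 ≤ Real.exp (15/2) := by
    have h := Real.exp_one_gt_d9
    have h15 : (1700:ℝ)^2 ≤ Real.exp (15/2)^2 := by
      rw [← Real.exp_nat_mul]
      have : ((2:ℕ):ℝ) * (15/2) = ((15:ℕ):ℝ) * 1 := by norm_num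
      rw [this, Real.exp_nat_mul]
      calc (1700:ℝ)^2 ≤ 2.7182818283^15 := by norm_num
        _ ≤ _ := by gcongr
    exact le_of_sq_le_sq h15 (Real.exp_pos _).le
  have h4 : 6 * s^2 ≤ Real.exp (s/2) := by
    have : Real.exp (s/2) = Real.exp (15/2) * Real.exp ((s-15)/2) := by
      rw [← Real.exp_add]; ring_nf
    rw [this]
    have hv := Real.quadratic_le_exp_of_nonneg (x := (s-15)/2) (by linarith)
    have : 1700 * (1 + (s-15)/2 + ((s-15)/2)^2/2) ≤ Real.exp (15/2) * Real.exp ((s-15)/2) := by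
      gcongr
    nlinarith
  have h5 : (3/4) * (Real.exp (s/2))^2 ≤ q s := by
    unfold q
    have : Real.exp s = Real.exp (s/2)^2 := by
      rw [← Real.exp_nat_mul]; congr 1; push_cast; ring
    rw [this]
    have hE : 90 * s ≤ Real.exp (s/2) := by nlinarith
    nlinarith
  calc q (s*b) ≤ (s*b)^2 * Real.exp (s/2) := h1.trans (by gcongr)
    _ = b^2 * (s^2 * Real.exp (s/2)) := by ring
    _ ≤ b^2 * (1/4 * q s) := by
        apply mul_le_mul_of_nonneg_left _ (sq_nonneg b)
        have := Real.exp_pos (s/2)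
        nlinarith [mul_le_mul_of_nonneg_right h4 this.le]
    _ = _ := by ring

lemma logb {d l : ℝ} (hd : 15 ≤ d) (h1 : -4 ≤ l) (h2 : l ≤ 4) :
    d * (-Real.log (1 - l/d)) ≤ l + l^2/20 := by
  have hd0 : 0 < d := by linarith
  set z := l/d with hz
  have hzu : z ≤ 4/15 := by rw [hz, div_le_iff₀ hd0]; linarith
  have hzl : -(4/15) ≤ z := by rw [hz, le_div_iff₀ hd0]; linarith
  have hl : l = d * z := by rw [hz]; field_simp
  have hab : |z| ≤ 4/15 := abs_le.2 ⟨hzl, hzu⟩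
  have key : -Real.log (1 - z) ≤ z + 3/4 * z^2 := by
    have h := Real.abs_log_sub_add_sum_range_le (x := z) (by linarith) 3
    have h' := (abs_le.1 h).1
    simp only [Finset.sum_range_succ, Finset.sum_range_zero] at h'
    norm_num at h'
    have e4 : |z|^4 = z^2 * z^2 := by rw [← sq_abs z]; ring
    rw [e4] at h'
    have hz2 : z^2 ≤ 16/225 := by nlinarith
    have h3 : z^2*z^2/(1-|z|) ≤ z^2 * (1/10) := by
      rw [div_le_iff₀ (by linarith)]
      rw [mul_assoc]
      apply mul_le_mul_of_nonneg_left _ (sq_nonneg z)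
      linarith
    have h4 : z^3 ≤ z^2 * (4/15) := by nlinarith [sq_nonneg z]
    nlinarith [sq_nonneg z]
  calc d * (-Real.log (1 - z)) ≤ d * (z + 3/4*z^2) := by gcongr
    _ ≤ l + l^2/20 := by
      rw [hl]
      nlinarith [mul_nonneg (mul_nonneg hd0.le (sub_nonneg.2 hd)) (sq_nonneg z)]

lemma rlem (k : ℕ) (y0 y1 y2 : ℝ)
    (hsum : y0 + y1 + y2 = 1) :
    r k y0 y1 y2 ≤ (1 + 2 * (RR y0 y1 y2) ^ ((k:ℝ)/2)) / 3 := by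
  set ζ : ℂ := ⟨-1/2, √3/2⟩ with hζ
  have h3 : √3 * √3 = 3 := Real.mul_self_sqrt (by norm_num)
  have hsq : ζ^2 = ⟨-1/2, -(√3/2)⟩ := by
    apply Complex.ext <;> simp [hζ, pow_two] <;> nlinarith
  have hz2 : 1 + ζ + ζ^2 = 0 := by
    rw [hsq, hζ]
    apply Complex.ext <;> simp <;> norm_num
  have hz3 : ζ^3 = 1 := by linear_combination (ζ - 1) * hz2
  have expand : ∀ z : ℂ, ((y0:ℂ) + z * y1 + z^2 * y2)^k =
      ∑ t ∈ Finset.Nat.antidiagonalTuple 3 k,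
        ((Nat.multinomial Finset.univ t : ℝ) * y0 ^ t 0 * y1 ^ t 1 * y2 ^ t 2 : ℝ) *
          z^(t 1 + 2 * t 2) := by
    intro z
    have := Finset.sum_pow_eq_sum_piAntidiag (Finset.univ : Finset (Fin 3)) ![(y0:ℂ), z * y1, z^2 * y2] k
    rw [Finset.piAntidiag_univ_fin_eq_antidiagonalTuple] at this
    simp only [Fin.sum_univ_three, Fin.prod_univ_three] at this
    simp at this
    rw [this]
    apply Finset.sum_congr rfl
    intro t _
    push_cast
    rw [mul_pow, mul_pow, pow_add, pow_mul]
    ring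
  have hroot : ∀ t : Fin 3 → ℕ, (1:ℂ)^(t 1 + 2 * t 2) + ζ^(t 1 + 2 * t 2) + (ζ^2)^(t 1 + 2 * t 2) =
      if t 1 % 3 = t 2 % 3 then 3 else 0 := by
    intro t
    set n := t 1 + 2 * t 2 with hn
    have hmod : ζ^n = ζ^(n % 3) := by
      conv_lhs => rw [← Nat.div_add_mod n 3, pow_add, pow_mul, hz3, one_pow, one_mul]
    have e2 : (ζ^2)^n = (ζ^n)^2 := by rw [← pow_mul, ← pow_mul, mul_comm]
    rw [e2, hmod, one_pow]
    split_ifs with h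
    · have : n % 3 = 0 := by omega
      rw [this]; norm_num
    · have : n % 3 = 1 ∨ n % 3 = 2 := by omega
      rcases this with h | h <;> rw [h]
      · simpa using hz2
      · linear_combination hz2 + ζ * hz3
  have main : ((3 * r k y0 y1 y2 : ℝ) : ℂ) = ((y0:ℂ) + 1 * y1 + 1^2 * y2)^k
      + ((y0:ℂ) + ζ * y1 + ζ^2 * y2)^k + ((y0:ℂ) + ζ^2 * y1 + (ζ^2)^2 * y2)^k := by
    rw [expand, expand, expand, ← Finset.sum_add_distrib, ← Finset.sum_add_distrib]
    simp only [← mul_add, hroot]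
    unfold r
    rw [Finset.sum_filter]
    push_cast
    rw [Finset.mul_sum]
    apply Finset.sum_congr rfl
    intro t _
    split_ifs
    · push_cast; ring
    · simp
  have hR0 : 0 ≤ RR y0 y1 y2 := by
    unfold RR; nlinarith [sq_nonneg (y0-y1), sq_nonneg (y0-y2), sq_nonneg (y1-y2)]
  have nrm1 : ‖(y0:ℂ) + ζ * y1 + ζ^2 * y2‖ = √(RR y0 y1 y2) := by
    rw [hsq, Complex.norm_def, Complex.normSq_apply]
    congr 1
    simp [hζ, RR]
    linear_combination (y1^2/4 + y2^2/4 - y1*y2/2) * h3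
  have nrm2 : ‖(y0:ℂ) + ζ^2 * y1 + (ζ^2)^2 * y2‖ = √(RR y0 y1 y2) := by
    have : (ζ^2)^2 = ζ := by linear_combination ζ * hz3
    rw [this, hsq, Complex.norm_def, Complex.normSq_apply]
    congr 1
    simp [hζ, RR]
    linear_combination (y1^2/4 + y2^2/4 - y1*y2/2) * h3
  have first : (y0:ℂ) + 1 * y1 + 1^2 * y2 = 1 := by
    have : ((y0 + y1 + y2 : ℝ) : ℂ) = 1 := by rw [hsum]; simp
    push_cast at this
    linear_combination this
  have hp : (√(RR y0 y1 y2))^k = (RR y0 y1 y2)^((k:ℝ)/2) := by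
    rw [Real.sqrt_eq_rpow, ← Real.rpow_natCast, ← Real.rpow_mul hR0]
    congr 1; ring
  have : 3 * r k y0 y1 y2 ≤ 1 + 2 * (RR y0 y1 y2)^((k:ℝ)/2) := by
    calc 3 * r k y0 y1 y2 ≤ ‖((3 * r k y0 y1 y2 : ℝ) : ℂ)‖ := by
          rw [Complex.norm_real]; exact le_abs_self _
      _ ≤ ‖((y0:ℂ) + 1 * y1 + 1^2 * y2)^k‖ + ‖((y0:ℂ) + ζ * y1 + ζ^2 * y2)^k‖
          + ‖((y0:ℂ) + ζ^2 * y1 + (ζ^2)^2 * y2)^k‖ := by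
          rw [main]; exact norm_add₃_le
      _ = _ := by
          rw [first, norm_pow, norm_pow, norm_pow, nrm1, nrm2, hp]; simp; ring
  linarith

/-- the target functional for the distinguished coordinate 0 -/
noncomputable def Fc (s d l0 l1 l2 b1 b2 c0 c1 c2 : ℝ) : ℝ :=
  Real.log ((1 + q (s*b1) / q s + q (s*b2) / q s) / 3)
   + d * (l0 * Real.log (l0 / c0) + l1 * Real.log (l1 / (b1 * c1)) + l2 * Real.log (l2 / (b2 * c2)))
   + Real.log (1 + 2 * (RR c0 c1 c2) ^ (d/2))

lemma RR_nonneg (y0 y1 y2 : ℝ) : 0 ≤ RR y0 y1 y2 := by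
  unfold RR; nlinarith [sq_nonneg (y0-y1), sq_nonneg (y0-y2), sq_nonneg (y1-y2)]

lemma P1' {s d l : ℝ} (hs : 15 ≤ s) (hd : d = Qf s) (hds : s ≤ d) (h1 : -1 ≤ l) (h2 : l ≤ 4) :
    q (s * (1 - l/d)) / q s ≤ Real.exp (-l) := by
  have hd0 : 0 < d := by linarith
  have hq : s / d ≤ 1 := by rw [div_le_one hd0]; exact hds
  have hq0 : 0 < s / d := by apply div_pos <;> linarith
  have e : s * (1 - l/d) = s - (s/d) * l := by field_simp
  have := P1 (s := s) (a := s * (1 - l/d)) (by linarith) (by rw [e]; nlinarith) (by rw [e]; nlinarith)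
  refine this.trans (le_of_eq ?_)
  rw [← hd]
  congr 1
  have : s ≠ 0 := by linarith
  field_simp
  ring

set_option maxHeartbeats 1600000 in
lemma center {s d x t τ : ℝ} (hs : 15 ≤ s) (hd : d = Qf s) (hds : s ≤ d)
    (hx0 : 0 ≤ x) (hx1 : x < 1) (ht : |t| < 1) (hτ : |τ| ≤ 1) (htτ : 0 ≤ t * τ) :
    Fc s d ((1+2*x)/3) ((1-x)*(1+t)/3) ((1-x)*(1-t)/3) (1 - (3*x-τ)/d) (1-(3*x+τ)/d)
      ((1+2*x)/3) ((1-x)*(1+t)/3) ((1-x)*(1-t)/3) ≤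
      -(1/2) * x^2 + (2/3) * (Real.cosh τ - 1) - (2/3)*(1-x)*(t*τ - τ^2/20)
      + 2 * (x^2 + t^2*(1-x)^2/3)^7 := by
  obtain ⟨ht1, ht2⟩ := abs_lt.1 ht
  obtain ⟨hτ1, hτ2⟩ := abs_le.1 hτ
  have hd0 : 0 < d := by linarith
  have hd15 : 15 ≤ d := by linarith
  set l0 := (1+2*x)/3 with hl0
  set l1 := (1-x)*(1+t)/3 with hl1
  set l2 := (1-x)*(1-t)/3 with hl2
  have p0 : 0 < l0 := by rw [hl0]; linarith
  have p1 : 0 < l1 := by rw [hl1]; apply div_pos (mul_pos _ _) <;> linarith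
  have p2 : 0 < l2 := by rw [hl2]; apply div_pos (mul_pos _ _) <;> linarith
  have hR : RR l0 l1 l2 = x^2 + t^2*(1-x)^2/3 := by rw [RR, hl0, hl1, hl2]; ring
  have hR1 : RR l0 l1 l2 ≤ 1 := by
    rw [hR]; have : t^2 ≤ 1 := by nlinarith
    nlinarith [mul_nonneg (sub_nonneg.2 this) (sq_nonneg (1-x))]
  have hb1 : 0 < 1 - (3*x-τ)/d := by
    rw [sub_pos, div_lt_one hd0]; linarith
  have hb2 : 0 < 1 - (3*x+τ)/d := by
    rw [sub_pos, div_lt_one hd0]; linarith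
  have hP1 := P1' hs hd hds (l := 3*x-τ) (by linarith) (by linarith)
  have hP2 := P1' hs hd hds (l := 3*x+τ) (by linarith) (by linarith)
  have hQ1 : 0 < q (s * (1 - (3*x-τ)/d)) / q s :=
    div_pos (q_pos (by apply mul_pos _ hb1; linarith)) (q_pos (by linarith))
  have hQ2 : 0 < q (s * (1 - (3*x+τ)/d)) / q s :=
    div_pos (q_pos (by apply mul_pos _ hb2; linarith)) (q_pos (by linarith))
  have hL1 := logb (d := d) (l := 3*x-τ) hd15 (by linarith) (by linarith)
  have hL2 := logb (d := d) (l := 3*x+τ) hd15 (by linarith) (by linarith)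
  have hcosh : 1 ≤ Real.cosh τ := Real.one_le_cosh τ
  -- log term
  have A : Real.log ((1 + q (s * (1 - (3*x-τ)/d)) / q s + q (s * (1 - (3*x+τ)/d)) / q s) / 3)
      ≤ -(2/3)*(3*x) + (3*x)^2/8 + (2/3) * (Real.cosh τ - 1) := by
    set E := Real.exp (-(3*x)) with hE
    have hE0 : 0 < E := Real.exp_pos _
    have hE1 : E ≤ 1 := by rw [hE]; apply Real.exp_le_one_iff.2; linarith
    have e1 : Real.exp (-(3*x-τ)) + Real.exp (-(3*x+τ)) = 2 * E * Real.cosh τ := by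
      rw [Real.cosh_eq, hE]
      have a1 : -(3*x-τ) = -(3*x) + τ := by ring
      have a2 : -(3*x+τ) = -(3*x) + -τ := by ring
      rw [a1, a2, Real.exp_add, Real.exp_add]; ring
    have e2 : (1 + q (s * (1 - (3*x-τ)/d)) / q s + q (s * (1 - (3*x+τ)/d)) / q s) / 3 ≤
        ((1 + 2 * E)/3) * (1 + (2/3) * (Real.cosh τ - 1)) := by
      nlinarith [mul_nonneg (sub_nonneg.2 hE1) (sub_nonneg.2 hcosh)]
    have e3 := Real.log_le_log (by positivity) e2
    rw [Real.log_mul (by positivity) (by nlinarith)] at e3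
    have e4 := hoeff (X := 3*x) (by linarith)
    have e5 := Real.log_le_sub_one_of_pos (x := 1 + (2/3) * (Real.cosh τ - 1)) (by linarith)
    linarith
  have B : Real.log (1 + 2 * (RR l0 l1 l2) ^ (d/2)) ≤ 2 * (x^2 + t^2*(1-x)^2/3)^7 := by
    have h0 := RR_nonneg l0 l1 l2
    have := Real.log_le_sub_one_of_pos (x := 1 + 2 * (RR l0 l1 l2) ^ (d/2)) (by positivity)
    have h7 : (RR l0 l1 l2) ^ (d/2) ≤ (RR l0 l1 l2)^((7:ℕ):ℝ) := by
      apply Real.rpow_le_rpow_of_exponent_ge' h0 hR1 (by norm_num)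
      push_cast; linarith
    rw [Real.rpow_natCast] at h7
    rw [← hR]
    linarith
  have C : d * (l0 * Real.log (l0 / l0) + l1 * Real.log (l1 / ((1 - (3*x-τ)/d) * l1))
      + l2 * Real.log (l2 / ((1 - (3*x+τ)/d) * l2))) ≤
      l1 * ((3*x-τ) + (3*x-τ)^2/20) + l2 * ((3*x+τ) + (3*x+τ)^2/20) := by
    have c1 : l1 / ((1 - (3*x-τ)/d) * l1) = (1 - (3*x-τ)/d)⁻¹ := by field_simp
    have c2 : l2 / ((1 - (3*x+τ)/d) * l2) = (1 - (3*x+τ)/d)⁻¹ := by field_simp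
    rw [div_self p0.ne', c1, c2, Real.log_one, Real.log_inv, Real.log_inv]
    have g1 := mul_le_mul_of_nonneg_left hL1 p1.le
    have g2 := mul_le_mul_of_nonneg_left hL2 p2.le
    refine le_trans (le_of_eq ?_) (add_le_add g1 g2)
    ring
  have D : l1 * ((3*x-τ) + (3*x-τ)^2/20) + l2 * ((3*x+τ) + (3*x+τ)^2/20) =
     (2/3)*(1-x) * (3*x - t*τ + (9*x^2+τ^2 - 6*x*(t*τ))/20) := by
    rw [hl1, hl2]; ring
  unfold Fc
  rw [D] at C
  have h6 : 0 ≤ (1-x) * (x * (t*τ)) := by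
    apply mul_nonneg (by linarith); positivity
  have h7 : 0 ≤ x^2 * x := by positivity
  have h8 : 0 ≤ x^2 := by positivity
  have D2 : (2/3)*(1-x) * (3*x - t*τ + (9*x^2+τ^2 - 6*x*(t*τ))/20) = 2*x - 17/10 * x^2
      - 3/10 * (x^2*x) - (2/3)*(1-x)*(t*τ - τ^2/20) - 1/5 * ((1-x) * (x * (t*τ))) := by ring
  rw [D2] at C
  linarith

lemma corner1 {s d l0 l1 l2 : ℝ} (hs : 15 ≤ s) (hd : d = Qf s) (hds : s ≤ d)
    (p0 : 0 < l0) (p1 : 0 < l1) (p2 : 0 < l2) (hsum : l0 + l1 + l2 = 1)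
    (he : l1 + l2 ≤ 1/10) (hT : 1/4 ≤ d * (l1 + l2)) :
    Fc s d l0 l1 l2 (1-3/d) (1-3/d) l0 l1 l2 ≤ 0 := by
  have hd15 : 15 ≤ d := by linarith
  have hd0 : 0 < d := by linarith
  have hb : 0 < 1 - 3/d := by rw [sub_pos, div_lt_one hd0]; linarith
  set ε := l1 + l2 with hε
  have hε0 : 0 < ε := by positivity
  have hP := P1' hs hd hds (l := 3) (by norm_num) (by norm_num)
  have hQ : 0 < q (s * (1 - 3/d)) / q s :=
    div_pos (q_pos (by apply mul_pos _ hb; linarith)) (q_pos (by linarith))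
  have he3 : Real.exp (-3) ≤ 1/20 := by
    rw [Real.exp_neg]
    have h := Real.exp_one_gt_d9
    have : (20:ℝ) ≤ Real.exp 3 := by
      have e : (3:ℝ) = ((3:ℕ):ℝ) * 1 := by norm_num
      rw [e, Real.exp_nat_mul]
      calc (20:ℝ) ≤ 2.7182818283^3 := by norm_num
        _ ≤ _ := by gcongr
    rw [inv_le_comm₀ (Real.exp_pos _) (by norm_num)]; linarith
  have hL := logb (d := d) (l := 3) hd15 (by norm_num) (by norm_num)
  set P := q (s * (1 - 3/d)) / q s with hPdef
  have hR0 := RR_nonneg l0 l1 l2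
  have hRle : RR l0 l1 l2 ≤ Real.exp (-(27/10) * ε) := by
    have h1 := Real.add_one_le_exp (-(27/10) * ε)
    have h2 : RR l0 l1 l2 ≤ 1 - 3 * ε + 3 * ε^2 := by
      have : l0 = 1 - ε := by linarith
      rw [this, RR, hε]; nlinarith [mul_pos p1 p2]
    nlinarith
  have hRd : RR l0 l1 l2 ^ (d/2) ≤ Real.exp (-(27/20 * (d*ε))) := by
    calc _ ≤ (Real.exp (-(27/10) * ε)) ^ (d/2) := by gcongr
      _ = _ := by rw [← Real.exp_mul]; congr 1; ring
  have ψ : ∀ X : ℝ, 0 ≤ X → X ≤ 27/20 * (d * ε) →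
      Real.log ((1 + 2 * RR l0 l1 l2 ^ (d/2))/3) ≤ -(2/3) * X + X^2/8 := by
    intro X hX hX2
    refine le_trans ?_ (hoeff hX)
    apply Real.log_le_log (by positivity)
    have : Real.exp (-(27/20 * (d*ε))) ≤ Real.exp (-X) := Real.exp_le_exp.2 (by linarith)
    linarith
  have A : Real.log ((1 + P + P)/3) + Real.log (1 + 2 * RR l0 l1 l2 ^ (d/2)) ≤
      1/10 + Real.log ((1 + 2 * RR l0 l1 l2 ^ (d/2))/3) := by
    rw [Real.log_div (by positivity) (by norm_num), Real.log_div (by positivity) (by norm_num)]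
    have := Real.log_le_sub_one_of_pos (x := 1 + P + P) (by positivity)
    linarith
  have C : d * (l0 * Real.log (l0 / l0) + l1 * Real.log (l1 / ((1 - 3/d) * l1))
      + l2 * Real.log (l2 / ((1 - 3/d) * l2))) ≤ ε * (69/20) := by
    have c1 : l1 / ((1 - 3/d) * l1) = (1 - 3/d)⁻¹ := by field_simp
    have c2 : l2 / ((1 - 3/d) * l2) = (1 - 3/d)⁻¹ := by field_simp
    rw [div_self p0.ne', c1, c2, Real.log_one, Real.log_inv]
    have g1 := mul_le_mul_of_nonneg_left hL hε0.le
    refine le_trans (le_of_eq ?_) (g1.trans (le_of_eq ?_))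
    · rw [hε]; ring
    · ring
  unfold Fc
  rw [← hPdef]
  rcases le_total (d * ε) 1 with h | h
  · have h1 := ψ (27/20*(d*ε)) (by linarith) le_rfl
    have h2 : ε * (69/20) ≤ (23/100) * (d * ε) := by nlinarith
    nlinarith
  · have h1 := ψ (27/20) (by linarith) (by linarith)
    nlinarith

set_option maxHeartbeats 1600000 in
lemma corner2 {s d l0 l1 l2 : ℝ} (hs : 15 ≤ s) (hds : s ≤ d)
    (p0 : 0 < l0) (p1 : 0 < l1) (p2 : 0 < l2) (hsum : l0 + l1 + l2 = 1)
    (hT : d * (l1 + l2) ≤ 1/4) :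
    ∃ b c0 c1 c2 : ℝ, 0 < b ∧ 0 < c0 ∧ 0 < c1 ∧ 0 < c2 ∧ c0 + c1 + c2 = 1 ∧
      1/2 ≤ RR c0 c1 c2 ∧ Fc s d l0 l1 l2 b b c0 c1 c2 ≤ 0 := by
  have hd15 : 15 ≤ d := by linarith
  have hd0 : 0 < d := by linarith
  set ε := l1 + l2 with hε
  have hε0 : 0 < ε := by positivity
  set b := √(d * ε) with hb
  have hbb : b^2 = d * ε := Real.sq_sqrt (by positivity)
  have hb0 : 0 < b := Real.sqrt_pos.2 (by positivity)
  have hb2 : b ≤ 1/2 := by nlinarith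
  set w := b / d with hw
  have hw0 : 0 < w := by positivity
  have hdw : d * w = b := by rw [hw]; field_simp
  have hw1 : w ≤ 1/30 := by rw [hw, div_le_iff₀ hd0]; linarith
  have hcs : w * l1 / ε + w * l2 / ε = w := by rw [← add_div, ← mul_add, ← hε]; field_simp
  have hc1 : 0 < w * l1 / ε := by positivity
  have hc2 : 0 < w * l2 / ε := by positivity
  have hRform : RR (1-w) (w * l1 / ε) (w * l2 / ε) = 1 - 3 * (w - w^2 + (w * l1 / ε) * (w * l2 / ε)) := by
    have : (w * l2 / ε) = w - w * l1 / ε := by linarith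
    rw [this, RR]; ring
  have hprod : 0 < (w * l1 / ε) * (w * l2 / ε) := by positivity
  have hprod2 : (w * l1 / ε) * (w * l2 / ε) ≤ w^2 := by nlinarith
  refine ⟨b, 1 - w, w * l1 / ε, w * l2 / ε, hb0, by linarith, hc1, hc2, by linarith, ?_, ?_⟩
  · rw [hRform]; nlinarith
  have hR0 := RR_nonneg (1-w) (w * l1 / ε) (w * l2 / ε)
  set R := RR (1-w) (w * l1 / ε) (w * l2 / ε) with hRdef
  have hRle : R ≤ Real.exp (-(3 * w * (1-w))) := by
    have := Real.add_one_le_exp (-(3 * w * (1-w)))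
    nlinarith
  have hRd : R ^ (d/2) ≤ Real.exp (-(3/2 * b * (1-w))) := by
    calc _ ≤ (Real.exp (-(3 * w * (1-w)))) ^ (d/2) := by gcongr
      _ = _ := by rw [← Real.exp_mul]; congr 1; rw [← hdw]; ring
  have hX0 : 0 ≤ 3/2 * b * (1-w) := by apply mul_nonneg (by positivity); linarith
  have ψ : Real.log ((1 + 2 * R ^ (d/2))/3) ≤ -(2/3) * (3/2 * b * (1-w)) + (3/2 * b * (1-w))^2/8 := by
    refine le_trans ?_ (hoeff hX0)
    apply Real.log_le_log (by positivity)
    linarith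
  have hP := P2 hs hb0 hb2
  have hQ : 0 < q (s * b) / q s :=
    div_pos (q_pos (by apply mul_pos _ hb0; linarith)) (q_pos (by linarith))
  unfold Fc
  set P := q (s * b) / q s with hPdef
  have A : Real.log ((1 + P + P)/3) + Real.log (1 + 2 * R ^ (d/2)) ≤
      b^2/2 + Real.log ((1 + 2 * R ^ (d/2))/3) := by
    rw [Real.log_div (by positivity) (by norm_num), Real.log_div (by positivity) (by norm_num)]
    have := Real.log_le_sub_one_of_pos (x := 1 + P + P) (by positivity)
    linarith
  have hbw : b * w = ε := by
    rw [hw]; field_simp; linarith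
  have c1 : l1 / (b * (w * l1 / ε)) = 1 := by rw [← hbw]; field_simp
  have c2 : l2 / (b * (w * l2 / ε)) = 1 := by rw [← hbw]; field_simp
  rw [c1, c2, Real.log_one]
  have hl0 : l0 = 1 - ε := by linarith
  have h1w : 0 < 1 - w := by linarith
  have C : d * (l0 * Real.log (l0 / (1-w))) ≤ d * (-ε + ε^2 + w + w^2*(30/29)) := by
    apply mul_le_mul_of_nonneg_left _ hd0.le
    rw [Real.log_div p0.ne' h1w.ne']
    have g1 := Real.log_le_sub_one_of_pos p0
    have g2 : -Real.log (1-w) ≤ w + w^2*(30/29) := by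
      have := Real.log_le_sub_one_of_pos (x := (1-w)⁻¹) (by positivity)
      rw [Real.log_inv] at this
      have e : (1-w)⁻¹ - 1 ≤ w + w^2*(30/29) := by
        rw [sub_le_iff_le_add, inv_le_iff_one_le_mul₀ h1w]
        nlinarith [mul_nonneg (sq_nonneg w) (by linarith : 0 ≤ 1/30 - w)]
      linarith
    have g3 : l0 * (-Real.log (1-w)) ≤ w + w^2*(30/29) := by
      have : 0 ≤ w + w^2*(30/29) := by positivity
      have hl1 : l0 ≤ 1 := by linarith
      calc l0 * (-Real.log (1-w)) ≤ l0 * (w + w^2*(30/29)) := by gcongr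
        _ ≤ 1 * (w + w^2*(30/29)) := by gcongr
        _ = _ := one_mul _
    have g4 : l0 * Real.log l0 ≤ l0 * (l0 - 1) := by gcongr
    have g5 : l0 * (l0 - 1) = -ε + ε^2 := by rw [hl0]; ring
    have g6 : l0 * (Real.log l0 - Real.log (1-w)) = l0 * Real.log l0 + l0 * (-Real.log (1-w)) := by ring
    rw [g6]
    linarith
  have hε60 : ε ≤ 1/60 := by nlinarith
  have k1 : d * (-ε + ε^2 + w + w^2*(30/29)) = -b^2 + b^2 * ε + b + b * w * (30/29) := by
    rw [hbb, ← hdw]; ring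
  have k2 : b * w ≤ b^2/15 := by
    rw [hbw, hbb]; nlinarith
  have k3 : (3/2 * b * (1-w))^2/8 ≤ 9/32 * b^2 := by
    have : (1-w)^2 ≤ 1 := by nlinarith
    nlinarith [mul_nonneg (sq_nonneg b) (sub_nonneg.2 this)]
  have k4 : b^2 * ε ≤ b^2/60 := by nlinarith [sq_nonneg b]
  have k5 : -(2/3) * (3/2 * b * (1-w)) = - b + b * w := by ring
  rw [k5] at ψ
  rw [k1] at C
  have k6 : d * (l0 * Real.log (l0 / (1 - w)) + l1 * 0 + l2 * 0) = d * (l0 * Real.log (l0 / (1-w))) := by ring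
  rw [k6]
  have k7 := sq_nonneg b
  linarith

set_option maxHeartbeats 1600000 in
lemma core {s d l0 l1 l2 : ℝ} (hs : 15 ≤ s) (hd : d = Qf s) (hds : s ≤ d)
    (p0 : 0 < l0) (p1 : 0 < l1) (p2 : 0 < l2) (hsum : l0 + l1 + l2 = 1) (h3 : 1/3 ≤ l0) :
    ∃ b1 b2 c0 c1 c2 : ℝ, 0 < b1 ∧ 0 < b2 ∧ 0 < c0 ∧ 0 < c1 ∧ 0 < c2 ∧ c0 + c1 + c2 = 1 ∧
      min (RR l0 l1 l2) (1/2) ≤ RR c0 c1 c2 ∧ Fc s d l0 l1 l2 b1 b2 c0 c1 c2 ≤ 0 := by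
  have hd15 : 15 ≤ d := by linarith
  have hd0 : 0 < d := by linarith
  rcases le_total (d * (l1 + l2)) (1/4) with hT | hT
  · obtain ⟨b, c0, c1, c2, h⟩ := corner2 hs hds p0 p1 p2 hsum hT
    obtain ⟨hb, i0, i1, i2, i3, i4, i5⟩ := h
    exact ⟨b, b, c0, c1, c2, hb, hb, i0, i1, i2, i3, (min_le_right _ _).trans i4, i5⟩
  rcases le_total (l1 + l2) (1/10) with he | he
  · have hb : 0 < 1 - 3/d := by rw [sub_pos, div_lt_one hd0]; linarith
    exact ⟨1-3/d, 1-3/d, l0, l1, l2, hb, hb, p0, p1, p2, hsum, min_le_left _ _,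
      corner1 hs hd hds p0 p1 p2 hsum he hT⟩
  obtain ⟨x, hx⟩ : ∃ x, x = (3 * l0 - 1)/2 := ⟨_, rfl⟩
  obtain ⟨t, ht⟩ : ∃ t, t = (l1 - l2)/(l1 + l2) := ⟨_, rfl⟩
  have hx0 : 0 ≤ x := by rw [hx]; linarith
  have hx1 : x ≤ 17/20 := by rw [hx]; linarith
  have htt : |t| < 1 := by
    rw [ht, abs_lt, lt_div_iff₀ (by positivity), div_lt_iff₀ (by positivity)]
    constructor <;> linarith
  have e0 : (1+2*x)/3 = l0 := by rw [hx]; ring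
  have ex : 1 - x = 3/2 * (l1 + l2) := by rw [hx]; linarith
  have et : t * (l1 + l2) = l1 - l2 := by rw [ht]; field_simp
  have e1 : (1-x)*(1+t)/3 = l1 := by rw [ex]; linarith
  have e2 : (1-x)*(1-t)/3 = l2 := by rw [ex]; linarith
  have ht2 : t^2 ≤ 1 := by rw [← sq_abs]; nlinarith [abs_nonneg t]
  obtain ⟨τ, hτ, htτ, hF⟩ : ∃ τ : ℝ, |τ| ≤ 1 ∧ 0 ≤ t * τ ∧ -(1/2) * x^2 + (2/3) * (Real.cosh τ - 1) - (2/3)*(1-x)*(t*τ - τ^2/20)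
      + 2 * (x^2 + t^2*(1-x)^2/3)^7 ≤ 0 := by
    have hz0 : 0 ≤ x^2 + t^2*(1-x)^2/3 := by positivity
    have hzle : x^2 + t^2*(1-x)^2/3 ≤ x^2 + (1-x)^2/3 := by
      nlinarith [mul_nonneg (sub_nonneg.2 ht2) (sq_nonneg (1-x))]
    rcases le_total x (1/4) with hx4 | hx4
    · refine ⟨t/2, ?_, ?_, ?_⟩
      · rw [abs_div]; norm_num; linarith
      · nlinarith [sq_nonneg t]
      · have hc : Real.cosh (t/2) ≤ 1 + 3/20 * t^2 := by
          have h1 := Real.cosh_le_exp_half_sq (t/2)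
          have h2 : (t/2)^2/2 = t^2/8 := by ring
          rw [h2] at h1
          have h3 := Real.abs_exp_sub_one_sub_id_le (x := t^2/8) (by rw [abs_of_nonneg (by positivity)]; linarith)
          have h4 := (abs_le.1 h3).2
          nlinarith [sq_nonneg t, mul_nonneg (sq_nonneg t) (sub_nonneg.2 ht2)]
        have hx2 : (1-x)^2 ≤ 1 := by nlinarith
        have hx3 : x^2 ≤ 1/16 := by nlinarith
        have hz : x^2 + t^2*(1-x)^2/3 ≤ 2/5 := by linarith
        set z := x^2 + t^2*(1-x)^2/3 with hzdef
        have hz7 : z^7 ≤ z * (2/5)^6 := by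
          have : z^6 ≤ (2/5)^6 := by gcongr
          calc z^7 = z * z^6 := by ring
            _ ≤ _ := by gcongr
        have hz1 : z ≤ x^2 + t^2/3 := by
          rw [hzdef]
          have := mul_nonneg (sq_nonneg t) (sub_nonneg.2 hx2)
          linarith
        have hg : t^2 * (1-x) ≥ 3/4 * t^2 := by nlinarith [sq_nonneg t]
        have y1 := sq_nonneg t
        have y2 := sq_nonneg x
        have y3 : (2/3)*(1-x)*(t*(t/2) - (t/2)^2/20) = (39/120) * (t^2 * (1-x)) := by ring
        rw [y3]
        linarith
    · refine ⟨0, by simp, by simp, ?_⟩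
      simp only [Real.cosh_zero]
      set z := x^2 + t^2*(1-x)^2/3 with hzdef
      have : 2 * z^7 ≤ 1/2 * x^2 := by
        rcases le_total x (3/4) with hx5 | hx5
        · have hzx : z ≤ x := by nlinarith
          have h7 : z^7 ≤ x^7 := by gcongr
          have h5 : x^5 ≤ (3/4)^5 := by gcongr
          have : x^7 = x^2 * x^5 := by ring
          nlinarith [sq_nonneg x]
        · have hzx : z ≤ 73/100 := by nlinarith
          have h7 : z^7 ≤ (73/100)^7 := by gcongr
          nlinarith
      nlinarith
  have := center (t := t) (τ := τ) hs hd hds hx0 (by linarith) htt hτ htτ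
  rw [e0, e1, e2] at this
  obtain ⟨a1, a2⟩ := abs_le.1 hτ
  refine ⟨_, _, l0, l1, l2, ?_, ?_, p0, p1, p2, hsum, min_le_left _ _, this.trans hF⟩
  · rw [sub_pos, div_lt_one hd0]; linarith
  · rw [sub_pos, div_lt_one hd0]; linarith

lemma symlem {s d : ℝ} (hs : 15 ≤ s) (hd : d = Qf s) (hds : s ≤ d) (lam : Fin 3 → ℝ)
    (hl : ∀ i, 0 < lam i) (hsum : lam 0 + lam 1 + lam 2 = 1) :
    ∃ a c : Fin 3 → ℝ, (∀ i, 0 < a i) ∧ (∀ i, 0 < c i) ∧ c 0 + c 1 + c 2 = 1 ∧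
      min (RR (lam 0) (lam 1) (lam 2)) (1/2) ≤ RR (c 0) (c 1) (c 2) ∧
      Real.log ((∑ i, q (a i) / q s) / 3) + d * ∑ i, lam i * Real.log (lam i * s / (a i * c i))
        + Real.log (1 + 2 * (RR (c 0) (c 1) (c 2)) ^ (d/2)) ≤ 0 := by
  have hs0 : 0 < s := by linarith
  have hqs := q_pos hs0
  have hss : q s / q s = 1 := div_self hqs.ne'
  have key : ∀ l c : ℝ, l * s / (s * c) = l / c := fun l c => by field_simp
  have key2 : ∀ l b c : ℝ, l * s / (s * b * c) = l / (b * c) := fun l b c => by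
    rw [mul_assoc, mul_comm l s, mul_div_mul_left _ _ hs0.ne']
  have hR1 : ∀ a b c, RR a b c = RR b a c := fun a b c => by unfold RR; ring
  have hR2 : ∀ a b c, RR a b c = RR c a b := fun a b c => by unfold RR; ring
  have h3 : 1/3 ≤ lam 0 ∨ 1/3 ≤ lam 1 ∨ 1/3 ≤ lam 2 := by
    by_contra! h
    linarith [h.1, h.2.1, h.2.2]
  rcases h3 with h | h | h
  · obtain ⟨b1, b2, c0, c1, c2, hb1, hb2, hc0, hc1, hc2, hc, hR, hF⟩ :=
      core hs hd hds (hl 0) (hl 1) (hl 2) hsum h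
    refine ⟨![s, s*b1, s*b2], ![c0, c1, c2], ?_, ?_, ?_, ?_, ?_⟩
    · intro i; fin_cases i <;> simp <;> positivity
    · intro i; fin_cases i <;> simp <;> positivity
    · simpa using hc
    · simpa using hR
    · unfold Fc at hF
      simp only [Fin.sum_univ_three, Matrix.cons_val_zero, Matrix.cons_val_one, Matrix.cons_val, key, key2, hss]
      exact hF
  · obtain ⟨b1, b2, c0, c1, c2, hb1, hb2, hc0, hc1, hc2, hc, hR, hF⟩ :=
      core hs hd hds (hl 1) (hl 0) (hl 2) (by linarith) h
    refine ⟨![s*b1, s, s*b2], ![c1, c0, c2], ?_, ?_, ?_, ?_, ?_⟩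
    · intro i; fin_cases i <;> simp <;> positivity
    · intro i; fin_cases i <;> simp <;> positivity
    · simp; linarith
    · rw [hR1 (lam 0)]; simp only [Matrix.cons_val_zero, Matrix.cons_val_one, Matrix.cons_val]
      rw [hR1 c1]; exact hR
    · unfold Fc at hF
      simp only [Fin.sum_univ_three, Matrix.cons_val_zero, Matrix.cons_val_one, Matrix.cons_val, key, key2, hss]
      rw [hR1 c1]
      convert hF using 3
      · congr 2; ring
      · ring
  · obtain ⟨b1, b2, c0, c1, c2, hb1, hb2, hc0, hc1, hc2, hc, hR, hF⟩ :=
      core hs hd hds (hl 2) (hl 0) (hl 1) (by linarith) h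
    refine ⟨![s*b1, s*b2, s], ![c1, c2, c0], ?_, ?_, ?_, ?_, ?_⟩
    · intro i; fin_cases i <;> simp <;> positivity
    · intro i; fin_cases i <;> simp <;> positivity
    · simp; linarith
    · rw [hR2 (lam 0)]; simp only [Matrix.cons_val_zero, Matrix.cons_val_one, Matrix.cons_val]
      rw [hR2 c1]; exact hR
    · unfold Fc at hF
      simp only [Fin.sum_univ_three, Matrix.cons_val_zero, Matrix.cons_val_one, Matrix.cons_val, key, key2, hss]
      rw [hR2 c1]
      convert hF using 3
      · congr 2; ring
      · ring

lemma psi_bound (k : ℕ) {γ s : ℝ} (hγ0 : 0 < γ) (hγ1 : γ < 1) (hs : 0 < s)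
    (lam a c : Fin 3 → ℝ) (hl : ∀ i, 0 < lam i) (ha : ∀ i, 0 < a i) (hc : ∀ i, 0 < c i)
    (hcs : c 0 + c 1 + c 2 = 1)
    (hF : Real.log ((∑ i, q (a i) / q s) / 3)
        + (k * γ) * ∑ i, lam i * Real.log (lam i * s / (a i * c i))
        + Real.log (1 + 2 * (RR (c 0) (c 1) (c 2)) ^ ((k*γ)/2)) ≤ 0)
    (ω : Fin 3 → ℝ) (hω : ∀ i, 0 ≤ ω i) (hωs : ω 0 + ω 1 + ω 2 = 1) :
    Psi k γ s ω lam a c ≤ (3:ℝ)^(1-γ) * (1 + 2 * (RR (c 0) (c 1) (c 2)) ^ ((k*γ)/2))^(-(1-γ)) := by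
  have hqs := q_pos hs
  have hqa := fun i => q_pos (ha i)
  have hR0 := RR_nonneg (c 0) (c 1) (c 2)
  have hR1 : RR (c 0) (c 1) (c 2) ≤ 1 := by
    have e : c 0 = 1 - c 1 - c 2 := by linarith
    have : RR (c 0) (c 1) (c 2) = 1 - 3 * (c 0 * c 1 + c 0 * c 2 + c 1 * c 2) := by
      rw [e, RR]; ring
    have := mul_pos (hc 0) (hc 1)
    have := mul_pos (hc 0) (hc 2)
    have := mul_pos (hc 1) (hc 2)
    linarith
  set R := RR (c 0) (c 1) (c 2) with hR
  set V := 1 + 2 * R ^ ((k*γ)/2) with hV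
  have hV0 : 0 < V := by positivity
  -- first factor
  have F1 : (∏ i, (q (a i) / (ω i * q s)) ^ (ω i)) ≤ ∑ i, q (a i) / q s := by
    refine (Real.geom_mean_le_arith_mean_weighted Finset.univ ω (fun i => q (a i) / (ω i * q s))
      (fun i _ => hω i) (by rw [Fin.sum_univ_three]; exact hωs)
      (fun i _ => div_nonneg (hqa i).le (mul_nonneg (hω i) hqs.le))).trans ?_
    apply Finset.sum_le_sum
    intro i _
    rcases (hω i).eq_or_lt with h | h
    · rw [← h]; simp; exact div_nonneg (hqa i).le hqs.le
    · apply le_of_eq; field_simp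
  have hS : 0 < ∑ i, q (a i) / q s :=
    Finset.sum_pos (fun i _ => div_pos (hqa i) hqs) ⟨0, Finset.mem_univ _⟩
  have hz : ∀ i, 0 < lam i * s / (a i * c i) := fun i =>
    div_pos (mul_pos (hl i) hs) (mul_pos (ha i) (hc i))
  have F2 : ((∏ i, (lam i * s / (a i * c i)) ^ (lam i)) ^ ((k:ℝ) * γ)) =
      Real.exp ((k*γ) * ∑ i, lam i * Real.log (lam i * s / (a i * c i))) := by
    rw [mul_comm ((k:ℝ)*γ), Real.exp_mul, Real.exp_sum]
    congr 1
    apply Finset.prod_congr rfl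
    intro i _
    rw [Real.rpow_def_of_pos (hz i), mul_comm]
  have hr0 : 0 ≤ r k (c 0) (c 1) (c 2) := by
    unfold r
    apply Finset.sum_nonneg
    intro t _
    have := hc 0; have := hc 1; have := hc 2
    positivity
  have F3 : (r k (c 0) (c 1) (c 2))^γ ≤ (V/3)^γ := by
    apply Real.rpow_le_rpow hr0 _ hγ0.le
    refine (rlem k _ _ _ hcs).trans ?_
    rw [← hR, hV]
    have : R ^ ((k:ℝ)/2) ≤ R ^ ((k*γ)/2) := by
      apply Real.rpow_le_rpow_of_exponent_ge' hR0 hR1 (by positivity)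
      have : (k:ℝ) * γ ≤ k * 1 := by gcongr
      linarith
    linarith
  have F4 : (∑ i, q (a i) / q s) * Real.exp ((k*γ) * ∑ i, lam i * Real.log (lam i * s / (a i * c i)))
      ≤ 3 / V := by
    have h := Real.exp_le_exp.2 hF
    rw [Real.exp_add, Real.exp_add, Real.exp_log (by positivity), Real.exp_log hV0, Real.exp_zero] at h
    rw [le_div_iff₀ hV0]
    linarith
  unfold Psi
  rw [F2]
  calc _ ≤ (∑ i, q (a i) / q s) * Real.exp ((k*γ) * ∑ i, lam i * Real.log (lam i * s / (a i * c i))) * (V/3)^γ := by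
        gcongr
    _ ≤ 3/V * (V/3)^γ := by gcongr
    _ = _ := by
      rw [Real.div_rpow hV0.le (by norm_num), Real.rpow_sub (by norm_num : (0:ℝ) < 3), Real.rpow_one]
      have : V^(-(1-γ)) = V^γ / V := by
        rw [show -(1-γ) = γ - 1 by ring, Real.rpow_sub hV0, Real.rpow_one]
      rw [this]
      field_simp

theorem stmt11 (k : ℕ) (hk : 3 ≤ k) (γ : ℝ) (hγ : γ ∈ Set.Ioo (0:ℝ) 1)
    (hkγ : 2 < (k:ℝ) * γ) (s : ℝ) (hs : 0 < s) (hQs : Qf s = (k:ℝ) * γ)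
    (hs15 : 15 ≤ s) :
    (∀ lam : Fin 3 → ℝ, (∀ i, 0 < lam i) → lam 0 + lam 1 + lam 2 = 1 →
      ∃ a c : Fin 3 → ℝ, (∀ i, 0 < a i) ∧ (∀ i, 0 < c i) ∧
        ∀ ω : Fin 3 → ℝ, (∀ i, 0 ≤ ω i) → ω 0 + ω 1 + ω 2 = 1 →
          Psi k γ s ω lam a c ≤ (3:ℝ) ^ (1 - γ)) ∧
    (∀ ε : ℝ, 0 < ε → ∃ δ : ℝ, 0 < δ ∧
      ∀ lam : Fin 3 → ℝ, (∀ i, 0 < lam i) → lam 0 + lam 1 + lam 2 = 1 →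
        ε ≤ max |lam 1 - 1/3| |lam 2 - 1/3| →
        ∃ a c : Fin 3 → ℝ, (∀ i, 0 < a i) ∧ (∀ i, 0 < c i) ∧
          ∀ ω : Fin 3 → ℝ, (∀ i, 0 ≤ ω i) → ω 0 + ω 1 + ω 2 = 1 →
            Psi k γ s ω lam a c ≤ (3:ℝ) ^ (1 - γ) - δ) := by
  obtain ⟨hγ0, hγ1⟩ := hγ
  have hds : s ≤ (k:ℝ) * γ := by
    rw [← hQs]
    have hq := q_pos hs
    unfold q at hq
    unfold Qf
    rw [le_div_iff₀ hq]
    apply mul_le_mul_of_nonneg_left _ hs.le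
    linarith
  have h3 : (0:ℝ) < 3 ^ (1-γ) := by positivity
  constructor
  · intro lam hl hsum
    obtain ⟨a, c, ha, hc, hcs, -, hF⟩ := symlem hs15 hQs.symm hds lam hl hsum
    refine ⟨a, c, ha, hc, fun ω hω hωs => ?_⟩
    refine (psi_bound k hγ0 hγ1 hs lam a c hl ha hc hcs hF ω hω hωs).trans ?_
    have hR0 := RR_nonneg (c 0) (c 1) (c 2)
    have : (1 + 2 * (RR (c 0) (c 1) (c 2)) ^ ((k*γ)/2))^(-(1-γ)) ≤ 1 := by
      apply Real.rpow_le_one_of_one_le_of_nonpos _ (by linarith)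
      have : 0 ≤ (RR (c 0) (c 1) (c 2)) ^ ((k*γ)/2) := by positivity
      linarith
    nlinarith
  · intro ε hε
    set m := min (ε^2) (1/2) with hm
    have hm0 : 0 < m := lt_min (by positivity) (by norm_num)
    set W := (1 + 2 * m ^ ((k*γ)/2))^(-(1-γ)) with hW
    have hmp : 0 < m ^ ((k*γ)/2) := by positivity
    have hW1 : W < 1 := by
      apply Real.rpow_lt_one_of_one_lt_of_neg _ (by linarith)
      linarith
    refine ⟨3^(1-γ) * (1 - W), by apply mul_pos h3; linarith, ?_⟩
    intro lam hl hsum hmax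
    obtain ⟨a, c, ha, hc, hcs, hR, hF⟩ := symlem hs15 hQs.symm hds lam hl hsum
    refine ⟨a, c, ha, hc, fun ω hω hωs => ?_⟩
    refine (psi_bound k hγ0 hγ1 hs lam a c hl ha hc hcs hF ω hω hωs).trans ?_
    have hmR : m ≤ RR (c 0) (c 1) (c 2) := by
      refine le_trans ?_ hR
      apply min_le_min _ le_rfl
      have e : lam 0 = 1 - lam 1 - lam 2 := by linarith
      have hform : RR (lam 0) (lam 1) (lam 2) = 3 * ((lam 1 - 1/3)^2 + (lam 1 - 1/3) * (lam 2 - 1/3)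
          + (lam 2 - 1/3)^2) := by rw [e, RR]; ring
      rw [hform]
      rcases le_max_iff.1 hmax with h | h
      · have : ε^2 ≤ (lam 1 - 1/3)^2 := by rw [← sq_abs (lam 1 - 1/3)]; gcongr
        nlinarith [sq_nonneg ((lam 2 - 1/3) + (lam 1 - 1/3)/2)]
      · have : ε^2 ≤ (lam 2 - 1/3)^2 := by rw [← sq_abs (lam 2 - 1/3)]; gcongr
        nlinarith [sq_nonneg ((lam 1 - 1/3) + (lam 2 - 1/3)/2)]
    have : (1 + 2 * (RR (c 0) (c 1) (c 2)) ^ ((k*γ)/2))^(-(1-γ)) ≤ W := by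
      apply Real.rpow_le_rpow_of_nonpos (by positivity) _ (by linarith)
      gcongr
    have := mul_le_mul_of_nonneg_left this h3.le
    linarith
end

section
/- Let k ≥ 16 be an integer and ε ∈ (0,1). There exists a constant C = C(k,ε) > 0 such that for all positive integers n and m with m ≤ (1−ε)·n and km/n > 2, if the unique s > 0 with Q(s) = km/n satisfies s ≥ 15, then Σ N(w̄,l̄)/N₀ ≤ C·3^{n−m}, where the sum ranges over all w̄ = (w₀,w₁,w₂) ∈ ℕ³ with w₀+w₁+w₂ = n and all l̄ = (l₀,l₁,l₂) ∈ ℕ³ with l₀+l₁+l₂ = km. -/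
/-- `M(m,n) = Σ m!/(v₁!⋯v_n!)`, the sum over all tuples `(v₁,…,v_n) ∈ ℕⁿ`
with all `vᵢ ≥ 2` and `v₁ + ⋯ + v_n = m`. -/
def M (m n : ℕ) : ℕ :=
  ∑ v ∈ (Finset.Nat.antidiagonalTuple n m).filter (fun v => ∀ i, 2 ≤ v i),
    Nat.multinomial Finset.univ v

/-- `K(l̄)`: the sum over all `3 × m` matrices of nonnegative integers whose columns
sum to `k`, whose row `i` sums to `l i`, and with `k_{1j} ≡ k_{2j} (mod 3)` for every
column `j`, of the product over columns of the multinomial coefficients.  (Entries are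
encoded in `Fin (k+1)` since each entry is at most `k`.) -/
def Kl (k m : ℕ) (l : Fin 3 → ℕ) : ℕ :=
  ∑ A ∈ (Finset.univ : Finset (Fin 3 → Fin m → Fin (k+1))).filter
      (fun A => (∀ j, ((A 0 j : ℕ) + (A 1 j : ℕ) + (A 2 j : ℕ) = k)) ∧
        (∀ i, ∑ j, (A i j : ℕ) = l i) ∧
        (∀ j, (A 1 j : ℕ) % 3 = (A 2 j : ℕ) % 3)),
    ∏ j, Nat.multinomial Finset.univ (fun i => (A i j : ℕ))

/-- `N(w̄,l̄) = (n choose w₀,w₁,w₂)·K(l̄)·M(l₀,w₀)·M(l₁,w₁)·M(l₂,w₂)`. -/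
def Nwl (k m : ℕ) (w l : Fin 3 → ℕ) : ℕ :=
  Nat.multinomial Finset.univ w * Kl k m l * M (l 0) (w 0) * M (l 1) (w 1) * M (l 2) (w 2)

section
open Finset
theorem card_fiber_eq_multinomial {S V : Type*} [Fintype S] [Fintype V] [DecidableEq S] [DecidableEq V]
    (D : V → ℕ) (hD : ∑ v, D v = Fintype.card S) :
    #{σ : S → V | ∀ v, #{a | σ a = v} = D v} = Nat.multinomial univ D := by
  classical
  have h1 : (∑ v, (MvPolynomial.X v : MvPolynomial V ℕ)) ^ Fintype.card S
      = ∑ σ : S → V, MvPolynomial.monomial (Finsupp.equivFunOnFinite.symm (fun v => #{a | σ a = v})) 1 := by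
    have : (∑ v, (MvPolynomial.X v : MvPolynomial V ℕ)) ^ Fintype.card S
      = ∏ a : S, ∑ v, (MvPolynomial.X v : MvPolynomial V ℕ) := by simp
    rw [this, Finset.prod_univ_sum, Fintype.piFinset_univ]
    refine Finset.sum_congr rfl fun σ _ => ?_
    rw [MvPolynomial.monomial_eq, Finsupp.prod_fintype _ _ (by simp)]
    simp only [map_one, one_mul, Finsupp.equivFunOnFinite_symm_apply_apply]
    rw [← Finset.prod_fiberwise univ σ]
    refine Finset.prod_congr rfl fun v _ => ?_
    rw [Finset.prod_congr rfl (g := fun _ => MvPolynomial.X v)]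
    · simp
    · intro a ha
      simp at ha; rw [ha]
  have h2 := Finset.sum_pow_eq_sum_piAntidiag (univ : Finset V) (fun v => (MvPolynomial.X v : MvPolynomial V ℕ)) (Fintype.card S)
  rw [h1] at h2
  have h3 := congrArg (MvPolynomial.coeff (Finsupp.equivFunOnFinite.symm D)) h2
  rw [MvPolynomial.coeff_sum, MvPolynomial.coeff_sum] at h3
  simp only [MvPolynomial.coeff_monomial, EmbeddingLike.apply_eq_iff_eq] at h3
  rw [Finset.sum_boole] at h3
  have h4 : ∀ x : V → ℕ, (Nat.multinomial univ x : MvPolynomial V ℕ) * ∏ i, MvPolynomial.X i ^ x i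
     = MvPolynomial.monomial (Finsupp.equivFunOnFinite.symm x) (Nat.multinomial univ x) := by
    intro x
    rw [MvPolynomial.monomial_eq, Finsupp.prod_fintype _ _ (by simp)]
    simp
  simp only [h4, MvPolynomial.coeff_monomial, EmbeddingLike.apply_eq_iff_eq] at h3
  rw [Finset.sum_ite_eq' ] at h3
  simp only [funext_iff] at h3
  rw [if_pos (by simp [hD])] at h3
  exact_mod_cast h3

/-- number of good functions -/
theorem M_eq_card {L V : Type*} [Fintype L] [Fintype V] [DecidableEq L] [DecidableEq V] (l w : ℕ)
    (hl : Fintype.card L = l) (hw : Fintype.card V = w) :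
    M l w = #{σ : L → V | ∀ v, 2 ≤ #{a | σ a = v}} := by
  classical
  let e : V ≃ Fin w := Fintype.equivFinOfCardEq hw
  have h0 : #{σ : L → V | ∀ v, 2 ≤ #{a | σ a = v}} = #{σ : L → Fin w | ∀ v, 2 ≤ #{a | σ a = v}} := by
    refine Finset.card_equiv (Equiv.arrowCongr (Equiv.refl L) e) ?_
    intro σ
    simp only [mem_filter, mem_univ, true_and, Equiv.arrowCongr_apply, Equiv.refl_symm, Equiv.coe_refl, Function.comp_apply, id]
    rw [← e.forall_congr_right]
    simp
  rw [h0, M]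
  rw [Finset.card_eq_sum_card_fiberwise (f := fun σ v => #{a | σ a = v}) (t := (Finset.Nat.antidiagonalTuple w l).filter (fun v => ∀ i, 2 ≤ v i))]
  · refine Finset.sum_congr rfl fun D hD => ?_
    simp only [mem_filter, Finset.Nat.mem_antidiagonalTuple] at hD
    rw [← card_fiber_eq_multinomial (S := L) D (by rw [hD.1, hl])]
    congr 1
    ext σ
    simp only [mem_filter, mem_univ, true_and, funext_iff]
    constructor
    · intro h
      exact ⟨fun v => by rw [h v]; exact hD.2 v, h⟩
    · intro h; exact h.2
  · intro σ hσ
    simp only [coe_filter, mem_univ, true_and, Set.mem_setOf_eq] at hσ ⊢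
    refine ⟨?_, hσ⟩
    rw [Finset.Nat.mem_antidiagonalTuple, ← hl]
    exact (Finset.card_eq_sum_card_fiberwise (f := σ) (t := univ) (by simp)).symm

end

section
open Finset
theorem card_good_over {S V ι : Type*} [Fintype S] [Fintype V] [Fintype ι] [DecidableEq S] [DecidableEq V]
    [DecidableEq ι] (x : V → ι) (lam : S → ι) :
    #{σ : S → V | (∀ v, 2 ≤ #{a | σ a = v}) ∧ ∀ a, x (σ a) = lam a}
      = ∏ i, M (#{a | lam a = i}) (#{v | x v = i}) := by
  classical
  have key : ∀ (σ : S → V) (h : ∀ a, x (σ a) = lam a) (i : ι) (v : {v // x v = i}),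
      #{a : {a // lam a = i} | (⟨σ a.1, by rw [h, a.2]⟩ : {v // x v = i}) = v} = #{a | σ a = v.1} := by
    intro σ h i v
    refine Finset.card_bij (fun a _ => a.1) ?_ ?_ ?_
    · intro a ha
      simp only [mem_filter, mem_univ, true_and] at ha ⊢
      exact congrArg Subtype.val ha
    · intro a _ b _ hab
      exact Subtype.ext hab
    · intro b hb
      simp only [mem_filter, mem_univ, true_and] at hb
      refine ⟨⟨b, by rw [← h, hb, v.2]⟩, ?_, rfl⟩
      simp only [mem_filter, mem_univ, true_and]
      exact Subtype.ext hb
  have h1 : ∀ i, M (#{a | lam a = i}) (#{v | x v = i})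
      = #{τ : {a // lam a = i} → {v // x v = i} | ∀ v, 2 ≤ #{a | τ a = v}} := by
    intro i
    exact M_eq_card _ _ (Fintype.card_subtype _) (Fintype.card_subtype _)
  simp only [h1]
  rw [← Fintype.card_piFinset]
  refine Finset.card_bij' (fun σ hσ i a => ⟨σ a.1, by
      rw [(Finset.mem_filter.mp hσ).2.2, a.2]⟩) (fun τ _ a => (τ (lam a) ⟨a, rfl⟩).1) ?_ ?_ ?_ ?_
  · intro σ hσ
    have hσ' := (Finset.mem_filter.mp hσ).2
    simp only [Fintype.mem_piFinset, mem_filter, mem_univ, true_and]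
    intro i v
    rw [key σ hσ'.2 i v]
    exact hσ'.1 v.1
  · intro τ hτ
    simp only [Fintype.mem_piFinset, mem_filter, mem_univ, true_and] at hτ ⊢
    have h2 : ∀ a, x (τ (lam a) ⟨a, rfl⟩).1 = lam a := fun a => (τ (lam a) ⟨a, rfl⟩).2
    refine ⟨?_, h2⟩
    intro v
    have := key (fun a => (τ (lam a) ⟨a, rfl⟩).1) h2 (x v) ⟨v, rfl⟩
    simp only at this
    rw [← this]
    have h3 : ∀ (i : ι) (a : {a // lam a = i}) (h : x (τ (lam a.1) ⟨a.1, rfl⟩).1 = i), (⟨(τ (lam a.1) ⟨a.1, rfl⟩).1, h⟩ : {v // x v = i}) = τ i a := by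
      rintro i ⟨a, ha⟩ h
      subst ha
      rfl
    simp only [h3]
    exact hτ (x v) ⟨v, rfl⟩
  · intro σ hσ
    rfl
  · intro τ hτ
    funext i a
    obtain ⟨a, ha⟩ := a
    subst ha
    rfl

theorem Kl_eq_card (k m : ℕ) (l : Fin 3 → ℕ) :
    Kl k m l = #{lam : Fin m → Fin k → Fin 3 | (∀ i, ∑ j, #{t | lam j t = i} = l i) ∧
       ∀ j, #{t | lam j t = 1} % 3 = #{t | lam j t = 2} % 3} := by
  classical
  have hle : ∀ (f : Fin k → Fin 3) (i : Fin 3), #{t | f t = i} < k + 1 := fun f i =>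
    Nat.lt_succ_of_le ((Finset.card_le_univ _).trans (by simp))
  rw [Kl]
  rw [Finset.card_eq_sum_card_fiberwise (f := fun lam i j => (⟨#{t | lam j t = i}, hle (lam j) i⟩ : Fin (k+1)))
    (t := (Finset.univ : Finset (Fin 3 → Fin m → Fin (k+1))).filter
      (fun A => (∀ j, ((A 0 j : ℕ) + (A 1 j : ℕ) + (A 2 j : ℕ) = k)) ∧
        (∀ i, ∑ j, (A i j : ℕ) = l i) ∧
        (∀ j, (A 1 j : ℕ) % 3 = (A 2 j : ℕ) % 3)))]
  · refine Finset.sum_congr rfl fun A hA => ?_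
    simp only [mem_filter, mem_univ, true_and] at hA
    obtain ⟨hA1, hA2, hA3⟩ := hA
    have h1 : ∀ j, Nat.multinomial Finset.univ (fun i => (A i j : ℕ)) =
        #{f : Fin k → Fin 3 | ∀ i, #{t | f t = i} = A i j} := by
      intro j
      have h := card_fiber_eq_multinomial (S := Fin k) (fun i => (A i j : ℕ)) (by simp [Fin.sum_univ_three, hA1])
      convert h.symm
    simp only [h1]
    rw [← Fintype.card_piFinset]
    congr 1
    ext lam
    simp only [Fintype.mem_piFinset, mem_filter, mem_univ, true_and, funext_iff, Fin.ext_iff]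
    constructor
    · intro h
      refine ⟨⟨?_, ?_⟩, fun i j => h j i⟩
      · intro i
        rw [← hA2]
        exact Finset.sum_congr rfl fun j _ => h j i
      · intro j
        rw [h, h, hA3]
    · rintro ⟨_, h⟩ j i
      exact h i j
  · intro lam hlam
    simp only [coe_filter, mem_univ, true_and, Set.mem_setOf_eq] at hlam ⊢
    refine ⟨?_, hlam⟩
    intro j
    have := (Finset.card_eq_sum_card_fiberwise (s := univ) (f := lam j) (t := univ) (by simp))
    rw [Fin.sum_univ_three] at this
    simpa using this.symm

theorem sum_zmod3_eq_zero_iff {T : Type*} [Fintype T] (f : T → ZMod 3) :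
    ∑ t, f t = 0 ↔ #{t | f t = (1 : ZMod 3)} % 3 = #{t | f t = (2 : ZMod 3)} % 3 := by
  classical
  have h : ∑ t, f t = ((#{t | f t = (1 : ZMod 3)} : ℕ) : ZMod 3) - ((#{t | f t = (2 : ZMod 3)} : ℕ) : ZMod 3) := by
    rw [Finset.natCast_card_filter, Finset.natCast_card_filter, ← Finset.sum_sub_distrib]
    refine Finset.sum_congr rfl fun t _ => ?_
    generalize f t = c
    revert c; decide
  rw [h, sub_eq_zero, ZMod.natCast_eq_natCast_iff']

def Gd {S V : Type*} [Fintype S] [DecidableEq V] (σ : S → V) : Prop := ∀ v, 2 ≤ #{a | σ a = v}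

instance {S V : Type*} [Fintype S] [Fintype V] [DecidableEq V] (σ : S → V) : Decidable (Gd σ) := by
  unfold Gd; infer_instance

theorem sum_Nwl_eq0 (k m n : ℕ) :
    ∑ w ∈ Finset.Nat.antidiagonalTuple 3 n, ∑ l ∈ Finset.Nat.antidiagonalTuple 3 (k * m), Nwl k m w l
     = #{p : (Fin n → Fin 3) × (Fin m × Fin k → Fin n) | Gd p.2 ∧
        ∀ j, #{t | p.1 (p.2 (j, t)) = 1} % 3 = #{t | p.1 (p.2 (j, t)) = 2} % 3} := by
  classical
  rw [← Finset.sum_product']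
  rw [Finset.card_eq_sum_card_fiberwise (f := fun p => ((fun i : Fin 3 => #{v | p.1 v = i}), (fun i : Fin 3 => #{a | p.1 (p.2 a) = i})))
    (t := Finset.Nat.antidiagonalTuple 3 n ×ˢ Finset.Nat.antidiagonalTuple 3 (k * m))]
  · refine Finset.sum_congr rfl fun wl hwl => ?_
    obtain ⟨w, l⟩ := wl
    simp only [mem_product, Finset.Nat.mem_antidiagonalTuple] at hwl
    obtain ⟨hw, hl⟩ := hwl
    simp only [Prod.mk.injEq]
    -- count of x
    have hx : Nat.multinomial univ w = #{x : Fin n → Fin 3 | ∀ i, #{v | x v = i} = w i} := by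
      have h := card_fiber_eq_multinomial (S := Fin n) w (by simp [hw])
      convert h.symm
    have hlam : Kl k m l = #{lam : Fin m × Fin k → Fin 3 | (∀ i, #{a | lam a = i} = l i) ∧
       ∀ j, #{t | lam (j, t) = 1} % 3 = #{t | lam (j, t) = 2} % 3} := by
      rw [Kl_eq_card]
      refine Finset.card_equiv (Equiv.curry _ _ _).symm ?_
      intro lam
      simp only [mem_filter, mem_univ, true_and, Equiv.curry_symm_apply]
      have : ∀ i, #{a : Fin m × Fin k | Function.uncurry lam a = i} = ∑ j, #{t | lam j t = i} := by
        intro i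
        simp only [Finset.card_filter]
        rw [Fintype.sum_prod_type]
        rfl
      simp only [this, Function.uncurry_apply_pair]
      exact Iff.rfl
    have hN : Nwl k m w l = ∑ x ∈ ({x : Fin n → Fin 3 | ∀ i, #{v | x v = i} = w i} : Finset _),
        ∑ lam ∈ ({lam : Fin m × Fin k → Fin 3 | (∀ i, #{a | lam a = i} = l i) ∧
       ∀ j, #{t | lam (j, t) = 1} % 3 = #{t | lam (j, t) = 2} % 3} : Finset _),
        #{σ : Fin m × Fin k → Fin n | (∀ v, 2 ≤ #{a | σ a = v}) ∧ ∀ a, x (σ a) = lam a} := by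
      rw [Finset.sum_congr rfl (g := fun _ => Kl k m l * ∏ i, M (l i) (w i))]
      · rw [Finset.sum_const, ← hx, Nwl, Fin.prod_univ_three, smul_eq_mul]; ring
      · intro x hx
        simp only [mem_filter, mem_univ, true_and] at hx
        rw [Finset.sum_congr rfl (g := fun _ => ∏ i, M (l i) (w i))]
        · rw [Finset.sum_const, ← hlam, smul_eq_mul]
        · intro lam hla
          simp only [mem_filter, mem_univ, true_and] at hla
          have h := card_good_over x lam
          simp only [hx, hla.1] at h
          rw [← h]
          congr!
    rw [hN]
    simp only [← Finset.card_sigma]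
    refine Finset.card_bij' (fun q _ => (q.1, q.2.2)) (fun p _ => ⟨p.1, fun a => p.1 (p.2 a), p.2⟩) ?_ ?_ ?_ ?_
    · rintro ⟨x, lam, σ⟩ hq
      simp only [mem_sigma, mem_filter, mem_univ, true_and] at hq ⊢
      obtain ⟨h1, ⟨h2, h3⟩, h4, h5⟩ := hq
      have h6 : (fun a => x (σ a)) = lam := funext h5
      refine ⟨⟨h4, fun j => ?_⟩, funext h1, ?_⟩
      · have := h3 j
        simp only [← h6] at this
        exact this
      · funext i
        rw [← h2 i, ← h6]
    · rintro ⟨x, σ⟩ hp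
      simp only [mem_sigma, mem_filter, mem_univ, true_and] at hp ⊢
      obtain ⟨⟨h1, h2⟩, h3, h4⟩ := hp
      exact ⟨fun i => congrFun h3 i, ⟨fun i => congrFun h4 i, h2⟩, h1, fun _ => trivial⟩
    · rintro ⟨x, lam, σ⟩ hq
      simp only [mem_sigma, mem_filter, mem_univ, true_and] at hq ⊢
      obtain ⟨h1, ⟨h2, h3⟩, h4, h5⟩ := hq
      have h6 : (fun a => x (σ a)) = lam := funext h5
      subst h6
      rfl
    · rintro ⟨x, σ⟩ hp
      rfl
  · rintro ⟨x, σ⟩ hp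
    simp only [coe_product, Set.mem_prod, mem_coe, Finset.Nat.mem_antidiagonalTuple]
    constructor
    · have := (Finset.card_eq_sum_card_fiberwise (s := univ) (f := x) (t := (univ : Finset (Fin 3))) (by simp))
      simpa using this.symm
    · have := (Finset.card_eq_sum_card_fiberwise (s := univ) (f := fun a => x (σ a)) (t := (univ : Finset (Fin 3))) (by simp))
      rw [mul_comm]
      simpa using this.symm


theorem sum_Nwl_eq (k m n : ℕ) :
    ∑ w ∈ Finset.Nat.antidiagonalTuple 3 n, ∑ l ∈ Finset.Nat.antidiagonalTuple 3 (k * m), Nwl k m w l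
     = #{p : (Fin n → ZMod 3) × (Fin m × Fin k → Fin n) | Gd p.2 ∧ ∀ j, ∑ t, p.1 (p.2 (j, t)) = 0} := by
  classical
  rw [sum_Nwl_eq0]
  let e : Fin 3 ≃ ZMod 3 := Equiv.refl (Fin 3)
  have e1 : ∀ c, e c = 1 ↔ c = 1 := by decide
  have e2 : ∀ c, e c = 2 ↔ c = 2 := by decide
  refine Finset.card_equiv (Equiv.prodCongr (Equiv.arrowCongr (Equiv.refl _) e) (Equiv.refl _)) ?_
  rintro ⟨x, σ⟩
  simp only [mem_filter, mem_univ, true_and, Equiv.prodCongr_apply, Prod.map, sum_zmod3_eq_zero_iff, Equiv.arrowCongr_apply,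
    Equiv.refl_symm, Equiv.coe_refl, Function.comp_apply, id, e1, e2]

end

section
open Finset
instance fact3 : Fact (Nat.Prime 3) := ⟨Nat.prime_three⟩
theorem card_ker_mul {m n : ℕ} (A : Matrix (Fin m) (Fin n) (ZMod 3)) :
    #{x : Fin n → ZMod 3 | A.mulVec x = 0} * 3 ^ A.rank = 3 ^ n := by
  classical
  have h1 := LinearMap.finrank_range_add_finrank_ker A.mulVecLin
  have h2 : #{x : Fin n → ZMod 3 | A.mulVec x = 0} = Fintype.card (LinearMap.ker A.mulVecLin) := by
    rw [Fintype.card_subtype]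
    congr 1
    ext x
    simp
  have h3 := Module.card_eq_pow_finrank (K := ZMod 3) (V := LinearMap.ker A.mulVecLin)
  rw [h2, ← Nat.card_eq_fintype_card, ← Nat.card_eq_fintype_card] at *
  rw [h3]
  simp only [Nat.card_zmod]
  rw [← pow_add, Matrix.rank, add_comm, h1]
  simp

theorem duality {m n k : ℕ} (σ : Fin m × Fin k → Fin n) :
    #{x : Fin n → ZMod 3 | ∀ j, ∑ t, x (σ (j, t)) = 0} * 3 ^ m
     = 3 ^ n * #{y : Fin m → ZMod 3 | ∀ v, ∑ a with σ a = v, y a.1 = 0} := by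
  classical
  let A : Matrix (Fin m) (Fin n) (ZMod 3) := fun j v => ∑ t, if σ (j, t) = v then 1 else 0
  have h1 : ∀ x : Fin n → ZMod 3, A.mulVec x = 0 ↔ ∀ j, ∑ t, x (σ (j, t)) = 0 := by
    intro x
    rw [funext_iff]
    refine forall_congr' fun j => ?_
    have : A.mulVec x j = ∑ t, x (σ (j, t)) := by
      simp only [Matrix.mulVec, dotProduct, A, Finset.sum_mul]
      rw [Finset.sum_comm]
      simp
    rw [this]; rfl
  have h2 : ∀ y : Fin m → ZMod 3, A.transpose.mulVec y = 0 ↔ ∀ v, ∑ a with σ a = v, y a.1 = 0 := by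
    intro x
    rw [funext_iff]
    refine forall_congr' fun v => ?_
    have : A.transpose.mulVec x v = ∑ a with σ a = v, x a.1 := by
      have h0 : ∀ j, A.transpose v j = ∑ t, if σ (j, t) = v then 1 else 0 := fun j => rfl
      simp only [Matrix.mulVec, dotProduct, h0, Finset.sum_mul, Finset.sum_filter]
      rw [Fintype.sum_prod_type]
      simp
    rw [this]; rfl
  have e1 := card_ker_mul A
  have e2 := card_ker_mul A.transpose
  rw [Matrix.rank_transpose] at e2
  simp only [h1] at e1
  simp only [h2] at e2
  have : 0 < 3 ^ A.rank := by positivity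
  rw [← e1, ← e2]; ring

theorem main_identity (k m n : ℕ) :
    (∑ w ∈ Finset.Nat.antidiagonalTuple 3 n, ∑ l ∈ Finset.Nat.antidiagonalTuple 3 (k * m), Nwl k m w l) * 3 ^ m
     = 3 ^ n * ∑ y : Fin m → ZMod 3, #{σ : Fin m × Fin k → Fin n | Gd σ ∧ ∀ v, ∑ a with σ a = v, y a.1 = 0} := by
  classical
  rw [sum_Nwl_eq]
  have h1 : #{p : (Fin n → ZMod 3) × (Fin m × Fin k → Fin n) | Gd p.2 ∧ ∀ j, ∑ t, p.1 (p.2 (j, t)) = 0}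
     = ∑ σ : Fin m × Fin k → Fin n, if Gd σ then #{x : Fin n → ZMod 3 | ∀ j, ∑ t, x (σ (j, t)) = 0} else 0 := by
    rw [Finset.card_filter, Fintype.sum_prod_type_right]
    refine Finset.sum_congr rfl fun σ _ => ?_
    split_ifs with h
    · rw [Finset.card_filter]; simp [h]
    · simp [h]
  have h2 : ∑ y : Fin m → ZMod 3, #{σ : Fin m × Fin k → Fin n | Gd σ ∧ ∀ v, ∑ a with σ a = v, y a.1 = 0}
     = ∑ σ : Fin m × Fin k → Fin n, if Gd σ then #{y : Fin m → ZMod 3 | ∀ v, ∑ a with σ a = v, y a.1 = 0} else 0 := by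
    simp only [Finset.card_filter]
    rw [Finset.sum_comm]
    refine Finset.sum_congr rfl fun σ _ => ?_
    split_ifs with h <;> simp [h]
  rw [h1, h2, Finset.sum_mul, Finset.mul_sum]
  refine Finset.sum_congr rfl fun σ _ => ?_
  split_ifs with h
  · exact duality σ
  · simp

end

section
open Finset
theorem card_joint {S V ι : Type*} [Fintype S] [Fintype V] [Fintype ι] [DecidableEq S] [DecidableEq V]
    [DecidableEq ι] (lam : S → ι) (D : V → ι → ℕ) :
    #{σ : S → V | ∀ v i, #{a | σ a = v ∧ lam a = i} = D v i}
      = ∏ i, #{τ : {a // lam a = i} → V | ∀ v, #{a | τ a = v} = D v i} := by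
  classical
  have key : ∀ (σ : S → V) (i : ι) (v : V),
      #{a : {a // lam a = i} | σ a.1 = v} = #{a | σ a = v ∧ lam a = i} := by
    intro σ i v
    refine Finset.card_bij (fun a _ => a.1) ?_ ?_ ?_
    · intro a ha
      simp only [mem_filter, mem_univ, true_and] at ha ⊢
      exact ⟨ha, a.2⟩
    · intro a _ b _ hab
      exact Subtype.ext hab
    · intro b hb
      simp only [mem_filter, mem_univ, true_and] at hb
      exact ⟨⟨b, hb.2⟩, by simp [hb.1], rfl⟩
  rw [← Fintype.card_piFinset]
  refine Finset.card_bij' (fun σ _ i a => σ a.1) (fun τ _ a => (τ (lam a) ⟨a, rfl⟩)) ?_ ?_ ?_ ?_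
  · intro σ hσ
    simp only [Fintype.mem_piFinset, mem_filter, mem_univ, true_and, key] at hσ ⊢
    intro i v
    exact hσ v i
  · intro τ hτ
    simp only [Fintype.mem_piFinset, mem_filter, mem_univ, true_and] at hτ ⊢
    intro v i
    rw [← key, ← hτ]
    have h3 : ∀ (i : ι) (a : {a // lam a = i}), τ (lam a.1) ⟨a.1, rfl⟩ = τ i a := by
      rintro i ⟨a, ha⟩
      subst ha
      rfl
    simp only [h3]
  · intro σ hσ
    rfl
  · intro τ hτ
    funext i a
    obtain ⟨a, ha⟩ := a
    subst ha
    rfl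

theorem egf_bound {S V ι : Type*} [Fintype S] [Fintype V] [Fintype ι] [DecidableEq S] [DecidableEq V]
    [DecidableEq ι] (lam : S → ι) (P : (ι → ℕ) → Prop) [DecidablePred P] (ξ : ι → ℝ) (hξ : ∀ i, 0 ≤ ξ i)
    (Φ : ℝ) (hΦ : ∀ N : ℕ, ∑ d : ι → Fin (N+1), (if P (fun i => d i) then ∏ i, ξ i ^ (d i : ℕ) / (d i : ℕ).factorial else 0) ≤ Φ) :
    (#{σ : S → V | ∀ v, P (fun i => #{a | σ a = v ∧ lam a = i})} : ℝ) * ∏ i, ξ i ^ #{a | lam a = i}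
     ≤ (∏ i, ((#{a | lam a = i}).factorial : ℝ)) * Φ ^ Fintype.card V := by
  classical
  set N := Fintype.card S with hN
  have hle : ∀ (s : Finset S), #s < N + 1 := fun s => Nat.lt_succ_of_le (Finset.card_le_univ _)
  have h1 : #{σ : S → V | ∀ v, P (fun i => #{a | σ a = v ∧ lam a = i})}
    = ∑ D : V → ι → Fin (N+1), if ∀ v, P (fun i => D v i) then #{σ : S → V | ∀ v i, #{a | σ a = v ∧ lam a = i} = D v i} else 0 := by
    rw [Finset.card_eq_sum_card_fiberwise (f := fun σ v i => (⟨#{a | σ a = v ∧ lam a = i}, hle _⟩ : Fin (N+1))) (t := univ) (by intro _ _; simp)]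
    refine Finset.sum_congr rfl fun D _ => ?_
    split_ifs with h
    · congr 1
      ext σ
      simp only [mem_filter, mem_univ, true_and, funext_iff, Fin.ext_iff]
      constructor
      · intro h; exact h.2
      · intro h2
        refine ⟨fun v => ?_, h2⟩
        have := h v
        simp only [← h2] at this
        exact this
    · rw [Finset.card_eq_zero, Finset.filter_eq_empty_iff]
      intro σ hσ h2
      simp only [mem_filter, mem_univ, true_and] at hσ
      apply h
      rw [← h2]
      exact hσ
  have h2 : ∀ D : V → ι → Fin (N+1), (#{σ : S → V | ∀ v i, #{a | σ a = v ∧ lam a = i} = D v i} : ℝ) * ∏ i, ξ i ^ #{a | lam a = i}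
      ≤ (∏ i, ((#{a | lam a = i}).factorial : ℝ)) * ∏ v, ∏ i, ξ i ^ (D v i : ℕ) / (D v i : ℕ).factorial := by
    intro D
    rw [card_joint lam (fun v i => (D v i : ℕ)), Finset.prod_comm]
    push_cast
    rw [← Finset.prod_mul_distrib, ← Finset.prod_mul_distrib]
    refine Finset.prod_le_prod (fun i _ => mul_nonneg (by positivity) (pow_nonneg (hξ i) _)) fun i _ => ?_
    by_cases hs : ∑ v, (D v i : ℕ) = #{a | lam a = i}
    · have := card_fiber_eq_multinomial (S := {a // lam a = i}) (fun v => (D v i : ℕ)) (by rw [hs, Fintype.card_subtype])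
      rw [this]
      have h3 := Nat.multinomial_spec univ (fun v => (D v i : ℕ))
      rw [hs] at h3
      rw [← h3, Finset.prod_div_distrib, Finset.prod_pow_eq_pow_sum, hs]
      push_cast
      have h4 : (∏ v, ((D v i : ℕ).factorial : ℝ)) ≠ 0 := by
        refine Finset.prod_ne_zero_iff.mpr fun v _ => by positivity
      field_simp
      exact le_rfl
    · have : #{τ : {a // lam a = i} → V | ∀ v, #{a | τ a = v} = D v i} = 0 := by
        rw [Finset.card_eq_zero, Finset.filter_eq_empty_iff]
        intro τ _ h
        apply hs
        simp only [← h]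
        have := (Finset.card_eq_sum_card_fiberwise (s := univ) (f := τ) (t := univ) (by simp))
        rw [← this, Finset.card_univ, Fintype.card_subtype]
      rw [this]
      simp only [Nat.cast_zero, zero_mul]
      refine mul_nonneg (by positivity) (Finset.prod_nonneg fun v _ => div_nonneg (pow_nonneg (hξ i) _) (by positivity))
  rw [h1]
  push_cast
  rw [Finset.sum_mul]
  have hpos : ∀ d : ι → Fin (N+1), 0 ≤ (if P (fun i => d i) then ∏ i, ξ i ^ (d i : ℕ) / (d i : ℕ).factorial else 0) := by
    intro d
    split_ifs
    · exact Finset.prod_nonneg fun v _ => div_nonneg (pow_nonneg (hξ _) _) (by positivity)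
    · exact le_rfl
  calc _ ≤ ∑ D : V → ι → Fin (N+1), (∏ i, ((#{a | lam a = i}).factorial : ℝ)) *
        ∏ v, (if P (fun i => D v i) then ∏ i, ξ i ^ (D v i : ℕ) / (D v i : ℕ).factorial else 0) := by
        refine Finset.sum_le_sum fun D _ => ?_
        split_ifs with h
        · simp only [h, if_true]
          exact h2 D
        · rw [zero_mul]
          refine mul_nonneg (by positivity) (Finset.prod_nonneg fun v _ => hpos (D v))
    _ = (∏ i, ((#{a | lam a = i}).factorial : ℝ)) * (∑ d : ι → Fin (N+1), (if P (fun i => d i) then ∏ i, ξ i ^ (d i : ℕ) / (d i : ℕ).factorial else 0)) ^ Fintype.card V := by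
        rw [← Finset.mul_sum, ← Finset.card_univ, ← Finset.prod_const, Finset.prod_univ_sum, Fintype.piFinset_univ]
    _ ≤ _ := by
        refine mul_le_mul_of_nonneg_left ?_ (by positivity)
        exact pow_le_pow_left₀ (Finset.sum_nonneg fun d _ => hpos d) (hΦ N) _

end

section
open Finset
/-- coefficients of `exp z - 1 - z` -/
noncomputable def cc (d : ℕ) : ℝ := if 2 ≤ d then 1 / (d.factorial : ℝ) else 0
/-- coefficients of `(exp z - 1 - z)^n` -/
noncomputable def aa : ℕ → ℕ → ℝ
  | 0, j => if j = 0 then 1 else 0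
  | (n+1), j => ∑ p ∈ antidiagonal j, cc p.1 * aa n p.2
/-- `exp z - 1 - z` -/
noncomputable def ff (z : ℝ) : ℝ := Real.exp z - 1 - z

theorem cc_nonneg (d : ℕ) : 0 ≤ cc d := by unfold cc; split_ifs <;> positivity

theorem aa_nonneg (n : ℕ) : ∀ j, 0 ≤ aa n j := by
  induction n with
  | zero => intro j; simp only [aa]; split_ifs <;> simp
  | succ n ih => intro j; simp only [aa]; exact sum_nonneg fun p _ => mul_nonneg (cc_nonneg _) (ih _)

theorem hasSum_exp_real (z : ℝ) : HasSum (fun d : ℕ => z ^ d / (d.factorial : ℝ)) (Real.exp z) := by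
  have := NormedSpace.expSeries_div_hasSum_exp (z : ℝ)
  rwa [← Real.exp_eq_exp_ℝ] at this

theorem hasSum_cc (z : ℝ) : HasSum (fun d => cc d * z ^ d) (ff z) := by
  have h := hasSum_exp_real z
  have h2 := (hasSum_nat_add_iff' 2).mpr h
  rw [← hasSum_nat_add_iff' 2]
  convert h2 using 1
  · funext d
    simp [cc]; ring
  · simp [cc, ff, Finset.sum_range_succ]; ring

theorem hasSum_dcc (z : ℝ) : HasSum (fun d : ℕ => (d : ℝ) * (cc d * z ^ d)) (z * (Real.exp z - 1)) := by
  have h := hasSum_exp_real z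
  have h2 := ((hasSum_nat_add_iff' 1).mpr h).mul_left z
  rw [← hasSum_nat_add_iff' 2]
  have e1 : (fun d : ℕ => ((d + 2 : ℕ) : ℝ) * (cc (d+2) * z ^ (d+2)))
      = (fun i : ℕ => z * (z ^ (i + 1) / ((i + 1).factorial : ℝ))) := by
    funext d
    simp only [cc, le_add_iff_nonneg_left, zero_le, if_true]
    rw [Nat.factorial_succ (d+1)]
    push_cast
    have : ((d:ℝ) + 1 + 1) ≠ 0 := by positivity
    have h2 : ((d:ℝ) + 1 + 1) = d + 2 := by ring
    rw [h2] at *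
    field_simp
    ring
  have e2 : z * (Real.exp z - 1) - ∑ i ∈ range 2, (i:ℝ) * (cc i * z ^ i)
      = z * (Real.exp z - ∑ i ∈ range 1, z ^ i / (i.factorial : ℝ)) := by
    simp [cc, Finset.sum_range_succ]
  rw [e1, e2]
  exact h2

theorem hasSum_aa (n : ℕ) {z : ℝ} (hz : 0 ≤ z) : HasSum (fun d => aa n d * z ^ d) (ff z ^ n) := by
  induction n with
  | zero =>
    have := hasSum_ite_eq (0:ℕ) (1:ℝ)
    convert this using 1
    · funext d
      simp only [aa]
      split_ifs with h <;> simp [h]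
    · simp
  | succ n ih =>
    have h1 := hasSum_cc z
    have n1 : Summable (fun d => ‖cc d * z ^ d‖) := h1.summable.congr fun d => by
      rw [Real.norm_of_nonneg (mul_nonneg (cc_nonneg _) (pow_nonneg hz _))]
    have n2 : Summable (fun d => ‖aa n d * z ^ d‖) := ih.summable.congr fun d => by
      rw [Real.norm_of_nonneg (mul_nonneg (aa_nonneg _ _) (pow_nonneg hz _))]
    have h3 := tsum_mul_tsum_eq_tsum_sum_antidiagonal_of_summable_norm n1 n2
    have h4 := (summable_norm_sum_mul_antidiagonal_of_summable_norm n1 n2).of_norm.hasSum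
    rw [← h3, h1.tsum_eq, ih.tsum_eq] at h4
    have e1 : (fun d => aa (n+1) d * z ^ d) = (fun n_1 => ∑ kl ∈ HasAntidiagonal.antidiagonal n_1, cc kl.1 * z ^ kl.1 * (aa n kl.2 * z ^ kl.2)) := by
      funext d
      simp only [aa, Finset.sum_mul]
      refine Finset.sum_congr rfl fun p hp => ?_
      rw [← HasAntidiagonal.mem_antidiagonal.mp hp, pow_add]; ring
    rw [e1, pow_succ, mul_comm (ff z ^ n)]
    exact h4

theorem M_zero (N : ℕ) : (M N 0 : ℝ) = N.factorial * aa 0 N := by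
  cases N with
  | zero => simp [M, aa]
  | succ N => simp [M, aa]

theorem M_eq_aa (n : ℕ) : ∀ N, (M N n : ℝ) = N.factorial * aa n N := by
  have key : ∀ n N, aa n N = ∑ v ∈ (Finset.Nat.antidiagonalTuple n N), ∏ i, cc (v i) := by
    intro n
    induction n with
    | zero =>
      intro N
      cases N with
      | zero => simp [aa]
      | succ N => simp [aa]
    | succ n ih =>
      intro N
      simp only [aa, ih, Finset.mul_sum]
      rw [Finset.sum_sigma']
      refine Finset.sum_bij' (fun q _ => Fin.cons q.1.1 q.2) (fun v _ => ⟨(v 0, ∑ i : Fin n, v i.succ), Fin.tail v⟩) ?_ ?_ ?_ ?_ ?_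
      · rintro ⟨⟨p, q⟩, v⟩ h
        simp only [mem_sigma, HasAntidiagonal.mem_antidiagonal, Finset.Nat.mem_antidiagonalTuple] at h ⊢
        rw [Fin.sum_univ_succ]
        simp [h.1, h.2]
      · intro v h
        simp only [mem_sigma, HasAntidiagonal.mem_antidiagonal, Finset.Nat.mem_antidiagonalTuple] at h ⊢
        rw [Fin.sum_univ_succ] at h
        exact ⟨h, rfl⟩
      · rintro ⟨⟨p, q⟩, v⟩ h
        simp only [mem_sigma, HasAntidiagonal.mem_antidiagonal, Finset.Nat.mem_antidiagonalTuple] at h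
        simp [h.2]
      · intro v h
        simp
      · rintro ⟨⟨p, q⟩, v⟩ h
        rw [Fin.prod_univ_succ]
        simp
  intro N
  rw [key, M, Finset.sum_filter, Finset.mul_sum]
  push_cast
  refine Finset.sum_congr rfl fun v hv => ?_
  rw [Finset.Nat.mem_antidiagonalTuple] at hv
  split_ifs with h
  · have h3 := Nat.multinomial_spec univ v
    rw [hv] at h3
    have : ∀ i, cc (v i) = 1 / ((v i).factorial : ℝ) := fun i => by simp [cc, h i]
    simp only [this]
    rw [← h3, Finset.prod_div_distrib]
    push_cast
    have h4 : (∏ i, ((v i).factorial : ℝ)) ≠ 0 := by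
        refine Finset.prod_ne_zero_iff.mpr fun v _ => by positivity
    simp
    field_simp
  · push Not at h
    obtain ⟨i, hi⟩ := h
    rw [Finset.prod_eq_zero (mem_univ i)]
    · simp
    · simp [cc, hi]

theorem aa_pos (n : ℕ) (hn : 1 ≤ n) : ∀ j, 2 * n ≤ j → 0 < aa n j := by
  induction n, hn using Nat.le_induction with
  | base =>
    intro j hj
    simp only [aa]
    refine Finset.sum_pos' (fun p _ => mul_nonneg (cc_nonneg _) (by split_ifs <;> simp)) ⟨(j, 0), by simp, ?_⟩
    have : 2 ≤ j := by omega
    simp [cc, this]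
    positivity
  | succ n hn ih =>
    intro j hj
    simp only [aa]
    refine Finset.sum_pos' (fun p _ => mul_nonneg (cc_nonneg _) (aa_nonneg _ _)) ⟨(2, j - 2), by simp; omega, ?_⟩
    exact mul_pos (by simp [cc]) (ih _ (by omega))

/-- Toeplitz kernel -/
noncomputable def tk (a : ℕ → ℝ) (i x : ℕ) : ℝ := if x ≤ i then a (i - x) else 0

theorem fact_lc (p e g : ℕ) : (p + e).factorial * (p + g).factorial ≤ p.factorial * (p + e + g).factorial := by
  have h1 := Nat.factorial_mul_ascFactorial p g
  have h2 := Nat.factorial_mul_ascFactorial (p + e) g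
  rw [← h1, ← h2]
  have := Nat.ascFactorial_le g (show p + 1 ≤ p + e + 1 by omega)
  nlinarith [Nat.zero_le ((p+e).factorial * p.factorial), Nat.mul_le_mul_left ((p+e).factorial * p.factorial) this]

theorem cc_tp2 (i i' x x' : ℕ) (hi : i ≤ i') (hx : x ≤ x') :
    tk cc i x' * tk cc i' x ≤ tk cc i x * tk cc i' x' := by
  have hn : ∀ i x, 0 ≤ tk cc i x := fun i x => by unfold tk; split_ifs; exact cc_nonneg _; exact le_rfl
  by_cases h : x' + 2 ≤ i
  · obtain ⟨p, rfl⟩ := Nat.exists_eq_add_of_le h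
    obtain ⟨e, rfl⟩ := Nat.exists_eq_add_of_le hi
    obtain ⟨g, rfl⟩ := Nat.exists_eq_add_of_le hx
    have e1 : x + g + 2 + p - (x + g) = p + 2 := by omega
    have e2 : x + g + 2 + p + e - x = p + 2 + e + g := by omega
    have e3 : x + g + 2 + p - x = p + 2 + g := by omega
    have e4 : x + g + 2 + p + e - (x + g) = p + 2 + e := by omega
    unfold tk
    rw [if_pos (by omega), if_pos (by omega), if_pos (by omega), if_pos (by omega), e1, e2, e3, e4]
    unfold cc
    rw [if_pos (by omega), if_pos (by omega), if_pos (by omega), if_pos (by omega)]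
    have := fact_lc (p+2) e g
    rw [div_mul_div_comm, div_mul_div_comm]
    refine div_le_div_of_nonneg_left (by norm_num) (by positivity) ?_
    rw [mul_comm]
    exact_mod_cast this
  · have : tk cc i x' = 0 := by
      unfold tk cc
      split_ifs <;> first | rfl | omega
    rw [this, zero_mul]
    exact mul_nonneg (hn _ _) (hn _ _)

theorem tk_aa_succ (n i x L : ℕ) (hL : i < L) : tk (aa (n+1)) i x = ∑ y ∈ range L, tk cc i y * tk (aa n) y x := by
  by_cases h : x ≤ i
  · simp only [tk, h, if_true, aa]
    symm
    rw [← Finset.sum_filter_of_ne (p := fun y => x ≤ y ∧ y ≤ i)]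
    · refine Finset.sum_bij' (fun y _ => (i - y, y - x)) (fun p _ => p.2 + x) ?_ ?_ ?_ ?_ ?_
      · intro y hy
        simp only [mem_filter, mem_range, HasAntidiagonal.mem_antidiagonal] at hy ⊢
        omega
      · intro p hp
        simp only [mem_filter, mem_range, HasAntidiagonal.mem_antidiagonal] at hp ⊢
        omega
      · intro y hy
        simp only [mem_filter, mem_range] at hy ⊢
        omega
      · intro p hp
        simp only [HasAntidiagonal.mem_antidiagonal] at hp
        ext <;> simp; omega
      · intro y hy
        simp only [mem_filter, mem_range] at hy
        simp [hy]
    · intro y hy h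
      by_contra h2
      apply h
      by_cases h3 : x ≤ y
      · have : ¬ y ≤ i := fun h4 => h2 ⟨h3, h4⟩
        simp [this]
      · simp [h3]
  · rw [show tk (aa (n+1)) i x = 0 by simp [tk, h]]
    symm
    refine Finset.sum_eq_zero fun y _ => ?_
    by_cases h3 : x ≤ y
    · have : ¬ y ≤ i := by omega
      simp [this, tk]
    · simp [h3, tk]

theorem tp2_comp (L : ℕ) (A B : ℕ → ℕ → ℝ)
    (hA : ∀ i i' x x', i ≤ i' → x ≤ x' → A i x' * A i' x ≤ A i x * A i' x')
    (hB : ∀ i i' x x', i ≤ i' → x ≤ x' → B i x' * B i' x ≤ B i x * B i' x')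
    (i i' x x' : ℕ) (hi : i ≤ i') (hx : x ≤ x') :
    (∑ y ∈ range L, A i y * B y x') * (∑ y ∈ range L, A i' y * B y x)
     ≤ (∑ y ∈ range L, A i y * B y x) * (∑ y ∈ range L, A i' y * B y x') := by
  rw [← sub_nonneg]
  have h1 : (∑ y ∈ range L, A i y * B y x) * (∑ y ∈ range L, A i' y * B y x')
     - (∑ y ∈ range L, A i y * B y x') * (∑ y ∈ range L, A i' y * B y x)
     = ∑ y ∈ range L, ∑ z ∈ range L, (A i y * A i' z) * (B y x * B z x' - B y x' * B z x) := by
    rw [Finset.sum_mul_sum, Finset.sum_mul_sum, ← Finset.sum_sub_distrib]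
    refine Finset.sum_congr rfl fun y _ => ?_
    rw [← Finset.sum_sub_distrib]
    refine Finset.sum_congr rfl fun z _ => ?_
    ring
  have h2 : ∑ y ∈ range L, ∑ z ∈ range L, (A i y * A i' z) * (B y x * B z x' - B y x' * B z x)
     = ∑ y ∈ range L, ∑ z ∈ range L, (A i z * A i' y) * (B z x * B y x' - B z x' * B y x) := by
    rw [Finset.sum_comm]
  have h3 : 2 * ∑ y ∈ range L, ∑ z ∈ range L, (A i y * A i' z) * (B y x * B z x' - B y x' * B z x)
    = ∑ y ∈ range L, ∑ z ∈ range L, (A i y * A i' z - A i z * A i' y) * (B y x * B z x' - B y x' * B z x) := by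
    rw [two_mul]
    nth_rewrite 2 [h2]
    rw [← Finset.sum_add_distrib]
    refine Finset.sum_congr rfl fun y _ => ?_
    rw [← Finset.sum_add_distrib]
    refine Finset.sum_congr rfl fun z _ => ?_
    ring
  rw [h1]
  suffices 0 ≤ 2 * ∑ y ∈ range L, ∑ z ∈ range L, (A i y * A i' z) * (B y x * B z x' - B y x' * B z x) by linarith
  rw [h3]
  refine Finset.sum_nonneg fun y _ => Finset.sum_nonneg fun z _ => ?_
  rcases le_total y z with h | h
  · exact mul_nonneg (by linarith [hA i i' y z hi h]) (by linarith [hB y z x x' h hx])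
  · exact mul_nonneg_of_nonpos_of_nonpos (by linarith [hA i i' z y hi h]) (by linarith [hB z y x x' h hx])

theorem aa_tp2 (n : ℕ) : ∀ i i' x x', i ≤ i' → x ≤ x' →
    tk (aa n) i x' * tk (aa n) i' x ≤ tk (aa n) i x * tk (aa n) i' x' := by
  induction n with
  | zero =>
    intro i i' x x' hi hx
    have : ∀ i x, tk (aa 0) i x = if i = x then 1 else 0 := by
      intro i x
      unfold tk aa
      split_ifs <;> first | rfl | omega
    simp only [this]
    split_ifs <;> first | (exfalso; omega) | norm_num
  | succ n ih =>
    intro i i' x x' hi hx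
    rw [tk_aa_succ n i x (i'+1) (by omega), tk_aa_succ n i x' (i'+1) (by omega), tk_aa_succ n i' x (i'+1) (by omega), tk_aa_succ n i' x' (i'+1) (by omega)]
    exact tp2_comp _ _ _ cc_tp2 ih i i' x x' hi hx

end

section
open Finset
theorem ff_pos {s : ℝ} (hs : 0 < s) : 0 < ff s := by
  unfold ff; linarith [Real.add_one_lt_exp hs.ne']

theorem Qf_mul_ff {s : ℝ} (hs : 0 < s) : Qf s * ff s = s * (Real.exp s - 1) := by
  have := ff_pos hs
  have h : Real.exp s - s - 1 = ff s := by unfold ff; ring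
  unfold Qf
  rw [h]
  field_simp

theorem ff_jensen {s t : ℝ} (hs : 0 < s) (ht : 0 < t) :
    ff s * Real.exp (Qf s * Real.log (t / s)) ≤ ff t := by
  set u := Real.log (t / s) with hu
  have htu : t = s * Real.exp u := by
    rw [hu, Real.exp_log (by positivity)]; field_simp
  have h1 := hasSum_cc t
  have h2 := hasSum_cc s
  have h3 := hasSum_dcc s
  have h4 := ((h2.mul_left (1 - Qf s * u)).add (h3.mul_left u)).mul_left (Real.exp (Qf s * u))
  have h5 := hasSum_le (fun d => ?_) h4 h1
  · have := Qf_mul_ff hs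
    have e : (1 - Qf s * u) * ff s + u * (s * (Real.exp s - 1)) = ff s := by rw [← this]; ring
    rw [e] at h5
    linarith
  · have e1 : cc d * t ^ d = cc d * s ^ d * (Real.exp (Qf s * u) * Real.exp (d * u - Qf s * u)) := by
      rw [← Real.exp_add, htu, mul_pow, ← Real.exp_nat_mul]
      ring_nf
    rw [e1]
    have e2 := Real.add_one_le_exp (d * u - Qf s * u)
    have e3 : 0 ≤ cc d * s ^ d := mul_nonneg (cc_nonneg _) (by positivity)
    have e4 := mul_le_mul_of_nonneg_left (mul_le_mul_of_nonneg_left e2 (Real.exp_pos (Qf s * u)).le) e3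
    refine le_trans (le_of_eq ?_) e4
    ring

theorem ff_jensen_pow {s t : ℝ} (hs : 0 < s) (ht : 0 < t) (n N : ℕ) (hQ : (n:ℝ) * Qf s = N) :
    ff s ^ n / s ^ N ≤ ff t ^ n / t ^ N := by
  have h := pow_le_pow_left₀ (by have := ff_pos hs; positivity) (ff_jensen hs ht) n
  rw [mul_pow, ← Real.exp_nat_mul, ← mul_assoc, hQ, Real.exp_nat_mul, Real.exp_log (by positivity), div_pow] at h
  rw [le_div_iff₀ (by positivity)]
  calc _ = _ := by field_simp
    _ ≤ _ := h

theorem lowerA (n k N : ℕ) (s : ℝ) (hs : 0 < s) (hn : 2 ≤ n) (h2n : 2 * n ≤ N) (hkn : N ≤ k * n)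
    (hQ : (n:ℝ) * Qf s = N) :
    ff s ^ n / s ^ N ≤ aa n N * (n * (1 + k * Real.exp (2 * k))) := by
  have hN := aa_pos n (by omega) N h2n
  have hN1 := aa_pos n (by omega) (N+1) (by omega)
  set r := aa n (N+1) / aa n N with hr
  have hr0 : 0 < r := div_pos hN1 hN
  have hn' : (2:ℝ) ≤ n := by exact_mod_cast hn
  set q : ℝ := 1 - 1 / n with hq
  have hx : (1:ℝ) / n ≤ 1 / 2 := by
    apply one_div_le_one_div_of_le <;> linarith
  have hx0 : (0:ℝ) < 1 / n := by positivity
  have hq0 : 0 < q := by linarith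
  have hq1 : q < 1 := by linarith
  set t := q / r with ht
  have ht0 : 0 < t := by positivity
  have up : ∀ d, aa n (N+d) * t ^ d ≤ aa n N * q ^ d := by
    have : ∀ d, aa n (N+d) ≤ aa n N * r ^ d := by
      intro d
      induction d with
      | zero => simp
      | succ d ih =>
        have h := aa_tp2 n (N+d) (N+d+1) 0 d (by omega) (by omega)
        simp only [tk, zero_le, if_true, show d ≤ N + d by omega, show d ≤ N + d + 1 by omega, Nat.sub_zero,
          show N + d - d = N by omega, show N + d + 1 - d = N + 1 by omega] at h
        have h2 : aa n (N+d+1) ≤ aa n (N+d) * r := by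
          rw [hr, ← mul_div_assoc, le_div_iff₀ hN]; linarith
        calc aa n (N + (d+1)) ≤ aa n (N+d) * r := h2
          _ ≤ aa n N * r ^ d * r := by gcongr
          _ = _ := by ring
    intro d
    calc _ ≤ aa n N * r ^ d * t ^ d := by gcongr; exact this d
      _ = _ := by
        have h1 : q = t * r := by rw [ht]; field_simp
        rw [h1, mul_pow]; ring
  have dn : ∀ d, d ≤ N → aa n (N-d) * q ^ d ≤ aa n N * t ^ d := by
    have : ∀ d, d ≤ N → aa n (N-d) * r ^ d ≤ aa n N := by
      intro d
      induction d with
      | zero => simp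
      | succ d ih =>
        intro hd
        have h := aa_tp2 n N (N+1) 0 (d+1) (by omega) (by omega)
        simp only [tk, zero_le, if_true, show d + 1 ≤ N by omega, show d + 1 ≤ N + 1 by omega, Nat.sub_zero,
          show N + 1 - (d+1) = N - d by omega] at h
        have h2 : aa n (N-(d+1)) * r ≤ aa n (N-d) := by
          rw [hr, ← mul_div_assoc, div_le_iff₀ hN]; linarith
        calc aa n (N-(d+1)) * r ^ (d+1) = aa n (N-(d+1)) * r * r ^ d := by ring
          _ ≤ aa n (N-d) * r ^ d := by gcongr
          _ ≤ _ := ih (by omega)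
    intro d hd
    have h1 : q = t * r := by rw [ht]; field_simp
    calc _ = (aa n (N-d) * r ^ d) * t ^ d := by rw [h1, mul_pow]; ring
      _ ≤ _ := by gcongr; exact this d hd
  have hqN : (1 / q) ^ N ≤ Real.exp (2 * k) := by
    have h1 : 1 / q ≤ Real.exp (2 / n) := by
      refine le_trans ?_ (Real.add_one_le_exp _)
      rw [div_le_iff₀ hq0]
      have : (2:ℝ) / n = 2 * (1 / n) := by ring
      rw [this, hq]
      nlinarith
    calc _ ≤ Real.exp (2 / n) ^ N := by gcongr
      _ = Real.exp (N * (2 / n)) := by rw [← Real.exp_nat_mul]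
      _ ≤ _ := by
        apply Real.exp_le_exp.mpr
        have : (N:ℝ) ≤ k * n := by exact_mod_cast hkn
        rw [← mul_div_assoc, div_le_iff₀ (by positivity)]
        nlinarith
  refine (ff_jensen_pow hs ht0 n N hQ).trans ?_
  rw [div_le_iff₀ (by positivity)]
  have hS := hasSum_aa n ht0.le
  have hT := (hasSum_nat_add_iff' N).mpr hS
  have hgeo := ((hasSum_geometric_of_lt_one hq0.le hq1).mul_left (aa n N * t ^ N))
  have h1 := hasSum_le (fun d => ?_) hT hgeo
  · have h2 : ∑ i ∈ range N, aa n i * t ^ i ≤ ∑ i ∈ range N, aa n N * t ^ N * Real.exp (2 * k) := by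
      refine Finset.sum_le_sum fun i hi => ?_
      rw [mem_range] at hi
      have h3 := dn (N - i) (by omega)
      rw [show N - (N - i) = i by omega] at h3
      have h4 : aa n i ≤ aa n N * t ^ (N-i) * (1/q) ^ (N-i) := by
        rw [one_div, inv_pow, ← div_eq_mul_inv, le_div_iff₀ (by positivity)]; exact h3
      have h5 : (1/q) ^ (N-i) ≤ (1/q) ^ N := by
        apply pow_le_pow_right₀ _ (by omega)
        rw [le_div_iff₀ hq0]; linarith
      calc aa n i * t ^ i ≤ aa n N * t ^ (N-i) * (1/q) ^ (N-i) * t ^ i := by gcongr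
        _ = aa n N * (t ^ (N-i) * t ^ i) * (1/q) ^ (N-i) := by ring
        _ = aa n N * t ^ N * (1/q) ^ (N-i) := by rw [← pow_add, Nat.sub_add_cancel hi.le]
        _ ≤ _ := by gcongr; exact h5.trans hqN
    rw [Finset.sum_const, card_range, nsmul_eq_mul] at h2
    have h6 : (1 - q)⁻¹ = (n:ℝ) := by rw [hq]; simp
    rw [h6] at h1
    have h7 : (N:ℝ) * (aa n N * t ^ N * Real.exp (2 * k)) ≤ (k * n) * (aa n N * t ^ N * Real.exp (2 * k)) := by
      gcongr; exact_mod_cast hkn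
    nlinarith
  · have := up d
    calc aa n (d+N) * t ^ (d+N) = (aa n (N+d) * t ^ d) * t ^ N := by rw [add_comm, pow_add]; ring
      _ ≤ (aa n N * q ^ d) * t ^ N := by gcongr
      _ = _ := by ring

end

section
open Finset

theorem zmod3_prod {R : Type*} [CommMonoid R] (f : ZMod 3 → R) : ∏ i, f i = f 0 * f 1 * f 2 :=
  Fin.prod_univ_three f
theorem zmod3_sum {R : Type*} [AddCommMonoid R] (f : ZMod 3 → R) : ∑ i, f i = f 0 + f 1 + f 2 :=
  Fin.sum_univ_three f

theorem hs_mul_real (f g : ℕ → ℝ) {a b : ℝ} (hf : HasSum f a) (hg : HasSum g b)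
    (nf : Summable fun d => ‖f d‖) (ng : Summable fun d => ‖g d‖) :
    HasSum (fun p : ℕ × ℕ => f p.1 * g p.2) (a * b) :=
  hf.mul hg (summable_mul_of_summable_norm nf ng)

theorem hs_mul_complex (f g : ℕ → ℂ) {a b : ℂ} (hf : HasSum f a) (hg : HasSum g b)
    (nf : Summable fun d => ‖f d‖) (ng : Summable fun d => ‖g d‖) :
    HasSum (fun p : ℕ × ℕ => f p.1 * g p.2) (a * b) :=
  hf.mul hg (summable_mul_of_summable_norm nf ng)

theorem hasSum_exp_mul (x y : ℝ) :
    HasSum (fun p : ℕ × ℕ => (x ^ p.1 / (p.1.factorial : ℝ)) * (y ^ p.2 / (p.2.factorial : ℝ))) (Real.exp (x + y)) := by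
  have n1 : ∀ z : ℝ, Summable (fun d : ℕ => ‖z ^ d / (d.factorial : ℝ)‖) := fun z => by
    have := (hasSum_exp_real |z|).summable
    refine this.congr fun d => ?_
    simp
  rw [Real.exp_add]
  exact hs_mul_real _ _ (hasSum_exp_real x) (hasSum_exp_real y) (n1 x) (n1 y)

theorem hasSum_exp_c (z : ℂ) : HasSum (fun d : ℕ => z ^ d / (d.factorial : ℂ)) (Complex.exp z) := by
  have := NormedSpace.expSeries_div_hasSum_exp (z : ℂ)
  rwa [← Complex.exp_eq_exp_ℂ] at this

theorem norm_exp_c (z : ℂ) : Summable (fun d : ℕ => ‖z ^ d / (d.factorial : ℂ)‖) := by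
  have := (hasSum_exp_real ‖z‖).summable
  refine this.congr fun d => ?_
  rw [norm_div, norm_pow, Complex.norm_natCast]

theorem hasSum_exp_cmul (x y : ℂ) :
    HasSum (fun p : ℕ × ℕ => (x ^ p.1 / (p.1.factorial : ℂ)) * (y ^ p.2 / (p.2.factorial : ℂ))) (Complex.exp (x + y)) := by
  have := hs_mul_complex (fun d : ℕ => x ^ d / (d.factorial : ℂ)) (fun d : ℕ => y ^ d / (d.factorial : ℂ)) (hasSum_exp_c x) (hasSum_exp_c y) (norm_exp_c x) (norm_exp_c y)
  rw [← Complex.exp_add] at this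
  exact this

/-- primitive cube root of unity -/
noncomputable def om : ℂ := ⟨-1/2, Real.sqrt 3 / 2⟩
/-- its conjugate -/
noncomputable def omb : ℂ := ⟨-1/2, -(Real.sqrt 3 / 2)⟩

theorem om_mul : om * omb = 1 := by
  have := Real.mul_self_sqrt (show (0:ℝ) ≤ 3 by norm_num)
  apply Complex.ext <;> simp [om, omb] <;> linarith
theorem om_sq : om ^ 2 = omb := by
  have := Real.mul_self_sqrt (show (0:ℝ) ≤ 3 by norm_num)
  rw [sq]
  apply Complex.ext <;> simp [om, omb] <;> linarith
theorem omb_sq : omb ^ 2 = om := by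
  have := Real.mul_self_sqrt (show (0:ℝ) ≤ 3 by norm_num)
  rw [sq]
  apply Complex.ext <;> simp [om, omb] <;> linarith
theorem om_pow (b : ℕ) : om ^ b = om ^ (b % 3) := by
  have h3 : om ^ 3 = 1 := by rw [pow_succ, om_sq, mul_comm, om_mul]
  conv_lhs => rw [← Nat.div_add_mod b 3, pow_add, pow_mul, h3, one_pow, one_mul]
theorem omb_pow (b : ℕ) : omb ^ b = omb ^ (b % 3) := by
  have h3 : omb ^ 3 = 1 := by rw [pow_succ, omb_sq, om_mul]
  conv_lhs => rw [← Nat.div_add_mod b 3, pow_add, pow_mul, h3, one_pow, one_mul]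

theorem om_re (b c : ℕ) : (om ^ b * omb ^ c).re = if b % 3 = c % 3 then 1 else -1/2 := by
  rw [om_pow, omb_pow]
  have hb : b % 3 < 3 := Nat.mod_lt _ (by norm_num)
  have hc : c % 3 < 3 := Nat.mod_lt _ (by norm_num)
  have e1 : om.re = -1/2 := rfl
  have e2 : omb.re = -1/2 := rfl
  have e3 : om ^ 2 * omb = om := by rw [sq, mul_assoc, om_mul, mul_one]
  have e4 : om * omb ^ 2 = omb := by rw [sq, ← mul_assoc, om_mul, one_mul]
  have e5 : om ^ 2 * omb ^ 2 = 1 := by rw [← mul_pow, om_mul, one_pow]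
  interval_cases b % 3 <;> interval_cases c % 3 <;> simp [om_mul, e3, e4, e5] <;>
    simp only [om_sq, omb_sq, e1, e2]

theorem hasSum_mod3 (x y : ℝ) : ∃ T, HasSum (fun p : ℕ × ℕ => if p.1 % 3 = p.2 % 3 then
     (x ^ p.1 / (p.1.factorial : ℝ)) * (y ^ p.2 / (p.2.factorial : ℝ)) else 0) T ∧
     T ≤ (Real.exp (x + y) + 2 * Real.exp (-(x+y)/2)) / 3 := by
  have h1 := hasSum_exp_mul x y
  have h2 := Complex.hasSum_re (hasSum_exp_cmul (om * x) (omb * y))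
  have h3 := (h1.add (h2.mul_left 2)).div_const 3
  refine ⟨(Real.exp (x + y) + 2 * (Complex.exp (om * x + omb * y)).re) / 3, ?_, ?_⟩
  · convert! h3 using 1
    funext p
    have : om * x = om * (x:ℂ) := rfl
    have e : ((om * x) ^ p.1 / (p.1.factorial : ℂ) * ((omb * y) ^ p.2 / (p.2.factorial : ℂ))).re
       = (om ^ p.1 * omb ^ p.2).re * ((x ^ p.1 / (p.1.factorial : ℝ)) * (y ^ p.2 / (p.2.factorial : ℝ))) := by
      rw [← Complex.re_mul_ofReal]
      congr 1
      push_cast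
      ring
    rw [e, om_re]
    split_ifs <;> ring
  · have h5 := Complex.abs_re_le_norm (Complex.exp (om * x + omb * y))
    rw [Complex.norm_exp] at h5
    have h6 : (om * x + omb * y).re = -(x+y)/2 := by
      simp [om, omb]; ring
    rw [h6] at h5
    have := le_abs_self (Complex.exp (om * x + omb * y)).re
    linarith

theorem phi3 (ξ : ZMod 3 → ℝ) (hξ : ∀ i, 0 ≤ ξ i) (N : ℕ) :
    ∑ d : ZMod 3 → Fin (N+1), (if (2 ≤ ∑ i, (d i : ℕ) ∧ (d 1 : ℕ) % 3 = (d 2 : ℕ) % 3)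
      then ∏ i, ξ i ^ (d i:ℕ) / ((d i:ℕ).factorial : ℝ) else 0)
    ≤ (Real.exp (ξ 0 + ξ 1 + ξ 2) + 2 * Real.exp (ξ 0 - (ξ 1 + ξ 2) / 2)) / 3 - 1 - ξ 0 := by
  obtain ⟨T, hT, hTle⟩ := hasSum_mod3 (ξ 1) (ξ 2)
  set F2 : ℕ × ℕ → ℝ := fun p : ℕ × ℕ => if p.1 % 3 = p.2 % 3 then
     (ξ 1 ^ p.1 / (p.1.factorial : ℝ)) * (ξ 2 ^ p.2 / (p.2.factorial : ℝ)) else 0 with hF2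
  have hF2n : ∀ p, 0 ≤ F2 p := fun p => by
    have := hξ 1
    have := hξ 2
    simp only [hF2]; split_ifs <;> positivity
  have h0 := hasSum_exp_real (ξ 0)
  have n0 : Summable (fun d : ℕ => ‖ξ 0 ^ d / (d.factorial : ℝ)‖) := h0.summable.congr fun d => by
    have := hξ 0
    rw [Real.norm_of_nonneg (by positivity)]
  have n1 : Summable (fun d => ‖F2 d‖) := hT.summable.congr fun d => by
    rw [Real.norm_of_nonneg (hF2n d)]
  have h1 := h0.mul hT (summable_mul_of_summable_norm n0 n1)
  have h2 := (h1.sub (hasSum_ite_eq (((0:ℕ),((0:ℕ),(0:ℕ)))) (1:ℝ))).sub (hasSum_ite_eq (((1:ℕ),((0:ℕ),(0:ℕ)))) (ξ 0))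
  have hP : ∀ p : ℕ × ℕ × ℕ, (if 2 ≤ p.1 + p.2.1 + p.2.2 then ξ 0 ^ p.1 / (p.1.factorial : ℝ) * F2 p.2 else 0)
     ≤ ξ 0 ^ p.1 / (p.1.factorial : ℝ) * F2 p.2 - (if p = (0,0,0) then 1 else 0) - (if p = (1,0,0) then ξ 0 else 0) := by
    intro p
    have hp : 0 ≤ ξ 0 ^ p.1 / (p.1.factorial : ℝ) * F2 p.2 := by
      have := hξ 0
      have := hF2n p.2
      positivity
    by_cases e1 : p = (0,0,0)
    · subst e1; simp [F2]
    · by_cases e2 : p = (1,0,0)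
      · subst e2; simp [F2]
      · simp only [e1, e2, if_false, sub_zero]
        split_ifs
        · exact le_rfl
        · exact hp
  set e : (ZMod 3 → Fin (N+1)) → ℕ × ℕ × ℕ := fun d => (d 0, d 1, d 2) with he
  have hinj : Function.Injective e := by
    intro d d' h
    simp only [he, Prod.mk.injEq] at h
    funext i
    have : ∀ i : ZMod 3, i = 0 ∨ i = 1 ∨ i = 2 := by decide
    rcases this i with rfl | rfl | rfl
    · exact Fin.ext h.1
    · exact Fin.ext h.2.1
    · exact Fin.ext h.2.2
  have h3 : Real.exp (ξ 0) * T - 1 - ξ 0 ≤ (Real.exp (ξ 0 + ξ 1 + ξ 2) + 2 * Real.exp (ξ 0 - (ξ 1 + ξ 2) / 2)) / 3 - 1 - ξ 0 := by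
    have := mul_le_mul_of_nonneg_left hTle (Real.exp_pos (ξ 0)).le
    have e1 : Real.exp (ξ 0 + ξ 1 + ξ 2) = Real.exp (ξ 0) * Real.exp (ξ 1 + ξ 2) := by rw [← Real.exp_add]; ring_nf
    have e2 : Real.exp (ξ 0 - (ξ 1 + ξ 2) / 2) = Real.exp (ξ 0) * Real.exp (-(ξ 1 + ξ 2)/2) := by rw [← Real.exp_add]; ring_nf
    rw [e1, e2]; linarith
  refine le_trans ?_ h3
  have h4 := sum_le_hasSum (univ.image e) (fun p _ => le_trans ?_ (hP p)) h2
  · refine le_trans ?_ h4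
    rw [Finset.sum_image (fun a _ b _ h => hinj h)]
    refine Finset.sum_le_sum fun d _ => ?_
    refine le_trans ?_ (hP (e d))
    apply le_of_eq
    simp only [he, hF2, zmod3_sum, zmod3_prod]
    by_cases q1 : 2 ≤ (d 0 : ℕ) + d 1 + d 2 <;> by_cases q2 : (d 1 : ℕ) % 3 = (d 2 : ℕ) % 3 <;> simp [q1, q2]
    ring
  · have := hξ 0
    have := hF2n p.2
    split_ifs <;> positivity

theorem phi2 (ξ : Bool → ℝ) (hξ : ∀ i, 0 ≤ ξ i) (N : ℕ) :
    ∑ d : Bool → Fin (N+1), (if (2 ≤ ∑ i, (d i : ℕ) ∧ (d true : ℕ) ≠ 1)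
      then ∏ i, ξ i ^ (d i:ℕ) / ((d i:ℕ).factorial : ℝ) else 0)
    ≤ Real.exp (ξ false) * (Real.exp (ξ true) - ξ true) - 1 - ξ false := by
  set F2 : ℕ → ℝ := fun p => ξ true ^ p / (p.factorial : ℝ) - (if p = 1 then ξ true else 0) with hF2
  have hF2e : ∀ p, F2 p = if p ≠ 1 then ξ true ^ p / (p.factorial : ℝ) else 0 := fun p => by
    simp only [hF2]
    by_cases h : p = 1 <;> simp [h]
  have hF2n : ∀ p, 0 ≤ F2 p := fun p => by
    have := hξ true
    rw [hF2e]; split_ifs <;> positivity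
  have hT : HasSum F2 _ := (hasSum_exp_real (ξ true)).sub (hasSum_ite_eq (1:ℕ) (ξ true))
  have h0 := hasSum_exp_real (ξ false)
  have n0 : Summable (fun d : ℕ => ‖ξ false ^ d / (d.factorial : ℝ)‖) := h0.summable.congr fun d => by
    have := hξ false
    rw [Real.norm_of_nonneg (by positivity)]
  have n1 : Summable (fun d => ‖F2 d‖) := hT.summable.congr fun d => by
    rw [Real.norm_of_nonneg (hF2n d)]
  have h1 := h0.mul hT (summable_mul_of_summable_norm n0 n1)
  have h2 := (h1.sub (hasSum_ite_eq ((0:ℕ),(0:ℕ)) (1:ℝ))).sub (hasSum_ite_eq ((1:ℕ),(0:ℕ)) (ξ false))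
  have hP : ∀ p : ℕ × ℕ, (if 2 ≤ p.1 + p.2 then ξ false ^ p.1 / (p.1.factorial : ℝ) * F2 p.2 else 0)
     ≤ ξ false ^ p.1 / (p.1.factorial : ℝ) * F2 p.2 - (if p = (0,0) then 1 else 0) - (if p = (1,0) then ξ false else 0) := by
    intro p
    have hp : 0 ≤ ξ false ^ p.1 / (p.1.factorial : ℝ) * F2 p.2 := by
      have := hξ false
      have := hF2n p.2
      positivity
    by_cases e1 : p = (0,0)
    · subst e1; simp [F2]
    · by_cases e2 : p = (1,0)
      · subst e2; simp [F2]
      · simp only [e1, e2, if_false, sub_zero]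
        split_ifs
        · exact le_rfl
        · exact hp
  set e : (Bool → Fin (N+1)) → ℕ × ℕ := fun d => (d false, d true) with he
  have hinj : Function.Injective e := by
    intro d d' h
    simp only [he, Prod.mk.injEq] at h
    funext i
    cases i
    · exact Fin.ext h.1
    · exact Fin.ext h.2
  have h4 := sum_le_hasSum (univ.image e) (fun p _ => le_trans ?_ (hP p)) h2
  · refine le_trans ?_ h4
    rw [Finset.sum_image (fun a _ b _ h => hinj h)]
    refine Finset.sum_le_sum fun d _ => ?_
    refine le_trans ?_ (hP (e d))
    apply le_of_eq
    simp only [he, hF2e, Fintype.sum_bool, Fintype.prod_bool]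
    by_cases q1 : 2 ≤ (d false : ℕ) + d true <;> by_cases q2 : (d true : ℕ) = 1 <;>
      simp [q1, q2, add_comm (d true : ℕ)]
    ring
  · have := hξ false
    have := hF2n p.2
    split_ifs <;> positivity

end

section
open Finset

/-- the number of admissible maps balanced for `y` -/
def cnt (k m n : ℕ) (y : Fin m → ZMod 3) : ℕ :=
  #{σ : Fin m × Fin k → Fin n | Gd σ ∧ ∀ v, ∑ a with σ a = v, y a.1 = 0}

theorem card_lam {T : Type*} [Fintype T] [DecidableEq T] (k m : ℕ) (g : Fin m → T) (i : T) :
    #{a : Fin m × Fin k | g a.1 = i} = k * #{j | g j = i} := by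
  have : ({a : Fin m × Fin k | g a.1 = i} : Finset _) = ({j | g j = i} : Finset (Fin m)) ×ˢ (univ : Finset (Fin k)) := by
    ext a; simp
  rw [this, card_product, card_univ, Fintype.card_fin, mul_comm]

theorem cnt3_aux (k m n : ℕ) (y : Fin m → ZMod 3) (ξ : ZMod 3 → ℝ) (hξ : ∀ i, 0 ≤ ξ i) :
    (cnt k m n y : ℝ) * ∏ i, ξ i ^ (k * #{j | y j = i}) ≤ (∏ i, ((k * #{j | y j = i}).factorial : ℝ)) *
      ((Real.exp (ξ 0 + ξ 1 + ξ 2) + 2 * Real.exp (ξ 0 - (ξ 1 + ξ 2) / 2)) / 3 - 1 - ξ 0) ^ n := by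
  have h := egf_bound (V := Fin n) (fun a : Fin m × Fin k => y a.1)
    (fun d : ZMod 3 → ℕ => 2 ≤ ∑ i, d i ∧ d 1 % 3 = d 2 % 3) ξ hξ _ (phi3 ξ hξ)
  simp only [card_lam, Fintype.card_fin] at h
  refine le_trans (le_of_eq ?_) h
  congr 2
  unfold cnt
  congr 1
  ext σ
  simp only [mem_filter, mem_univ, true_and]
  unfold Gd
  rw [← forall_and]
  refine forall_congr' fun v => ?_
  have e1 : #{a | σ a = v} = ∑ i, #{a : Fin m × Fin k | σ a = v ∧ y a.1 = i} := by
    rw [Finset.card_eq_sum_card_fiberwise (f := fun a => y a.1) (t := univ) (by simp)]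
    refine Finset.sum_congr rfl fun i _ => ?_
    rw [Finset.filter_filter]
  have e2 := sum_zmod3_eq_zero_iff (fun a : Fin m × Fin k => if σ a = v then y a.1 else 0)
  rw [← Finset.sum_filter] at e2
  rw [e1, e2]
  have e3 : ∀ i : ZMod 3, i ≠ 0 → (#{a : Fin m × Fin k | (if σ a = v then y a.1 else 0) = i}) = #{a : Fin m × Fin k | σ a = v ∧ y a.1 = i} := by
    intro i hi
    congr 1
    ext a
    simp only [mem_filter, mem_univ, true_and]
    by_cases h : σ a = v <;> simp [h, hi.symm]
  rw [e3 1 (by decide), e3 2 (by decide)]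

theorem cnt2_aux (k m n : ℕ) (y : Fin m → ZMod 3) (s X : ℝ) (hs : 0 ≤ s) (hX : 0 ≤ X) :
    (cnt k m n y : ℝ) * (X ^ (k * #{j | y j ≠ 0}) * s ^ (k * #{j | y j = 0})) ≤
      (((k * #{j | y j ≠ 0}).factorial : ℝ) * ((k * #{j | y j = 0}).factorial : ℝ)) *
      (Real.exp s * (Real.exp X - X) - 1 - s) ^ n := by
  have h := egf_bound (V := Fin n) (fun a : Fin m × Fin k => decide (y a.1 ≠ 0))
    (fun d : Bool → ℕ => 2 ≤ ∑ i, d i ∧ d true ≠ 1) (fun b => if b then X else s) (by intro i; cases i <;> simp [hs, hX]) _ (phi2 _ (by intro i; cases i <;> simp [hs, hX]))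
  simp only [card_lam k m (fun j => decide (y j ≠ 0)), Fintype.card_fin, Fintype.prod_bool] at h
  simp only [if_true, Bool.false_eq_true, if_false] at h
  simp only [decide_eq_true_eq, decide_eq_false_iff_not, not_not] at h
  refine le_trans (mul_le_mul_of_nonneg_right ?_ (by positivity)) h
  unfold cnt
  norm_cast
  apply Finset.card_le_card
  intro σ
  simp only [mem_filter, mem_univ, true_and]
  unfold Gd
  rintro ⟨h1, h2⟩ v
  have e1 : #{a | σ a = v} = ∑ i, #{a : Fin m × Fin k | σ a = v ∧ decide (y a.1 ≠ 0) = i} := by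
    rw [Finset.card_eq_sum_card_fiberwise (f := fun a => decide (y a.1 ≠ 0)) (t := univ) (fun _ _ => mem_coe.mpr (mem_univ _))]
    refine Finset.sum_congr rfl fun i _ => ?_
    rw [Finset.filter_filter]
  refine ⟨by rw [← e1]; exact h1 v, ?_⟩
  intro h3
  rw [Finset.card_eq_one] at h3
  obtain ⟨a, ha⟩ := h3
  have h4 := h2 v
  have ha' : ∀ b, σ b = v ∧ y b.1 ≠ 0 ↔ b = a := fun b => by
    have := Finset.ext_iff.mp ha b
    simpa using this
  have h5 := (ha' a).mpr rfl
  rw [Finset.sum_eq_single a] at h4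
  · exact h5.2 h4
  · intro b hb hne
    by_contra h6
    exact hne ((ha' b).mp ⟨(mem_filter.mp hb).2, h6⟩)
  · intro h6; simp [h5.1] at h6

theorem fact_upper (l : ℕ) : (l.factorial : ℝ) * Real.exp l ≤ Real.exp 1 * (l + 1) * l ^ l := by
  cases l with
  | zero => simp
  | succ l =>
    have : ∀ l : ℕ, ((l+1).factorial : ℝ) * Real.exp (l+1 : ℕ) ≤ Real.exp 1 * (l + 1) * ((l+1 : ℕ):ℝ) ^ (l+1) := by
      intro l
      induction l with
      | zero => simp
      | succ l ih =>
        have h1 : Real.exp 1 * ((l+1 : ℕ):ℝ) ^ (l+2) ≤ ((l+2 : ℕ):ℝ) ^ (l+2) := by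
          have h2 : Real.exp (1 / (l+2)) * (l+1) ≤ l + 2 := by
            have := Real.one_sub_le_exp_neg (1 / ((l:ℝ)+2))
            rw [Real.exp_neg] at this
            have e := Real.exp_pos (1 / ((l:ℝ)+2))
            have h3 : (1 - 1 / ((l:ℝ)+2)) * Real.exp (1 / ((l:ℝ)+2)) ≤ 1 := by
              rwa [← one_div, le_div_iff₀ e] at this
            have h4 : 1 - 1 / ((l:ℝ)+2) = (l+1)/(l+2) := by field_simp; ring
            rw [h4, div_mul_eq_mul_div, div_le_one (by positivity)] at h3
            linarith
          have h5 := pow_le_pow_left₀ (by positivity) h2 (l+2)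
          rw [mul_pow, ← Real.exp_nat_mul] at h5
          have h6 : ((l+2 : ℕ) : ℝ) * (1 / (l+2)) = 1 := by push_cast; field_simp
          rw [h6] at h5
          push_cast
          exact h5
        rw [Nat.factorial_succ]
        have e : Real.exp ((l+1+1 : ℕ) : ℝ) = Real.exp ((l+1:ℕ):ℝ) * Real.exp 1 := by rw [← Real.exp_add]; push_cast; ring_nf
        rw [e]
        push_cast at ih h1 ⊢
        calc ((l:ℝ) + 1 + 1) * ((l+1).factorial : ℝ) * (Real.exp (l+1) * Real.exp 1)
            = ((l:ℝ) + 1 + 1) * Real.exp 1 * (((l+1).factorial : ℝ) * Real.exp (l+1)) := by ring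
          _ ≤ ((l:ℝ) + 1 + 1) * Real.exp 1 * (Real.exp 1 * (l + 1) * ((l:ℝ)+1) ^ (l+1)) := by gcongr
          _ = ((l:ℝ) + 1 + 1) * Real.exp 1 * (Real.exp 1 * ((l:ℝ)+1) ^ (l+2)) := by ring
          _ ≤ ((l:ℝ) + 1 + 1) * Real.exp 1 * (((l:ℝ)+2) ^ (l+2)) := by gcongr
          _ = _ := by ring_nf
    refine (this l).trans ?_
    gcongr
    push_cast; linarith

theorem pow_le_fact_exp (N : ℕ) : (N:ℝ) ^ N ≤ N.factorial * Real.exp N := by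
  have := Real.pow_div_factorial_le_exp (N:ℝ) (by positivity) N
  rwa [div_le_iff₀ (by positivity), mul_comm] at this

theorem cnt3_bound (k m n : ℕ) (hk : 0 < k) (hm : 0 < m) (y : Fin m → ZMod 3) (s β : ℝ) (hs : 0 < s)
    (hβ : β = (#{j | y j ≠ 0} : ℝ) / m) :
    (cnt k m n y : ℝ) * s ^ (k * m) ≤ (Real.exp 1 * (k * m + 1)) ^ 3 * (k * m).factorial *
      ((ff s + 2 * ff (s * (1 - 3 * β / 2))) / 3) ^ n := by
  have hm' : (0:ℝ) < m := by exact_mod_cast hm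
  have hk' : (0:ℝ) < k := by exact_mod_cast hk
  set c : ZMod 3 → ℕ := fun i => #{j | y j = i} with hc
  have hcs : c 0 + c 1 + c 2 = m := by
    rw [← zmod3_sum]
    have := Finset.card_eq_sum_card_fiberwise (s := (univ : Finset (Fin m))) (f := y) (t := univ) (by simp)
    rw [← this]; simp
  have hcs' : (c 0 : ℝ) + c 1 + c 2 = m := by exact_mod_cast hcs
  have hc0 : (#{j | y j ≠ 0} : ℝ) = c 1 + c 2 := by
    have h1 := Finset.card_filter_add_card_filter_not (s := (univ : Finset (Fin m))) (fun j => y j = 0)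
    rw [card_univ, Fintype.card_fin] at h1
    have h2 : (c 0 : ℝ) + (#{j | ¬ y j = 0} : ℝ) = m := by exact_mod_cast h1
    change (#{j | ¬ y j = 0} : ℝ) = _
    linarith
  have h := cnt3_aux k m n y (fun i => s * c i / m) (fun i => by positivity)
  have e1 : s * c 0 / m + s * c 1 / m + s * c 2 / m = s := by
    rw [← add_div, ← add_div, ← mul_add, ← mul_add, hcs']; field_simp
  have e2 : s * c 0 / m - (s * c 1 / m + s * c 2 / m) / 2 = s * (1 - 3 * β / 2) := by
    have : s * c 0 / m = s - (s * c 1 / m + s * c 2 / m) := by linarith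
    rw [this, hβ, hc0]; field_simp; ring
  have e3 : s * c 0 / m = s * (1 - β) := by
    have : s * c 0 / m = s - (s * c 1 / m + s * c 2 / m) := by linarith
    rw [this, hβ, hc0]; field_simp
  rw [e1, e2, e3] at h
  have e4 : (Real.exp s + 2 * Real.exp (s * (1 - 3 * β / 2))) / 3 - 1 - s * (1 - β)
     = (ff s + 2 * ff (s * (1 - 3 * β / 2))) / 3 := by unfold ff; ring
  rw [e4] at h
  have hΦ : 0 ≤ (ff s + 2 * ff (s * (1 - 3 * β / 2))) / 3 := by
    have : ∀ z, 0 ≤ ff z := fun z => by unfold ff; linarith [Real.add_one_le_exp z]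
    have h1 := this s
    have h2 := this (s * (1 - 3 * β / 2))
    positivity
  set Φ := (ff s + 2 * ff (s * (1 - 3 * β / 2))) / 3
  change (cnt k m n y : ℝ) * ∏ i, (s * c i / m) ^ (k * c i) ≤ (∏ i, ((k * c i).factorial : ℝ)) * Φ ^ n at h
  have e5 : ∀ i, (s * (c i:ℝ) / m) ^ (k * c i) * ((k:ℝ) * m) ^ (k * c i) = s ^ (k * c i) * (((k * c i : ℕ)):ℝ) ^ (k * c i) := by
    intro i
    rw [← mul_pow, ← mul_pow]
    congr 1
    push_cast
    field_simp
  have hB : ∀ i, 0 < (((k * c i : ℕ)):ℝ) ^ (k * c i) := by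
    intro i
    rcases Nat.eq_zero_or_pos (k * c i) with h | h
    · rw [h]; simp
    · have : (0:ℝ) < ((k * c i : ℕ):ℝ) := by exact_mod_cast h
      positivity
  have e6 : ∀ z : ℝ, z ^ (k * m) = z ^ (k * c 0) * z ^ (k * c 1) * z ^ (k * c 2) := by
    intro z
    rw [← pow_add, ← pow_add, ← mul_add, ← mul_add, hcs]
  have e7 : ∀ i, ((k * c i).factorial : ℝ) * Real.exp ((k * c i : ℕ):ℝ) ≤ Real.exp 1 * (k * m + 1) * (((k * c i : ℕ)):ℝ) ^ (k * c i) := by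
    intro i
    refine (fact_upper _).trans ?_
    have h1 : c i ≤ m := by
      have := Finset.card_le_univ ({j | y j = i} : Finset (Fin m))
      rwa [Fintype.card_fin] at this
    have h2 : (c i : ℝ) ≤ m := by exact_mod_cast h1
    have h3 : ((k * c i : ℕ):ℝ) ≤ k * m := by push_cast; gcongr
    have := hB i
    gcongr
  have e8 := pow_le_fact_exp (k * m)
  have e9 : Real.exp ((k * m : ℕ):ℝ) = Real.exp ((k * c 0 : ℕ):ℝ) * Real.exp ((k * c 1 : ℕ):ℝ) * Real.exp ((k * c 2 : ℕ):ℝ) := by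
    rw [← Real.exp_add, ← Real.exp_add]
    congr 1
    norm_cast
    rw [← mul_add, ← mul_add, hcs]
  rw [e9] at e8
  rw [zmod3_prod, zmod3_prod] at h
  have E0 := e5 0
  have E1 := e5 1
  have E2 := e5 2
  have F0 := e7 0
  have F1 := e7 1
  have F2 := e7 2
  have B0 := hB 0
  have B1 := hB 1
  have B2 := hB 2
  set b0 := (((k * c 0 : ℕ)):ℝ) ^ (k * c 0)
  set b1 := (((k * c 1 : ℕ)):ℝ) ^ (k * c 1)
  set b2 := (((k * c 2 : ℕ)):ℝ) ^ (k * c 2)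
  refine le_of_mul_le_mul_right ?_ (mul_pos (mul_pos B0 B1) B2)
  calc (cnt k m n y : ℝ) * s ^ (k * m) * (b0 * b1 * b2)
      = cnt k m n y * ((s ^ (k * c 0) * b0) * (s ^ (k * c 1) * b1) * (s ^ (k * c 2) * b2)) := by rw [e6 s]; ring
    _ = cnt k m n y * ((s * c 0 / m) ^ (k * c 0) * (s * c 1 / m) ^ (k * c 1) * (s * c 2 / m) ^ (k * c 2)) * ((k:ℝ) * m) ^ (k * m) := by
      rw [← E0, ← E1, ← E2, e6 ((k:ℝ) * m)]; ring
    _ ≤ (((k * c 0).factorial : ℝ) * (k * c 1).factorial * (k * c 2).factorial) * Φ ^ n * ((k:ℝ) * m) ^ (k * m) := by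
      gcongr
    _ ≤ (((k * c 0).factorial : ℝ) * (k * c 1).factorial * (k * c 2).factorial) * Φ ^ n * ((k * m).factorial * (Real.exp ((k * c 0 : ℕ):ℝ) * Real.exp ((k * c 1 : ℕ):ℝ) * Real.exp ((k * c 2 : ℕ):ℝ))) := by
      have : ((k * m : ℕ):ℝ) = (k:ℝ) * m := by push_cast; rfl
      rw [this] at e8
      gcongr
    _ = (((k * c 0).factorial : ℝ) * Real.exp ((k * c 0 : ℕ):ℝ)) * (((k * c 1).factorial : ℝ) * Real.exp ((k * c 1 : ℕ):ℝ))
         * (((k * c 2).factorial : ℝ) * Real.exp ((k * c 2 : ℕ):ℝ)) * ((k * m).factorial * Φ ^ n) := by ring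
    _ ≤ (Real.exp 1 * (k * m + 1) * b0) * (Real.exp 1 * (k * m + 1) * b1) * (Real.exp 1 * (k * m + 1) * b2) * ((k * m).factorial * Φ ^ n) := by
      gcongr
    _ = _ := by ring

theorem cnt2_bound (k m n j : ℕ) (y : Fin m → ZMod 3) (s X : ℝ) (hs : 0 < s) (hX : 0 ≤ X)
    (hj : #{i | y i ≠ 0} = j) :
    (cnt k m n y : ℝ) * s ^ (k * m) * (X ^ (k * j) * ((k * m).choose (k * j))) ≤
      (k * m).factorial * s ^ (k * j) * (Real.exp s * (Real.exp X - X) - 1 - s) ^ n := by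
  have h := cnt2_aux k m n y s X hs.le hX
  have h1 := Finset.card_filter_add_card_filter_not (s := (univ : Finset (Fin m))) (fun j => y j = 0)
  rw [card_univ, Fintype.card_fin] at h1
  have h2 : #{i | y i = 0} + j = m := by rw [← hj]; exact h1
  rw [hj] at h
  set i := #{i | y i = 0}
  have hle : k * j ≤ k * m := by rw [← h2]; exact Nat.mul_le_mul_left _ (by omega)
  have h3 := Nat.choose_mul_factorial_mul_factorial hle
  have h4 : k * m - k * j = k * i := by rw [← h2, mul_add]; omega
  rw [h4] at h3
  have h5 : s ^ (k * m) = s ^ (k * i) * s ^ (k * j) := by rw [← pow_add, ← mul_add, h2]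
  rw [← h3, h5]
  push_cast
  have h6 := mul_le_mul_of_nonneg_left h (show 0 ≤ s ^ (k * j) * ((k * m).choose (k * j)) by positivity)
  refine le_trans (le_of_eq ?_) (h6.trans (le_of_eq ?_)) <;> ring

end

section
open Finset

/-- entropy -/
noncomputable def hh (β : ℝ) : ℝ := -((1 - β) * Real.log (1 - β)) - β * Real.log (β / 2)

theorem exp_nat_gt (n : ℕ) (hn : n ≠ 0) : (2.718:ℝ) ^ n < Real.exp n := by
  have := Real.exp_one_gt_d9
  rw [← mul_one (n:ℝ), Real.exp_nat_mul]
  exact pow_lt_pow_left₀ (by linarith) (by norm_num) hn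

theorem exp_neg_one_gt : (0.3678:ℝ) < Real.exp (-1) := by
  have := Real.exp_one_lt_d9
  rw [Real.exp_neg, lt_inv_comm₀ (by norm_num) (Real.exp_pos _)]
  refine this.trans_le ?_
  norm_num

theorem exp_75 : (1800:ℝ) < Real.exp 7.5 := by
  have h := exp_nat_gt 15 (by norm_num)
  have h2 : Real.exp ((15:ℕ):ℝ) = Real.exp 7.5 ^ 2 := by rw [← Real.exp_nat_mul]; norm_num
  rw [h2] at h
  refine lt_of_pow_lt_pow_left₀ 2 (Real.exp_pos _).le (lt_of_le_of_lt ?_ h)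
  norm_num

theorem log_le_of_pow (x : ℝ) (hx : 0 < x) (p q : ℕ) (hq : q ≠ 0) (hp : p ≠ 0) (h : x ^ q ≤ 2.718 ^ p) :
    Real.log x ≤ p / q := by
  have h1 := (h.trans_lt (exp_nat_gt p hp)).le
  have h2 := Real.log_le_log (by positivity) h1
  rw [Real.log_exp, Real.log_pow] at h2
  have : (0:ℝ) < q := by exact_mod_cast Nat.pos_of_ne_zero hq
  rw [le_div_iff₀ this]; linarith

theorem ff_nonneg (z : ℝ) : 0 ≤ ff z := by unfold ff; linarith [Real.add_one_le_exp z]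

theorem ff_ge {s : ℝ} (hs : 15 ≤ s) : 0.99 * Real.exp s ≤ ff s := by
  have h := exp_nat_gt 15 (by norm_num)
  have h1 : Real.exp s = Real.exp ((15:ℕ):ℝ) * Real.exp (s - 15) := by rw [← Real.exp_add]; norm_num
  have h2 := Real.add_one_le_exp (s - 15)
  have h3 : 1000 * (1 + s) ≤ Real.exp s := by
    rw [h1]
    have h4 : (100000:ℝ) ≤ Real.exp ((15:ℕ):ℝ) := le_trans (by norm_num) h.le
    calc 1000 * (1 + s) ≤ 100000 * (s - 15 + 1) := by linarith
      _ ≤ _ := by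
        apply mul_le_mul h4 h2 (by linarith) (by positivity)
  unfold ff
  linarith

theorem ff_le_sq (v : ℝ) : ff v ≤ v ^ 2 * Real.exp |v| := by
  have h1 : 1 - v ≤ Real.exp (-v) := by linarith [Real.add_one_le_exp (-v)]
  have h2 := Real.add_one_le_exp v
  have hE := Real.exp_pos v
  have h3 : Real.exp v * (1 - v) ≤ 1 := by
    have := mul_le_mul_of_nonneg_left h1 hE.le
    rwa [← Real.exp_add, add_neg_cancel, Real.exp_zero] at this
  unfold ff
  rcases le_total 0 v with h | h
  · rw [abs_of_nonneg h]
    nlinarith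
  · rw [abs_of_nonpos h]
    have h4 : 1 ≤ Real.exp (-v) := Real.one_le_exp (by linarith)
    nlinarith

theorem ff_ratio {v s : ℝ} (hv : 0 ≤ v) (hvs : v ≤ s) : ff v ≤ ff s * Real.exp (v - s) := by
  have h1 : Real.exp s = Real.exp v * Real.exp (s - v) := by rw [← Real.exp_add]; ring_nf
  have h2 : Real.exp (s - v) * Real.exp (v - s) = 1 := by rw [← Real.exp_add]; simp
  have h3 := Real.add_one_le_exp (s - v)
  have hE := Real.exp_pos (v - s)
  unfold ff
  rw [h1]
  have h4 : (Real.exp v * Real.exp (s - v) - 1 - s) * Real.exp (v - s) = Real.exp v - (1 + s) * Real.exp (v - s) := by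
    linear_combination Real.exp v * h2
  rw [h4]
  have h5 : 1 + s ≤ (1 + v) * Real.exp (s - v) := by nlinarith
  have h6 := mul_le_mul_of_nonneg_right h5 hE.le
  have h7 : (1 + v) * Real.exp (s - v) * Real.exp (v - s) = 1 + v := by rw [mul_assoc, h2, mul_one]
  linarith

theorem hh_le {β : ℝ} (h0 : 0 < β) (h1 : β < 1) : hh β ≤ β * (1 + Real.log 2 - Real.log β) := by
  unfold hh
  rw [Real.log_div h0.ne' (by norm_num)]
  have h2 := Real.one_sub_inv_le_log_of_pos (show 0 < 1 - β by linarith)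
  have h3 : (1 - β) * (1 - (1-β)⁻¹) = -β := by
    have : 1 - β ≠ 0 := by linarith
    field_simp; ring
  have h4 := mul_le_mul_of_nonneg_left h2 (show 0 ≤ 1 - β by linarith)
  rw [h3] at h4
  linarith

theorem hmono {β b : ℝ} (h0 : 0 < β) (h1 : β ≤ b) (h2 : b ≤ 1) :
    β * (1 + Real.log 2 - Real.log β) ≤ b * (1 + Real.log 2 - Real.log b) := by
  have hb : 0 < b := by linarith
  have h3 := Real.log_le_sub_one_of_pos (show 0 < b / β by positivity)
  rw [Real.log_div hb.ne' h0.ne'] at h3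
  have h4 := mul_le_mul_of_nonneg_left h3 h0.le
  have h5 : β * (b / β - 1) = b - β := by field_simp
  rw [h5] at h4
  have h6 : 0 ≤ Real.log 2 - Real.log b := by
    have := Real.log_le_log hb (show b ≤ 2 by linarith)
    linarith
  nlinarith

theorem Gconv {t T : ℝ} (h0 : 0 < t) (h1 : t ≤ T) :
    (1 + 2 * Real.exp (-(3/2 * t))) / 3 ≤ ((1 + 2 * Real.exp (-(3/2 * T))) / 3) ^ (t / T) := by
  have hT : 0 < T := by linarith
  have h2 := (Real.concaveOn_rpow (p := t / T) (by positivity) (by rw [div_le_one hT]; exact h1)).2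
    (show (1:ℝ) ∈ Set.Ici 0 by simp) (show Real.exp (-(3/2 * T)) ∈ Set.Ici (0:ℝ) from (Real.exp_pos _).le)
    (show (0:ℝ) ≤ 1/3 by norm_num) (show (0:ℝ) ≤ 2/3 by norm_num) (by norm_num)
  simp only [smul_eq_mul, Real.one_rpow] at h2
  rw [← Real.exp_mul] at h2
  have h3 : -(3/2 * T) * (t / T) = -(3/2*t) := by field_simp
  rw [h3] at h2
  refine le_trans (le_of_eq ?_) (h2.trans (le_of_eq ?_))
  · ring
  · congr 1; ring

theorem piece {s β a T c : ℝ} (hs : 15 ≤ s) (ha : 0 < a) (h1 : a ≤ s * β) (h2 : s * β ≤ T) (hT : T ≤ 5)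
    (hc : 1 + Real.log (30 / a) ≤ 15 * c)
    (hG : (1 + 2 * Real.exp (-(3/2 * T))) / 3 ≤ Real.exp (-(c * T))) :
    (1 + 2 * Real.exp (-(3/2 * (s * β)))) / 3 ≤ Real.exp (-hh β) := by
  set t := s * β with ht
  have ht0 : 0 < t := by linarith
  have hT0 : 0 < T := by linarith
  have hβ : 0 < β := by
    by_contra h
    have : s * β ≤ 0 := mul_nonpos_of_nonneg_of_nonpos (by linarith) (by linarith)
    linarith
  have hβt : β ≤ t / 15 := by
    rw [le_div_iff₀ (by norm_num), ht]; nlinarith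
  have h3 := Gconv ht0 h2
  have h4 : ((1 + 2 * Real.exp (-(3/2 * T))) / 3) ^ (t / T) ≤ Real.exp (-(c * T)) ^ (t / T) := by
    apply Real.rpow_le_rpow _ hG (by positivity)
    have := Real.exp_pos (-(3/2*T))
    positivity
  rw [← Real.exp_mul] at h4
  refine h3.trans (h4.trans (Real.exp_le_exp.mpr ?_))
  have h5 : -(c * T) * (t / T) = -(c * t) := by field_simp
  rw [h5]
  have h6 := hh_le hβ (by linarith)
  have h7 := hmono hβ hβt (by linarith)
  have h8 : 1 + Real.log 2 - Real.log (t / 15) ≤ 1 + Real.log (30 / a) := by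
    rw [Real.log_div ht0.ne' (by norm_num), Real.log_div (by norm_num) ha.ne',
      show (30:ℝ) = 2 * 15 by norm_num, Real.log_mul (show (2:ℝ) ≠ 0 by norm_num) (show (15:ℝ) ≠ 0 by norm_num)]
    have := Real.log_le_log ha h1
    linarith
  have h9 : t / 15 * (1 + Real.log 2 - Real.log (t / 15)) ≤ t / 15 * (15 * c) := by
    gcongr; linarith
  linarith

theorem exp_neg_le {x : ℝ} (n : ℕ) (hn : n ≠ 0) (hx : x = n) : Real.exp (-x) ≤ 1 / 2.718 ^ n := by
  rw [Real.exp_neg, hx, ← one_div]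
  exact one_div_le_one_div_of_le (by positivity) (exp_nat_gt n hn).le

theorem keyB {s β : ℝ} (hs : 15 ≤ s) (h1 : 1/20 ≤ s * β) (hβ3 : β ≤ 1/3) :
    (1 + 2 * Real.exp (-(3/2 * (s * β)))) / 3 ≤ Real.exp (-hh β) := by
  have he := exp_neg_one_gt
  have e75 := exp_75
  rcases le_total (s * β) 2 with h2 | h2
  · refine piece (a := 1/20) (T := 2) (c := 1/2) hs (by norm_num) h1 h2 (by norm_num) ?_ ?_
    · have := log_le_of_pow 600 (by norm_num) 13 2 (by norm_num) (by norm_num) (by norm_num)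
      norm_num at this ⊢
      linarith
    · have := exp_neg_le (x := 3/2*2) 3 (by norm_num) (by norm_num)
      norm_num at this ⊢
      norm_num at he
      linarith
  rcases le_total (s * β) 4 with h3 | h3
  · refine piece (a := 2) (T := 4) (c := 1/4) hs (by norm_num) h2 h3 (by norm_num) ?_ ?_
    · have := log_le_of_pow 15 (by norm_num) 11 4 (by norm_num) (by norm_num) (by norm_num)
      norm_num at this ⊢
      linarith
    · have := exp_neg_le (x := 3/2*4) 6 (by norm_num) (by norm_num)
      norm_num at this ⊢
      norm_num at he
      linarith
  have e75' : Real.exp (-(15/2)) ≤ 1 / 1800 := by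
    rw [Real.exp_neg, ← one_div]
    apply one_div_le_one_div_of_le (by norm_num)
    have : (7.5:ℝ) = 15/2 := by norm_num
    rw [← this]; exact e75.le
  rcases le_total (s * β) 5 with h4 | h4
  · refine piece (a := 4) (T := 5) (c := 0.21) hs (by norm_num) h3 h4 (by norm_num) ?_ ?_
    · have := log_le_of_pow (15/2) (by norm_num) 17 8 (by norm_num) (by norm_num) (by norm_num)
      norm_num at this ⊢
      linarith
    · have e2 : Real.exp (-(0.21*5)) = Real.exp (-1) * Real.exp (-0.05) := by rw [← Real.exp_add]; norm_num
      have e3 := Real.add_one_le_exp (-0.05)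
      have e4 : (0.3678 * 0.95 : ℝ) ≤ Real.exp (-1) * Real.exp (-0.05) := by
        apply mul_le_mul he.le (by linarith) (by norm_num) (by positivity)
      rw [e2]
      have e5 : (3/2*5:ℝ) = 15/2 := by norm_num
      rw [e5]
      norm_num at e4 ⊢
      linarith
  have hβ : 0 < β := by
    by_contra h
    have : s * β ≤ 0 := mul_nonpos_of_nonneg_of_nonpos (by linarith) (by linarith)
    linarith
  have h6 := hh_le hβ (by linarith)
  have h7 := hmono hβ hβ3 (by norm_num)
  have h8 : 1 + Real.log 2 - Real.log (1/3) ≤ 3 := by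
    rw [one_div, Real.log_inv]
    have := log_le_of_pow 6 (by norm_num) 9 5 (by norm_num) (by norm_num) (by norm_num)
    have e : Real.log 6 = Real.log 2 + Real.log 3 := by rw [← Real.log_mul (by norm_num) (by norm_num)]; norm_num
    norm_num at this ⊢
    linarith
  have h9 : Real.exp (-1) ≤ Real.exp (-hh β) := Real.exp_le_exp.mpr (by linarith)
  have h10 : Real.exp (-(3/2 * (s * β))) ≤ Real.exp (-(15/2)) := Real.exp_le_exp.mpr (by linarith)
  norm_num at he
  linarith

theorem xlogx {x c : ℝ} (hx : 0 ≤ x) (hc : x ≤ c ^ 2) (hc0 : 0 < c) : (x - 1) + (x - 1) ^ 2 / (c + 1) ^ 2 ≤ x * Real.log x := by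
  rcases hx.eq_or_lt with h | h
  · rw [← h]; simp
    rw [inv_le_one_iff₀]; right; nlinarith
  set r := Real.sqrt x with hr
  have hr0 : 0 < r := Real.sqrt_pos.mpr h
  have hrx : x = r ^ 2 := (Real.sq_sqrt hx).symm
  have hrc : r ≤ c := by rw [hr]; exact Real.sqrt_le_iff.mpr ⟨hc0.le, hc⟩
  have h1 := Real.one_sub_inv_le_log_of_pos hr0
  have h2 : (x - 1) ^ 2 / (c + 1) ^ 2 ≤ (r - 1) ^ 2 := by
    rw [div_le_iff₀ (by positivity), hrx]
    have : (r ^ 2 - 1) ^ 2 = (r - 1) ^ 2 * (r + 1) ^ 2 := by ring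
    rw [this]
    gcongr
  have h3 : x * Real.log x = 2 * r ^ 2 * Real.log r := by rw [hrx, Real.log_pow]; push_cast; ring
  have h4 : 2 * r ^ 2 * (1 - r⁻¹) ≤ 2 * r ^ 2 * Real.log r := by gcongr
  have h5 : 2 * r ^ 2 * (1 - r⁻¹) = 2 * r ^ 2 - 2 * r := by field_simp
  rw [h3]
  nlinarith

theorem keyA {s β : ℝ} (hs : 15 ≤ s) (h1 : 1/3 ≤ β) (h2 : β ≤ 1) :
    ff (s * (1 - 3 * β / 2)) ≤ 0.18 * (1 - 3 * β / 2) ^ 2 * ff s ∧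
    (1 + 2 * (0.18 * (1 - 3 * β / 2) ^ 2)) / 3 ≤ Real.exp (-hh β) := by
  set θ := 1 - 3 * β / 2 with hθ
  have t1 : θ ≤ 1/2 := by linarith
  have t2 : -(1/2) ≤ θ := by linarith
  constructor
  · have h3 := ff_le_sq (s * θ)
    have h4 : |s * θ| ≤ s / 2 := by
      rw [abs_mul, abs_of_nonneg (by linarith : (0:ℝ) ≤ s)]
      have : |θ| ≤ 1/2 := abs_le.mpr ⟨t2, t1⟩
      nlinarith
    have h5 : Real.exp |s * θ| ≤ Real.exp (s / 2) := Real.exp_le_exp.mpr h4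
    have h6 := ff_ge hs
    have h7 : Real.exp s = Real.exp (s/2) * Real.exp (s/2) := by rw [← Real.exp_add]; ring_nf
    have h8 : 6 * s ^ 2 ≤ Real.exp (s / 2) := by
      have a1 : Real.exp (s / 2) = Real.exp 7.5 * Real.exp ((s - 15) / 4) ^ 2 := by
        rw [← Real.exp_nat_mul, ← Real.exp_add]; congr 1; push_cast; ring
      have a2 := Real.add_one_le_exp ((s - 15) / 4)
      have a3 : ((s - 15) / 4 + 1) ^ 2 ≤ Real.exp ((s - 15) / 4) ^ 2 := by
        apply pow_le_pow_left₀ (by linarith) a2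
      rw [a1]
      calc 6 * s ^ 2 ≤ 1800 * ((s - 15) / 4 + 1) ^ 2 := by nlinarith
        _ ≤ _ := by
          apply mul_le_mul exp_75.le a3 (by positivity) (by positivity)
    calc ff (s * θ) ≤ (s * θ) ^ 2 * Real.exp (s / 2) := h3.trans (by gcongr)
      _ = θ ^ 2 * (s ^ 2 * Real.exp (s/2)) := by ring
      _ ≤ θ ^ 2 * (0.18 * (0.99 * Real.exp s)) := by
        refine mul_le_mul_of_nonneg_left ?_ (sq_nonneg θ)
        rw [h7]
        have := Real.exp_pos (s/2)
        nlinarith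
      _ ≤ θ ^ 2 * (0.18 * ff s) := by gcongr
      _ = _ := by ring
  · have b1 : 1 - β = (1 + 2 * θ) / 3 := by rw [hθ]; ring
    have b2 : β / 2 = (1 - θ) / 3 := by rw [hθ]; ring
    have b3 : β = 2 * (1 - θ) / 3 := by rw [hθ]; ring
    have L1 : ∀ x : ℝ, 0 ≤ x → x / 3 * Real.log (x / 3) = (x * Real.log x - x * Real.log 3) / 3 := by
      intro x hx
      rcases hx.eq_or_lt with h | h
      · rw [← h]; simp
      · rw [Real.log_div h.ne' (by norm_num)]; ring
    have hD : -hh β = ((1 + 2 * θ) * Real.log (1 + 2 * θ) + 2 * ((1 - θ) * Real.log (1 - θ))) / 3 - Real.log 3 := by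
      unfold hh
      have c1 := L1 (1 + 2 * θ) (by linarith)
      have c2 := L1 (1 - θ) (by linarith)
      rw [b1, b2]
      have : β * Real.log ((1 - θ)/3) = 2 * ((1 - θ) / 3 * Real.log ((1 - θ)/3)) := by rw [b3]; ring_nf
      rw [this, c1, c2]
      ring
    have x1 := xlogx (x := 1 + 2 * θ) (c := 1.42) (by linarith) (by norm_num; linarith) (by norm_num)
    have x2 := xlogx (x := 1 - θ) (c := 1.23) (by linarith) (by norm_num; linarith) (by norm_num)
    have hE : 0.36 * θ ^ 2 - Real.log 3 ≤ -hh β := by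
      rw [hD]
      ring_nf at x1 x2 ⊢
      norm_num at x1 x2 ⊢
      nlinarith [sq_nonneg θ]
    have h3 : Real.exp (0.36 * θ ^ 2 - Real.log 3) ≤ Real.exp (-hh β) := Real.exp_le_exp.mpr hE
    rw [Real.exp_sub, Real.exp_log (by norm_num)] at h3
    have h4 := Real.add_one_le_exp (0.36 * θ ^ 2)
    refine le_trans ?_ h3
    gcongr
    linarith

theorem keyAB {s β : ℝ} (hs : 15 ≤ s) (h1 : 1/20 ≤ s * β) (h2 : β ≤ 1) :
    ∃ g, 0 ≤ g ∧ (ff s + 2 * ff (s * (1 - 3 * β / 2))) / 3 ≤ ff s * g ∧ g ≤ Real.exp (-hh β) ∧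
      g ≤ (1 + 2 * Real.exp (-(3/40))) / 3 := by
  have hf := ff_pos (show 0 < s by linarith)
  have hf := hf.le
  rcases le_total β (1/3) with h3 | h3
  · refine ⟨_, ?_, ?_, keyB hs h1 h3, ?_⟩
    · positivity
    · have h4 := ff_ratio (v := s * (1 - 3 * β / 2)) (s := s) (by apply mul_nonneg <;> linarith) (by nlinarith)
      have e : s * (1 - 3 * β / 2) - s = -(3/2 * (s * β)) := by ring
      rw [e] at h4
      linarith
    · have : Real.exp (-(3/2 * (s * β))) ≤ Real.exp (-(3/40)) := Real.exp_le_exp.mpr (by linarith)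
      linarith
  · have h4 := keyA hs h3 h2
    refine ⟨_, ?_, ?_, h4.2, ?_⟩
    · positivity
    · linarith [h4.1]
    · have := Real.add_one_le_exp (-(3/40:ℝ))
      have : (1 - 3 * β / 2) ^ 2 ≤ 1 := by nlinarith
      linarith

end

section
open Finset

theorem prod_supp (m j : ℕ) (y : Fin m → ZMod 3) (hy : #{i | y i ≠ 0} = j) (a b : ℝ) :
    ∏ i, (if y i = 0 then a else b) = a ^ (m - j) * b ^ j := by
  rw [Finset.prod_ite, Finset.prod_const, Finset.prod_const]
  have h1 := Finset.card_filter_add_card_filter_not (s := (univ : Finset (Fin m))) (fun j => y j = 0)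
  rw [card_univ, Fintype.card_fin] at h1
  have h2 : #{i | ¬ y i = 0} = j := hy
  rw [h2] at h1 ⊢
  congr 2
  omega

theorem cardY (m j : ℕ) (hj : 1 ≤ j) (hjm : j ≤ m) :
    (#{y : Fin m → ZMod 3 | #{i | y i ≠ 0} = j} : ℝ) ≤ Real.exp (m * hh (j / m)) := by
  have hm : (0:ℝ) < m := by exact_mod_cast (by omega : 0 < m)
  have hj' : (0:ℝ) < j := by exact_mod_cast (by omega : 0 < j)
  have hjm' : (j:ℝ) ≤ m := by exact_mod_cast hjm
  set β : ℝ := j / m with hβ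
  have hβ0 : 0 < β := by positivity
  have hβ1 : β ≤ 1 := by rw [hβ, div_le_one hm]; exact hjm'
  have h1 : ∑ y : Fin m → ZMod 3, ∏ i, (if y i = 0 then 1 - β else β / 2) = 1 := by
    have := Finset.prod_univ_sum (fun _ : Fin m => (univ : Finset (ZMod 3))) (fun _ t => if t = 0 then 1 - β else β / 2)
    rw [Fintype.piFinset_univ] at this
    rw [← this]
    apply Finset.prod_eq_one
    intro i _
    rw [zmod3_sum]
    simp only [if_true, show (1 : ZMod 3) ≠ 0 by decide, show (2 : ZMod 3) ≠ 0 by decide, if_false]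
    ring
  have h2 : ∑ y : Fin m → ZMod 3 with #{i | y i ≠ 0} = j, ∏ i, (if y i = 0 then 1 - β else β / 2) ≤ 1 := by
    refine le_trans (Finset.sum_le_sum_of_subset_of_nonneg (filter_subset _ _) ?_) h1.le
    intro y _ _
    apply Finset.prod_nonneg
    intro i _
    split_ifs <;> linarith
  have h3 : ∀ y ∈ ({y : Fin m → ZMod 3 | #{i | y i ≠ 0} = j} : Finset _), ∏ i, (if y i = 0 then 1 - β else β / 2) = (1 - β) ^ (m - j) * (β / 2) ^ j := by
    intro y hy
    exact prod_supp m j y (mem_filter.mp hy).2 _ _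
  rw [Finset.sum_congr rfl h3, Finset.sum_const, nsmul_eq_mul] at h2
  have h4 : (1 - β) ^ (m - j) * (β / 2) ^ j = Real.exp (-(m * hh β)) := by
    have e1 : (β / 2) ^ j = Real.exp (j * Real.log (β / 2)) := by
      rw [Real.exp_nat_mul, Real.exp_log (by positivity)]
    have e2 : (1 - β) ^ (m - j) = Real.exp ((m - j : ℕ) * Real.log (1 - β)) := by
      rcases hjm.eq_or_lt with h | h
      · rw [h]; simp
      · have : 0 < 1 - β := by
          have : (j:ℝ) < m := by exact_mod_cast h
          rw [sub_pos, hβ, div_lt_one hm]; exact this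
        rw [Real.exp_nat_mul, Real.exp_log this]
    rw [e1, e2, ← Real.exp_add]
    congr 1
    have e3 : (m:ℝ) * β = j := by rw [hβ]; field_simp
    unfold hh
    rw [Nat.cast_sub hjm, ← e3]
    ring
  rw [h4, Real.exp_neg, ← div_eq_mul_inv, div_le_one (Real.exp_pos _)] at h2
  exact h2

theorem large_j (k m n j : ℕ) (s L : ℝ) (hk : 0 < k) (hs : 15 ≤ s) (hj : 1 ≤ j) (hjm : j ≤ m) (hmn : m ≤ n)
    (hL : 0 ≤ L) (hlow : ff s ^ n / s ^ (k * m) * (k * m).factorial ≤ M (k * m) n * L)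
    (hb : 1 / 20 ≤ s * (j / m)) :
    ∑ y : Fin m → ZMod 3 with #{i | y i ≠ 0} = j, (cnt k m n y : ℝ)
      ≤ (Real.exp 1 * (k * m + 1)) ^ 3 * L * M (k * m) n * ((1 + 2 * Real.exp (-(3/40))) / 3) ^ (n - m) := by
  have hm : 0 < m := by omega
  have hm' : (0:ℝ) < m := by exact_mod_cast hm
  have hjm' : (j:ℝ) ≤ m := by exact_mod_cast hjm
  obtain ⟨g, g0, g1, g2, g3⟩ := keyAB hs hb (by rw [div_le_one hm']; exact hjm')
  have hs0 : 0 < s := by linarith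
  have hf := ff_pos hs0
  have h1 : ∀ y ∈ ({y : Fin m → ZMod 3 | #{i | y i ≠ 0} = j} : Finset _),
      (cnt k m n y : ℝ) ≤ (Real.exp 1 * (k * m + 1)) ^ 3 * L * M (k * m) n * g ^ n := by
    intro y hy
    have h2 := cnt3_bound k m n hk hm y s (j / m) hs0 (by rw [(mem_filter.mp hy).2])
    have h3 : ((ff s + 2 * ff (s * (1 - 3 * ((j:ℝ) / m) / 2))) / 3) ^ n ≤ (ff s * g) ^ n := by
      apply pow_le_pow_left₀ _ g1
      have := ff_nonneg (s * (1 - 3 * ((j:ℝ) / m) / 2))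
      positivity
    refine le_of_mul_le_mul_right ?_ (pow_pos hs0 (k * m))
    calc _ ≤ (Real.exp 1 * (k * m + 1)) ^ 3 * (k * m).factorial * (ff s * g) ^ n := h2.trans (by gcongr)
      _ = (Real.exp 1 * (k * m + 1)) ^ 3 * (ff s ^ n / s ^ (k * m) * (k * m).factorial) * g ^ n * s ^ (k * m) := by
        rw [mul_pow (ff s)]; field_simp
      _ ≤ (Real.exp 1 * (k * m + 1)) ^ 3 * (M (k * m) n * L) * g ^ n * s ^ (k * m) := by gcongr
      _ = _ := by ring
  have h4 := Finset.sum_le_sum h1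
  rw [Finset.sum_const, nsmul_eq_mul] at h4
  refine h4.trans ?_
  have h5 := cardY m j hj hjm
  have h6 : g ^ n = g ^ m * g ^ (n - m) := by rw [← pow_add]; congr 1; omega
  have h7 : g ^ m ≤ Real.exp (-(m * hh (j / m))) := by
    rw [← mul_neg, Real.exp_nat_mul]
    exact pow_le_pow_left₀ g0 g2 m
  have h8 : (#{y : Fin m → ZMod 3 | #{i | y i ≠ 0} = j} : ℝ) * g ^ m ≤ 1 := by
    calc _ ≤ Real.exp (m * hh (j / m)) * Real.exp (-(m * hh (j / m))) := by gcongr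
      _ = 1 := by rw [← Real.exp_add]; simp
  have h9 : g ^ (n - m) ≤ ((1 + 2 * Real.exp (-(3/40))) / 3) ^ (n - m) := pow_le_pow_left₀ g0 g3 _
  calc _ = (Real.exp 1 * (k * m + 1)) ^ 3 * L * M (k * m) n * ((#{y : Fin m → ZMod 3 | #{i | y i ≠ 0} = j} : ℝ) * g ^ m * g ^ (n - m)) := by
        rw [h6]; ring
    _ ≤ (Real.exp 1 * (k * m + 1)) ^ 3 * L * M (k * m) n * (1 * ((1 + 2 * Real.exp (-(3/40))) / 3) ^ (n - m)) := by
        gcongr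
    _ = _ := by ring

end

section
open Finset

theorem pow_le_choose' (r : ℕ) : ∀ N : ℕ, r ≤ N → ((N:ℝ) / r) ^ r ≤ (N.choose r : ℝ) := by
  induction r with
  | zero => intro N _; simp
  | succ r ih =>
    intro N hN
    obtain ⟨N, rfl⟩ : ∃ N', N = N' + 1 := ⟨N - 1, by omega⟩
    have h1 := Nat.add_one_mul_choose_eq N r
    have h2 : ((N + 1 : ℕ) : ℝ) * N.choose r = ((N+1).choose (r+1) : ℝ) * (r + 1 : ℕ) := by exact_mod_cast h1
    have h3 := ih N (by omega)
    have hr : (0:ℝ) < (r + 1 : ℕ) := by positivity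
    have h4 : ((N+1).choose (r+1) : ℝ) = ((N + 1 : ℕ) : ℝ) / (r + 1 : ℕ) * N.choose r := by
      field_simp; linarith
    rw [h4, pow_succ, mul_comm]
    refine mul_le_mul_of_nonneg_left (le_trans ?_ h3) (by positivity)
    rcases Nat.eq_zero_or_pos r with h | h
    · subst h; simp
    · have h5 : (0:ℝ) < r := by exact_mod_cast h
      have h6 : (r:ℝ) ≤ N := by exact_mod_cast (by omega : r ≤ N)
      apply pow_le_pow_left₀ (by positivity)
      rw [div_le_div_iff₀ hr h5]
      push_cast
      linarith

theorem Qf_ge {s : ℝ} (hs : 0 < s) : s ≤ Qf s := by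
  have h1 := Qf_mul_ff hs
  have h2 := ff_pos hs
  refine le_of_mul_le_mul_right ?_ h2
  rw [h1]
  unfold ff
  nlinarith

theorem Qf_le {s : ℝ} (hs : 15 ≤ s) : 0.99 * Qf s ≤ s := by
  have h1 := Qf_mul_ff (show 0 < s by linarith)
  have h2 := ff_ge hs
  have h3 := Real.exp_pos s
  refine le_of_mul_le_mul_right ?_ h3
  have h4 : 0 ≤ Qf s := by linarith [Qf_ge (show 0 < s by linarith)]
  nlinarith

theorem phi2_le {s X : ℝ} (hs : 15 ≤ s) (hX0 : 0 ≤ X) (hX : X ≤ 1) :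
    Real.exp s * (Real.exp X - X) - 1 - s ≤ ff s * Real.exp (1.02 * X ^ 2) := by
  have h1 := (abs_le.mp (Real.abs_exp_sub_one_sub_id_le (show |X| ≤ 1 by rw [abs_of_nonneg hX0]; exact hX))).2
  have h2 := ff_ge hs
  have h3 := Real.exp_pos s
  have h4 := Real.add_one_le_exp (1.02 * X ^ 2)
  have h5 := ff_pos (show 0 < s by linarith)
  have e : Real.exp s * (Real.exp X - X) - 1 - s = ff s + Real.exp s * (Real.exp X - 1 - X) := by unfold ff; ring
  rw [e]
  calc ff s + Real.exp s * (Real.exp X - 1 - X) ≤ ff s + Real.exp s * X ^ 2 := by gcongr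
    _ ≤ ff s + (1.02 * ff s) * X ^ 2 := by gcongr; linarith
    _ = ff s * (1.02 * X ^ 2 + 1) := by ring
    _ ≤ _ := by gcongr

theorem small_num (k : ℕ) (hk : 16 ≤ k) : 12 * Real.exp 1 * k * 0.548 ^ (k - 4) ≤ 1 / 2 := by
  have he := Real.exp_one_lt_d9
  have h : ∀ i : ℕ, 12 * 2.7182818286 * ((i:ℝ) + 16) * 0.548 ^ (i + 12) ≤ 1 / 2 := by
    intro i
    induction i with
    | zero => norm_num
    | succ i ih =>
      refine le_trans ?_ ih
      rw [show i + 1 + 12 = (i + 12) + 1 by ring, pow_succ]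
      push_cast
      have hp : (0:ℝ) < 0.548 ^ (i + 12) := by positivity
      have : ((i:ℝ) + 1 + 16) * 0.548 ≤ i + 16 := by
        have : (0:ℝ) ≤ i := by positivity
        linarith
      calc 12 * 2.7182818286 * ((i:ℝ) + 1 + 16) * (0.548 ^ (i + 12) * 0.548)
          = 12 * 2.7182818286 * 0.548 ^ (i + 12) * (((i:ℝ) + 1 + 16) * 0.548) := by ring
        _ ≤ 12 * 2.7182818286 * 0.548 ^ (i + 12) * ((i:ℝ) + 16) := by gcongr
        _ = _ := by ring
  have h2 := h (k - 16)
  have e1 : k - 16 + 12 = k - 4 := by omega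
  have e2 : ((k - 16 : ℕ) : ℝ) + 16 = k := by rw [Nat.cast_sub hk]; norm_num
  rw [e1, e2] at h2
  refine le_trans ?_ h2
  gcongr

set_option maxHeartbeats 1000000 in
theorem small_j (k m n j : ℕ) (s L : ℝ) (hk : 16 ≤ k) (hs : 15 ≤ s) (hsk : s ≤ k) (hj : 1 ≤ j) (hjm : j ≤ m) (hn : 0 < n)
    (hL : 0 ≤ L) (hlow : ff s ^ n / s ^ (k * m) * (k * m).factorial ≤ M (k * m) n * L)
    (hQ : (n:ℝ) * Qf s = (k:ℝ) * m)
    (hb : s * (j / m) ≤ 1 / 20) :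
    ∑ y : Fin m → ZMod 3 with #{i | y i ≠ 0} = j, (cnt k m n y : ℝ)
      ≤ M (k * m) n * L * (3 * k * (j / m) * (3 / 20) ^ (j - 1)) := by
  have hm : 0 < m := by omega
  have hm' : (0:ℝ) < m := by exact_mod_cast hm
  have hn' : (0:ℝ) < n := by exact_mod_cast hn
  have hj' : (0:ℝ) < j := by exact_mod_cast hj
  have hk' : (0:ℝ) < k := by exact_mod_cast (by omega : 0 < k)
  have hs0 : 0 < s := by linarith
  have hf := ff_pos hs0
  set β : ℝ := j / m with hβ
  have hβ0 : 0 < β := by positivity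
  have hQ1 := Qf_ge hs0
  have hQ2 := Qf_le hs
  have hQ0 : 0 < Qf s := by linarith
  set X := Real.sqrt (β * Qf s / 2) with hX
  have hX2 : X ^ 2 = β * Qf s / 2 := Real.sq_sqrt (by positivity)
  have hX0 : 0 < X := Real.sqrt_pos.mpr (by positivity)
  have hX1 : X ≤ 1 := by
    rw [hX]; apply Real.sqrt_le_one.mpr
    have : 0.99 * (β * Qf s) ≤ s * β := by nlinarith
    linarith
  set q := Real.sqrt (6 * (s * β)) with hq
  have hq2 : q ^ 2 = 6 * (s * β) := Real.sq_sqrt (by positivity)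
  have hq0 : 0 < q := Real.sqrt_pos.mpr (by positivity)
  have hq1 : q ≤ 0.548 := by
    rw [hq]; apply Real.sqrt_le_iff.mpr
    constructor
    · norm_num
    · norm_num; linarith
  have hmain : s * β * Real.exp 0.51 ≤ q * X := by
    have h1 : Real.exp 0.51 ^ 2 ≤ 3 := by
      rw [← Real.exp_nat_mul]
      have e : ((2:ℕ):ℝ) * 0.51 = 1 + 0.02 := by norm_num
      rw [e, Real.exp_add]
      have := Real.exp_one_lt_d9
      have h2 : Real.exp 0.02 ≤ 1.0205 := by
        have := Real.one_sub_le_exp_neg (0.02:ℝ)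
        rw [Real.exp_neg] at this
        have h3 := Real.exp_pos (0.02:ℝ)
        rw [← one_div, le_div_iff₀ h3] at this
        norm_num at this ⊢
        linarith
      calc Real.exp 1 * Real.exp 0.02 ≤ 2.7182818286 * 1.0205 := by gcongr
        _ ≤ 3 := by norm_num
    refine (sq_le_sq₀ (by positivity) (by positivity)).mp ?_
    rw [mul_pow, mul_pow q, hq2, hX2]
    calc (s * β) ^ 2 * Real.exp 0.51 ^ 2 ≤ (s * β) ^ 2 * 3 := by gcongr
      _ = 6 * (s * β) * (β * s / 2) := by ring
      _ ≤ _ := by gcongr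
  have h1 : ∀ y ∈ ({y : Fin m → ZMod 3 | #{i | y i ≠ 0} = j} : Finset _),
      (cnt k m n y : ℝ) ≤ M (k * m) n * L * q ^ (k * j) := by
    intro y hy
    have h2 := cnt2_bound k m n j y s X hs0 hX0.le (mem_filter.mp hy).2
    have h3 := pow_le_choose' (k * j) (k * m) (Nat.mul_le_mul_left _ hjm)
    have h4 : (((k * m : ℕ):ℝ) / (k * j : ℕ)) = 1 / β := by
      rw [hβ]; push_cast; field_simp
    rw [h4] at h3
    have h5 : (Real.exp s * (Real.exp X - X) - 1 - s) ^ n ≤ ff s ^ n * Real.exp 0.51 ^ (k * j) := by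
      have a1 := phi2_le hs hX0.le hX1
      have a2 : 0 ≤ Real.exp s * (Real.exp X - X) - 1 - s := by
        have b1 := Real.add_one_le_exp X
        have b2 := Real.add_one_le_exp s
        nlinarith [Real.exp_pos s]
      refine (pow_le_pow_left₀ a2 a1 n).trans (le_of_eq ?_)
      rw [mul_pow, ← Real.exp_nat_mul, ← Real.exp_nat_mul]
      congr 2
      rw [hX2]
      have : (n:ℝ) * (1.02 * (β * Qf s / 2)) = 0.51 * β * (n * Qf s) := by ring
      rw [this, hQ, hβ]
      push_cast
      field_simp
    have h6 : (cnt k m n y : ℝ) * s ^ (k * m) * (X ^ (k * j) * (1 / β) ^ (k * j)) ≤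
        (k * m).factorial * s ^ (k * j) * (ff s ^ n * Real.exp 0.51 ^ (k * j)) := by
      refine le_trans ?_ (h2.trans ?_)
      · gcongr
      · gcongr
    have h7 : (s * β * Real.exp 0.51) ^ (k * j) ≤ (q * X) ^ (k * j) := pow_le_pow_left₀ (by positivity) hmain _
    have hpos : 0 < s ^ (k * m) * (X ^ (k * j) * (1 / β) ^ (k * j)) := by positivity
    refine le_of_mul_le_mul_right ?_ hpos
    calc _ ≤ (k * m).factorial * s ^ (k * j) * (ff s ^ n * Real.exp 0.51 ^ (k * j)) := by rw [← mul_assoc]; exact h6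
      _ = (ff s ^ n / s ^ (k * m) * (k * m).factorial) * s ^ (k * m) * (1 / β) ^ (k * j) * (s * β * Real.exp 0.51) ^ (k * j) := by
        rw [mul_pow, mul_pow, one_div, inv_pow]; field_simp
      _ ≤ (M (k * m) n * L) * s ^ (k * m) * (1 / β) ^ (k * j) * (q * X) ^ (k * j) := by gcongr
      _ = _ := by rw [mul_pow q]; ring
  have h4 := Finset.sum_le_sum h1
  rw [Finset.sum_const, nsmul_eq_mul] at h4
  refine h4.trans ?_
  have h5 := cardY m j hj hjm
  have hβ1 : β < 1 := by nlinarith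
  have h6 : Real.exp (m * hh β) ≤ (2 * Real.exp 1 / β) ^ j := by
    have a1 := hh_le hβ0 hβ1
    have a2 : 2 * Real.exp 1 / β = Real.exp (1 + Real.log 2 - Real.log β) := by
      rw [Real.exp_sub, Real.exp_add, Real.exp_log hβ0, Real.exp_log (by norm_num)]; ring
    rw [a2, ← Real.exp_nat_mul]
    apply Real.exp_le_exp.mpr
    have a3 : (m:ℝ) * β = j := by rw [hβ]; field_simp
    rw [← a3, mul_assoc]
    gcongr
  have hB : 2 * Real.exp 1 / β * q ^ k ≤ 3 * (s * β) := by
    have a1 : q ^ k = q ^ (k - 4) * q ^ 2 * q ^ 2 := by rw [← pow_add, ← pow_add]; congr 1; omega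
    have a2 : q ^ (k - 4) ≤ 0.548 ^ (k - 4) := pow_le_pow_left₀ hq0.le hq1 _
    have a3 := small_num k hk
    calc 2 * Real.exp 1 / β * q ^ k = 12 * Real.exp 1 * s * q ^ (k - 4) * (6 * (s * β)) := by
          rw [a1, hq2]; field_simp; ring
      _ ≤ 12 * Real.exp 1 * k * 0.548 ^ (k - 4) * (6 * (s * β)) := by gcongr
      _ ≤ 1 / 2 * (6 * (s * β)) := by gcongr
      _ = _ := by ring
  have hB0 : 0 ≤ 2 * Real.exp 1 / β * q ^ k := by positivity
  have hM : 0 ≤ (M (k * m) n : ℝ) * L := by positivity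
  calc _ ≤ (2 * Real.exp 1 / β) ^ j * ((M (k * m) n : ℝ) * L * q ^ (k * j)) := by
        gcongr; exact h5.trans h6
    _ = (M (k * m) n : ℝ) * L * (2 * Real.exp 1 / β * q ^ k) ^ j := by rw [mul_pow, ← pow_mul]; ring
    _ ≤ (M (k * m) n : ℝ) * L * (3 * (s * β)) ^ j := by gcongr
    _ = (M (k * m) n : ℝ) * L * ((3 * (s * β)) * (3 * (s * β)) ^ (j - 1)) := by
        rw [← pow_succ']; congr 2; omega
    _ ≤ (M (k * m) n : ℝ) * L * ((3 * k * β) * (3 / 20) ^ (j - 1)) := by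
        have c1 : 3 * (s * β) ≤ 3 * k * β := by
          have := mul_le_mul_of_nonneg_right hsk hβ0.le
          linarith
        have c2 : (3 * (s * β)) ^ (j - 1) ≤ (3 / 20) ^ (j - 1) :=
          pow_le_pow_left₀ (by positivity) (by linarith) _
        exact mul_le_mul_of_nonneg_left (mul_le_mul c1 c2 (by positivity) (by positivity)) hM

end

section
open Finset

theorem poly_exp_bdd (r : ℝ) (h0 : 0 < r) (h1 : r < 1) : ∃ B : ℝ, 0 < B ∧ ∀ n : ℕ, (n:ℝ) ^ 5 * r ^ n ≤ B := by
  have h := (tendsto_pow_const_mul_const_pow_of_abs_lt_one 5 (show |r| < 1 by rw [abs_of_pos h0]; exact h1)).bddAbove_range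
  obtain ⟨B, hB⟩ := h
  refine ⟨max B 1, by positivity, fun n => le_trans (hB ⟨n, rfl⟩) (le_max_left _ _)⟩

theorem gd_card_le {L V : Type*} [Fintype L] [Fintype V] [DecidableEq L] [DecidableEq V] (l w : ℕ)
    (hl : Fintype.card L = l) (hw : Fintype.card V = w) (P : (L → V) → Prop) [DecidablePred P] :
    #{σ : L → V | Gd σ ∧ P σ} ≤ M l w := by
  rw [M_eq_card (L := L) (V := V) l w hl hw]
  apply Finset.card_le_card
  intro σ hσ
  have h1 := (mem_filter.mp hσ).2.1
  exact mem_filter.mpr ⟨mem_univ _, h1⟩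

theorem cnt_zero (k m n : ℕ) (y : Fin m → ZMod 3) : cnt k m n y ≤ M (k * m) n := by
  unfold cnt
  convert gd_card_le (L := Fin m × Fin k) (V := Fin n) (k * m) n (by simp [mul_comm]) (by simp)
    (fun σ => ∀ v, ∑ a with σ a = v, y a.1 = 0)

theorem sum_half (m : ℕ) : ∑ j ∈ range m, ((1:ℝ) / 2) ^ j ≤ 2 := sum_geometric_two_le m

theorem half_bound (i : ℕ) : ((i:ℝ) + 1) * (3 / 20) ^ i ≤ (1 / 2) ^ i := by
  have h : ((i:ℝ) + 1) ≤ (10/3) ^ i := by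
    have := one_add_mul_le_pow (show (-2:ℝ) ≤ 7/3 by norm_num) i
    have hi : (0:ℝ) ≤ i := by positivity
    norm_num at this
    linarith
  calc ((i:ℝ) + 1) * (3 / 20) ^ i ≤ (10/3) ^ i * (3 / 20) ^ i := by gcongr
    _ = (1 / 2) ^ i := by rw [← mul_pow]; norm_num

theorem g0_lt : (1 + 2 * Real.exp (-(3/40))) / 3 < 1 := by
  have : Real.exp (-(3/40)) < 1 := by rw [Real.exp_lt_one_iff]; norm_num
  linarith

theorem total_bound (k m n : ℕ) (s ε B : ℝ) (hk : 16 ≤ k) (hε : 0 < ε) (hm : 0 < m) (hn2 : 2 ≤ n)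
    (hmε : (m:ℝ) ≤ (1 - ε) * n) (h2 : 2 * n ≤ k * m) (hs : 15 ≤ s) (hQ : (n:ℝ) * Qf s = (k:ℝ) * m)
    (hB : ∀ n : ℕ, (n:ℝ) ^ 5 * (((1 + 2 * Real.exp (-(3/40))) / 3) ^ ε) ^ n ≤ B) :
    ∑ y : Fin m → ZMod 3, (cnt k m n y : ℝ) ≤
      M (k * m) n * (1 + (3 * k ^ 2 * (1 + k * Real.exp (2 * k)) +
        (Real.exp 1 * (k + 1)) ^ 3 * (1 + k * Real.exp (2 * k)) * B)) := by
  have hn' : (0:ℝ) < n := by exact_mod_cast (by omega : 0 < n)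
  have hm' : (0:ℝ) < m := by exact_mod_cast hm
  have hk' : (0:ℝ) < k := by exact_mod_cast (by omega : 0 < k)
  have hs0 : 0 < s := by linarith
  have hmnR : (m:ℝ) ≤ n := by nlinarith
  have hmn : m ≤ n := by exact_mod_cast hmnR
  have hsk : s ≤ k := by
    have := Qf_ge hs0
    refine le_of_mul_le_mul_left ?_ hn'
    calc (n:ℝ) * s ≤ n * Qf s := by gcongr
      _ = k * m := hQ
      _ ≤ k * n := by gcongr
      _ = _ := mul_comm _ _
  set Ck : ℝ := 1 + k * Real.exp (2 * k) with hCk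
  have hCk0 : 0 < Ck := by positivity
  set L : ℝ := n * Ck with hLdef
  have hL : 0 ≤ L := by positivity
  have hlow : ff s ^ n / s ^ (k * m) * (k * m).factorial ≤ M (k * m) n * L := by
    have := lowerA n k (k * m) s hs0 hn2 h2 (Nat.mul_le_mul_left _ hmn) (by rw [hQ]; push_cast; ring)
    rw [M_eq_aa]
    calc _ ≤ (aa n (k * m) * L) * (k * m).factorial := by gcongr
      _ = _ := by ring
  set g0 : ℝ := (1 + 2 * Real.exp (-(3/40))) / 3 with hg0
  have hg0p : 0 < g0 := by positivity
  have hg1 : g0 < 1 := g0_lt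
  have hgn : g0 ^ (n - m) ≤ (g0 ^ ε) ^ n := by
    rw [← Real.rpow_natCast, ← Real.rpow_natCast, ← Real.rpow_mul hg0p.le]
    apply Real.rpow_le_rpow_of_exponent_ge hg0p hg1.le
    rw [Nat.cast_sub hmn]; linarith
  have h2' : 2 * (n:ℝ) ≤ k * m := by exact_mod_cast h2
  have hM0 : (0:ℝ) ≤ M (k * m) n := by positivity
  set Big : ℝ := (Real.exp 1 * (k * m + 1)) ^ 3 * L * M (k * m) n * g0 ^ (n - m) with hBig
  have hBig0 : 0 ≤ Big := by positivity
  have hj : ∀ i ∈ range m, ∑ y : Fin m → ZMod 3 with #{i | y i ≠ 0} = i + 1, (cnt k m n y : ℝ) ≤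
      M (k * m) n * (3 / 2 * k ^ 2 * Ck) * (1 / 2) ^ i + Big := by
    intro i hi
    have hi' := mem_range.mp hi
    rcases le_total (s * ((i + 1 : ℕ) / m)) (1 / 20) with hb | hb
    · have h := small_j k m n (i + 1) s L hk hs hsk (by omega) (by omega) (by omega) hL hlow hQ hb
      refine (h.trans ?_).trans (le_add_of_nonneg_right hBig0)
      rw [Nat.add_sub_cancel]
      have h3 : (n:ℝ) / m ≤ k / 2 := by rw [div_le_div_iff₀ hm' (by norm_num)]; linarith
      have h4 := half_bound i
      calc (M (k * m) n : ℝ) * L * (3 * k * ((i + 1 : ℕ) / m) * (3 / 20) ^ i)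
          = M (k * m) n * (3 * k * Ck * (n / m)) * (((i:ℝ) + 1) * (3 / 20) ^ i) := by
            rw [hLdef]; push_cast; field_simp
        _ ≤ M (k * m) n * (3 * k * Ck * (k / 2)) * (1 / 2) ^ i := by gcongr
        _ = _ := by ring
    · have h := large_j k m n (i + 1) s L (by omega) hs (by omega) (by omega) hmn hL hlow hb
      refine h.trans (le_add_of_nonneg_left (by positivity))
  have hsplit : ∑ y : Fin m → ZMod 3, (cnt k m n y : ℝ) =
      ∑ j ∈ range (m + 1), ∑ y : Fin m → ZMod 3 with #{i | y i ≠ 0} = j, (cnt k m n y : ℝ) := by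
    symm
    apply Finset.sum_fiberwise_of_maps_to
    intro y _
    rw [mem_range]
    have := Finset.card_le_univ ({i | y i ≠ 0} : Finset (Fin m))
    rw [Fintype.card_fin] at this
    omega
  have hzero : ∑ y : Fin m → ZMod 3 with #{i | y i ≠ 0} = 0, (cnt k m n y : ℝ) ≤ M (k * m) n := by
    have : ({y : Fin m → ZMod 3 | #{i | y i ≠ 0} = 0} : Finset _) = {0} := by
      ext y
      simp only [mem_filter, mem_univ, true_and, card_eq_zero, mem_singleton, filter_eq_empty_iff, not_not, funext_iff, Pi.zero_apply, forall_true_left]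
    rw [this, Finset.sum_singleton]
    exact_mod_cast cnt_zero k m n 0
  rw [hsplit, Finset.sum_range_succ']
  have hs1 := Finset.sum_le_sum hj
  rw [Finset.sum_add_distrib, ← Finset.mul_sum, Finset.sum_const, card_range, nsmul_eq_mul] at hs1
  have hs2 := sum_half m
  have hs3 : (M (k * m) n : ℝ) * (3 / 2 * k ^ 2 * Ck) * ∑ j ∈ range m, ((1:ℝ) / 2) ^ j ≤ M (k * m) n * (3 * k ^ 2 * Ck) := by
    calc _ ≤ (M (k * m) n : ℝ) * (3 / 2 * k ^ 2 * Ck) * 2 := by gcongr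
      _ = _ := by ring
  have hs4 : (m:ℝ) * Big ≤ M (k * m) n * ((Real.exp 1 * (k + 1)) ^ 3 * Ck * B) := by
    have hn1 : (1:ℝ) ≤ n := by exact_mod_cast (by omega : 1 ≤ n)
    have e1 : (k:ℝ) * m + 1 ≤ (k + 1) * n := by nlinarith
    calc (m:ℝ) * Big ≤ n * ((Real.exp 1 * ((k + 1) * n)) ^ 3 * (n * Ck) * M (k * m) n * (g0 ^ ε) ^ n) := by
          rw [hBig]; gcongr
      _ = M (k * m) n * ((Real.exp 1 * (k + 1)) ^ 3 * Ck * ((n:ℝ) ^ 5 * (g0 ^ ε) ^ n)) := by ring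
      _ ≤ _ := by gcongr; exact hB n
  linarith


end

theorem stmt12 (k : ℕ) (hk : 16 ≤ k) (ε : ℝ) (hε : ε ∈ Set.Ioo (0:ℝ) 1) :
    ∃ C : ℝ, 0 < C ∧
      ∀ n m : ℕ, 0 < n → 0 < m → (m : ℝ) ≤ (1 - ε) * (n : ℝ) →
        2 < (k : ℝ) * (m : ℝ) / (n : ℝ) →
        ∀ s : ℝ, 0 < s → Qf s = (k : ℝ) * (m : ℝ) / (n : ℝ) → 15 ≤ s →
          (∑ w ∈ Finset.Nat.antidiagonalTuple 3 n,
            ∑ l ∈ Finset.Nat.antidiagonalTuple 3 (k * m),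
              (Nwl k m w l : ℝ) / (M (k * m) n : ℝ))
            ≤ C * (3:ℝ) ^ ((n : ℝ) - (m : ℝ)) := by
  obtain ⟨hε0, hε1⟩ := hε
  have hg0 : (0:ℝ) < (1 + 2 * Real.exp (-(3/40))) / 3 := by positivity
  obtain ⟨B, hB0, hB⟩ := poly_exp_bdd (((1 + 2 * Real.exp (-(3/40))) / 3) ^ ε) (by positivity)
    (Real.rpow_lt_one hg0.le g0_lt hε0)
  refine ⟨1 + (3 * k ^ 2 * (1 + k * Real.exp (2 * k)) +
        (Real.exp 1 * (k + 1)) ^ 3 * (1 + k * Real.exp (2 * k)) * B), by positivity, ?_⟩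
  intro n m hn hm hmε h2 s hs0 hQ hs
  have hn' : (0:ℝ) < n := by exact_mod_cast hn
  have hm' : (1:ℝ) ≤ m := by exact_mod_cast hm
  have hn2 : 2 ≤ n := by
    have : (1:ℝ) < n := by nlinarith
    exact_mod_cast this
  rw [lt_div_iff₀ hn'] at h2
  have h2n : 2 * n ≤ k * m := by
    have : ((2 * n : ℕ) : ℝ) ≤ (k * m : ℕ) := by push_cast; linarith
    exact_mod_cast this
  have hQ' : (n:ℝ) * Qf s = (k:ℝ) * m := by rw [hQ]; field_simp
  have ht := total_bound k m n s ε B hk hε0 hm hn2 hmε h2n hs hQ' hB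
  set C : ℝ := 1 + (3 * k ^ 2 * (1 + k * Real.exp (2 * k)) +
        (Real.exp 1 * (k + 1)) ^ 3 * (1 + k * Real.exp (2 * k)) * B) with hC
  have hMp : (0:ℝ) < M (k * m) n := by
    rw [M_eq_aa]
    have := aa_pos n (by omega) (k * m) h2n
    positivity
  have hid := main_identity k m n
  have hid' : (∑ w ∈ Finset.Nat.antidiagonalTuple 3 n, ∑ l ∈ Finset.Nat.antidiagonalTuple 3 (k * m), (Nwl k m w l : ℝ)) * 3 ^ m
      = 3 ^ n * ∑ y : Fin m → ZMod 3, (cnt k m n y : ℝ) := by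
    unfold cnt
    exact_mod_cast hid
  simp_rw [← Finset.sum_div]
  rw [div_le_iff₀ hMp, Real.rpow_sub (by norm_num), Real.rpow_natCast, Real.rpow_natCast]
  refine le_of_mul_le_mul_right ?_ (show (0:ℝ) < 3 ^ m by positivity)
  rw [hid']
  calc (3:ℝ) ^ n * ∑ y : Fin m → ZMod 3, (cnt k m n y : ℝ) ≤ 3 ^ n * (M (k * m) n * C) := by gcongr
    _ = _ := by field_simp
end
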